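/- arXiv:cs/0610003 — 10 statements merged into one kernel-verified Lean document; each statement's English description precedes it below -/
import Mathlib

section
/- For every finite metric space (X,d) with n = |X| ≥ 2 there exists an ultrametric ρ on X such that ρ(x,y) ≥ d(x,y) for all x,y ∈ X, and for every ε ∈ (0,1] the number of unordered pairs {x,y} of distinct points of X with ρ(x,y) > (150/√ε)·d(x,y) is at most ε·n(n−1)/2. -/
/-!
The ultrametric is that of a hierarchical partition: cut `X` into two parts `A`, `B`, give all
cross pairs the distance `Δ = diam X`, and recurse. Each pair is separated by exactly one cut, so it
suffices that every cut is good for all `ε` at once: at most `ε |A| |B|` cross pairs are shorter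
than `√ε Δ / 150` (`exists_cut`).

For a good cut, take a diametral pair `u`, `v`; one of them, say `u`, has at most half of the points
within `Δ/4`. Let `h(s)` be the square root of the proportion of points within distance `s` of `u`.
A Vitali covering argument (`exists_slope_le`) gives a radius `r ≤ Δ/4` such that
`|h(s) - h(r)| ≤ (21/Δ) |s - r|` for all `s`. Cross pairs of length less than `t` for the cut by the
ball of radius `r` go from the ring `(r-t, r]` to the ring `(r, r+t]`, and the slope bound makes the
product of the cardinalities of these rings `O((t/Δ)² n |A|)`, where `|B| ≥ n/2`
(`ring_product_le`, `exists_cut_of_small_ball`). Working with the square root of the volume, rather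
than with the volume or its logarithm, is what balances the two rings for balls of all sizes.
-/

/-! ### A maximal inequality on the line -/

open MeasureTheory Set Metric Function in
/-- A one-dimensional maximal inequality in disguise: a monotone function with values in `[0,1]`
has, in `[0,L]` with `L > 5/a`, a point `r` at which all its difference quotients, on both sides
and at all scales, are at most `a`. Otherwise each `r ∈ [0,L]` lies in an interval
on which `h` grows with slope more than `a`; by Vitali, disjoint intervals of this kind have total
length at least `L/5`, so that `h` grows by more than `1` on them. -/
lemma exists_slope_le (h : ℝ → ℝ) (hm : Monotone h) (h0 : ∀ x, 0 ≤ h x) (h1 : ∀ x, h x ≤ 1)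
    (a L : ℝ) (ha : 0 < a) (hL : 5 / a < L) :
    ∃ r, 0 ≤ r ∧ r ≤ L ∧ ∀ s, |h s - h r| ≤ a * |s - r| := by
  by_contra hcon
  have key : ∀ r : ℝ, ∃ p q : ℝ, r ∈ Icc 0 L → p < q ∧ r ∈ Icc p q ∧ a * (q - p) < h q - h p := by
    intro r
    by_cases hr : r ∈ Icc 0 L
    · have : ∃ s, a * |s - r| < |h s - h r| := by
        by_contra! hh
        exact hcon ⟨r, hr.1, hr.2, hh⟩
      obtain ⟨s, hs⟩ := this
      rcases lt_trichotomy s r with hlt | rfl | hlt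
      · refine ⟨s, r, fun _ => ⟨hlt, ⟨hlt.le, le_rfl⟩, ?_⟩⟩
        rw [abs_of_neg (sub_neg.2 hlt), abs_of_nonpos (sub_nonpos.2 (hm hlt.le))] at hs
        linarith
      · simp at hs
      · refine ⟨r, s, fun _ => ⟨hlt, ⟨le_rfl, hlt.le⟩, ?_⟩⟩
        rwa [abs_of_pos (sub_pos.2 hlt), abs_of_nonneg (sub_nonneg.2 (hm hlt.le))] at hs
    · exact ⟨0, 0, fun hr' => absurd hr' hr⟩
  choose p q hpq using key
  have hball : ∀ b, closedBall ((p b + q b) / 2) ((q b - p b) / 2) = Icc (p b) (q b) := by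
    intro b
    rw [Real.closedBall_eq_Icc]
    congr 1 <;> ring
  have hlen : ∀ b ∈ Icc 0 L, q b - p b ≤ 1 / a := by
    intro b hb
    rw [le_div_iff₀ ha]
    linarith [(hpq b hb).2.2, h0 (p b), h1 (q b)]
  obtain ⟨u, hut, hdisj, hcov⟩ := Vitali.exists_disjoint_subfamily_covering_enlargement_closedBall
    (Icc 0 L) (fun b => (p b + q b) / 2) (fun b => (q b - p b) / 2) (1 / a / 2)
    (fun b hb => by linarith [hlen b hb]) 5 (by norm_num)
  simp only [hball] at hdisj hcov
  have hcount : u.Countable := hdisj.countable_of_nonempty_interior (fun b hb => by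
    rw [interior_Icc]
    exact nonempty_Ioo.2 (hpq b (hut hb)).1)
  set μ := hm.stieltjesFunction.measure with hμ
  have hmass : ∀ b ∈ u, ENNReal.ofReal (a * (q b - p b)) ≤ μ (Icc (p b) (q b)) := by
    intro b hb
    rw [hμ, StieltjesFunction.measure_Icc]
    apply ENNReal.ofReal_le_ofReal
    have e1 : h (q b) ≤ hm.stieltjesFunction (q b) := hm.le_rightLim le_rfl
    have e2 : leftLim hm.stieltjesFunction (p b) ≤ h (p b) := by
      refine le_of_tendsto (hm.stieltjesFunction.mono.tendsto_leftLim (p b)) ?_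
      filter_upwards [self_mem_nhdsWithin] with y hy
      exact hm.rightLim_le hy
    linarith [(hpq b (hut hb)).2.2]
  have htotal : ∑' b : u, μ (Icc (p b) (q b)) ≤ 1 := by
    rw [← measure_biUnion hcount hdisj (fun b _ => measurableSet_Icc)]
    calc μ (⋃ b ∈ u, Icc (p b) (q b)) ≤ μ (Icc (-(1 / a)) (L + 1 / a)) := by
          apply measure_mono
          refine iUnion₂_subset fun b hb x hx => ?_
          have := hlen b (hut hb)
          obtain ⟨_, ⟨h2, h3⟩, _⟩ := hpq b (hut hb)
          obtain ⟨h4, h5⟩ := hut hb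
          exact ⟨by linarith [hx.1], by linarith [hx.2]⟩
      _ ≤ ENNReal.ofReal 1 := by
          rw [hμ, StieltjesFunction.measure_Icc]
          apply ENNReal.ofReal_le_ofReal
          have e1 : hm.stieltjesFunction (L + 1 / a) ≤ 1 :=
            (hm.rightLim_le (lt_add_one _)).trans (h1 _)
          have e2 : 0 ≤ leftLim hm.stieltjesFunction (-(1 / a)) :=
            ((h0 _).trans (hm.le_rightLim le_rfl)).trans
              (hm.stieltjesFunction.mono.le_leftLim (sub_one_lt _))
          linarith
      _ = 1 := ENNReal.ofReal_one
  have hvol : ENNReal.ofReal L ≤ ENNReal.ofReal (5 / a) := by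
    calc ENNReal.ofReal L = volume (Icc 0 L) := by simp
      _ ≤ volume (⋃ b ∈ u, closedBall ((p b + q b) / 2) (5 * ((q b - p b) / 2))) := by
          apply measure_mono
          intro x hx
          obtain ⟨b, hb, hsub⟩ := hcov x hx
          exact mem_biUnion hb (hsub (hpq x hx).2.1)
      _ ≤ ∑' b : u, volume (closedBall ((p b + q b) / 2) (5 * ((q b - p b) / 2))) :=
          measure_biUnion_le _ hcount _
      _ ≤ ∑' b : u, ENNReal.ofReal (5 / a) * μ (Icc (p b) (q b)) := by
          refine ENNReal.tsum_le_tsum fun b => ?_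
          refine le_trans ?_ (mul_le_mul_right (hmass b b.2) _)
          rw [Real.volume_closedBall, ← ENNReal.ofReal_mul (by positivity)]
          apply ENNReal.ofReal_le_ofReal
          field_simp
          linarith
      _ = ENNReal.ofReal (5 / a) * ∑' b : u, μ (Icc (p b) (q b)) := ENNReal.tsum_mul_left
      _ ≤ ENNReal.ofReal (5 / a) * 1 := mul_le_mul_right htotal _
      _ = ENNReal.ofReal (5 / a) := mul_one _
  have hL0 : 0 < L := lt_trans (by positivity) hL
  exact absurd hvol (not_le.2 ((ENNReal.ofReal_lt_ofReal_iff hL0).2 hL))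

/-! ### Good cuts of a finite metric space -/

/-- The cross-pair estimate in terms of `p ≤ q ≤ s`, the square roots of the relative volumes of
the balls of radii `r - t`, `r`, `r + t`. For `q ≥ τ` both factors are `O(τq)`; for `q < τ` the
first is at most `q²` and the second is `O(τ²)`. -/
lemma ring_product_le (p q s τ ε : ℝ) (hp : 0 ≤ p) (hpq : p ≤ q) (hqs : q ≤ s) (hτ : 0 ≤ τ)
    (h1 : q - p ≤ τ) (h2 : s - q ≤ τ) (hε : 12 * τ ^ 2 ≤ ε) :
    (q ^ 2 - p ^ 2) * (s ^ 2 - q ^ 2) ≤ ε * q ^ 2 / 2 := by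
  have hq : 0 ≤ q := hp.trans hpq
  have hs : 0 ≤ s ^ 2 - q ^ 2 := by nlinarith
  have hb : s ^ 2 - q ^ 2 ≤ τ * (2 * q + τ) := by nlinarith
  have hfin : 6 * (τ ^ 2 * q ^ 2) ≤ ε * q ^ 2 / 2 := by nlinarith [sq_nonneg q]
  rcases le_total τ q with hc | hc
  · have ha : q ^ 2 - p ^ 2 ≤ 2 * q * τ := by nlinarith
    have hb' : s ^ 2 - q ^ 2 ≤ 3 * q * τ := by nlinarith
    calc _ ≤ (2 * q * τ) * (3 * q * τ) := mul_le_mul ha hb' hs (by positivity)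
      _ ≤ _ := by linarith
  · have ha : q ^ 2 - p ^ 2 ≤ q ^ 2 := by nlinarith
    have hb' : s ^ 2 - q ^ 2 ≤ 3 * τ ^ 2 := by nlinarith
    calc _ ≤ q ^ 2 * (3 * τ ^ 2) := mul_le_mul ha hb' hs (by positivity)
      _ ≤ _ := by nlinarith [mul_nonneg (sq_nonneg q) (sq_nonneg τ)]

open Classical in
/-- The cut when at most half of `S` lies within `dist u v / 4` of `u`: `A` is the trace on `S` of a
ball around `u` of radius at most `dist u v / 4`, and `B` is its complement in `S`, which contains
`v` and at least half of `S`. -/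
lemma exists_cut_of_small_ball {X : Type*} [MetricSpace X] (S : Finset X) (u v : X) (hu : u ∈ S)
    (hv : v ∈ S) (huv : u ≠ v)
    (hsmall : 2 * (S.filter fun x => dist u x ≤ dist u v / 4).card ≤ S.card) :
    ∃ A B : Finset X, Disjoint A B ∧ A ∪ B = S ∧ A.Nonempty ∧ B.Nonempty ∧
      ∀ ε ∈ Set.Ioc (0 : ℝ) 1,
        (((A ×ˢ B).filter fun p =>
          (150 / Real.sqrt ε) * dist p.1 p.2 < dist u v).card : ℝ) ≤ ε * A.card * B.card := by
  set Δ := dist u v with hΔ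
  have hΔ0 : 0 < Δ := dist_pos.2 huv
  set n : ℝ := (S.card : ℝ) with hn
  have hn0 : 0 < n := by
    rw [hn]; exact_mod_cast Finset.card_pos.2 ⟨u, hu⟩
  set D : ℝ → Finset X := fun s => S.filter fun x => dist u x ≤ s with hD
  have hDm : ∀ s t, s ≤ t → D s ⊆ D t := by
    intro s t hst x hx
    simp only [hD, Finset.mem_filter] at hx ⊢
    exact ⟨hx.1, hx.2.trans hst⟩
  set h : ℝ → ℝ := fun s => Real.sqrt ((D s).card / n) with hh
  have hsq : ∀ s, ((D s).card : ℝ) = n * h s ^ 2 := by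
    intro s
    have hq : h s ^ 2 = (D s).card / n := Real.sq_sqrt (by positivity)
    rw [hq, mul_div_cancel₀ _ hn0.ne']
  have hm : Monotone h := by
    intro s t hst
    apply Real.sqrt_le_sqrt
    have : ((D s).card : ℝ) ≤ (D t).card := by exact_mod_cast Finset.card_le_card (hDm s t hst)
    exact div_le_div_of_nonneg_right this hn0.le
  obtain ⟨r, hr0, hrL, hslope⟩ := exists_slope_le h hm (fun _ => Real.sqrt_nonneg _)
    (fun s => by
      refine Real.sqrt_le_one.2 ((div_le_one hn0).2 ?_)
      exact Nat.cast_le.2 (Finset.card_filter_le _ _))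
    (21 / Δ) (Δ / 4) (by positivity) (by rw [div_div_eq_mul_div]; linarith)
  have hAS : D r ⊆ S := Finset.filter_subset _ _
  have hAn : 2 * ((D r).card : ℝ) ≤ n := by
    have : (D r).card ≤ (S.filter fun x => dist u x ≤ Δ / 4).card :=
      Finset.card_le_card (hDm r (Δ / 4) hrL)
    rw [hn]
    exact_mod_cast (by omega : 2 * (D r).card ≤ S.card)
  have hBn : ((S \ D r).card : ℝ) = n - (D r).card := by
    rw [Finset.cast_card_sdiff hAS]
  refine ⟨D r, S \ D r, Finset.disjoint_sdiff, Finset.union_sdiff_of_subset hAS,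
    ⟨u, by simp [hD, hu, hr0]⟩, ⟨v, ?_⟩, ?_⟩
  · simp only [hD, Finset.mem_sdiff, Finset.mem_filter, hv, true_and, not_le]
    rw [← hΔ]
    linarith
  rintro ε ⟨hε0, hε1⟩
  have hε : 0 < Real.sqrt ε := Real.sqrt_pos.2 hε0
  set t := Real.sqrt ε * Δ / 150 with ht
  have ht0 : 0 < t := by positivity
  have hτ : 21 / Δ * t = 21 / 150 * Real.sqrt ε := by
    rw [ht]; field_simp
  -- Short cross pairs have both ends within `t` of the sphere of radius `r` around `u`.
  have hsub : ((D r ×ˢ (S \ D r)).filter fun p => (150 / Real.sqrt ε) * dist p.1 p.2 < Δ) ⊆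
      (D r \ D (r - t)) ×ˢ (D (r + t) \ D r) := by
    rintro ⟨x, y⟩ hxy
    simp only [hD, Finset.mem_filter, Finset.mem_product, Finset.mem_sdiff, not_and, not_le]
      at hxy ⊢
    obtain ⟨⟨⟨hxS, hx⟩, hyS, hy⟩, hd⟩ := hxy
    have hy := hy hyS
    have hd' : dist x y < t := by
      rw [ht, lt_div_iff₀ (by norm_num)]
      rw [div_mul_eq_mul_div, div_lt_iff₀ hε] at hd
      linarith
    have htri := dist_triangle u x y
    exact ⟨⟨⟨hxS, hx⟩, fun _ => by linarith⟩, ⟨hyS, by linarith⟩, fun _ => hy⟩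
  have hcard : (((D r ×ˢ (S \ D r)).filter fun p =>
      (150 / Real.sqrt ε) * dist p.1 p.2 < Δ).card : ℝ) ≤
      (n * h r ^ 2 - n * h (r - t) ^ 2) * (n * h (r + t) ^ 2 - n * h r ^ 2) := by
    have h1 := Finset.card_le_card hsub
    rw [Finset.card_product] at h1
    rw [← hsq, ← hsq, ← hsq, ← Finset.cast_card_sdiff (hDm _ _ (by linarith)),
      ← Finset.cast_card_sdiff (hDm _ _ (by linarith))]
    exact_mod_cast h1
  have hl := hslope (r - t)
  have hr := hslope (r + t)
  rw [show r - t - r = -t by ring, abs_neg, abs_of_pos ht0, hτ] at hl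
  rw [show r + t - r = t by ring, abs_of_pos ht0, hτ] at hr
  have hprod := ring_product_le (h (r - t)) (h r) (h (r + t)) (21 / 150 * Real.sqrt ε) ε
    (Real.sqrt_nonneg _) (hm (by linarith)) (hm (by linarith)) (by positivity)
    (by linarith [(abs_le.1 hl).1]) (by linarith [(abs_le.1 hr).2])
    (by rw [mul_pow, Real.sq_sqrt hε0.le]; linarith)
  calc _ ≤ n ^ 2 * ((h r ^ 2 - h (r - t) ^ 2) * (h (r + t) ^ 2 - h r ^ 2)) := by linarith
    _ ≤ n ^ 2 * (ε * h r ^ 2 / 2) :=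
        mul_le_mul_of_nonneg_left hprod (sq_nonneg n)
    _ = ε * (D r).card * (n / 2) := by rw [hsq r]; ring
    _ ≤ ε * (D r).card * (S \ D r).card := by
      rw [hBn]
      exact mul_le_mul_of_nonneg_left (by linarith) (mul_nonneg hε0.le (Nat.cast_nonneg _))

open Classical in
/-- For distinct `u`, `v` in a finite set `S` there is a nontrivial bipartition of `S` for which, for
every `ε`, at most the fraction `ε` of the cross pairs is shorter than `√ε · dist u v / 150`. In the
recursion `u`, `v` is a diametral pair of `S`. -/
lemma exists_cut {X : Type*} [MetricSpace X] (S : Finset X) (u v : X) (hu : u ∈ S)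
    (hv : v ∈ S) (huv : u ≠ v) :
    ∃ A B : Finset X, Disjoint A B ∧ A ∪ B = S ∧ A.Nonempty ∧ B.Nonempty ∧
      ∀ ε ∈ Set.Ioc (0 : ℝ) 1,
        (((A ×ˢ B).filter fun p =>
          (150 / Real.sqrt ε) * dist p.1 p.2 < dist u v).card : ℝ) ≤ ε * A.card * B.card := by
  have hpos : 0 < dist u v := dist_pos.2 huv
  have hd : Disjoint (S.filter fun x => dist u x ≤ dist u v / 4)
      (S.filter fun x => dist v x ≤ dist v u / 4) := by
    rw [Finset.disjoint_left]
    intro x hx hy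
    have h1 := (Finset.mem_filter.1 hx).2
    have h2 := (Finset.mem_filter.1 hy).2
    have h3 := dist_triangle_right u v x
    rw [dist_comm v u] at h2
    linarith
  have hc := Finset.card_le_card (Finset.union_subset
    (Finset.filter_subset (fun x => dist u x ≤ dist u v / 4) S)
    (Finset.filter_subset (fun x => dist v x ≤ dist v u / 4) S))
  rw [Finset.card_union_of_disjoint hd] at hc
  rcases le_total (S.filter fun x => dist u x ≤ dist u v / 4).card
    (S.filter fun x => dist v x ≤ dist v u / 4).card with hle | hle
  · exact exists_cut_of_small_ball S u v hu hv huv (by omega)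
  · have := exists_cut_of_small_ball S v u hv hu huv.symm (by omega)
    rwa [dist_comm v u] at this

/-! ### The hierarchical ultrametric -/

open Classical in
/-- The theorem for a subset `S` of `X`, in the form that the recursion over cuts needs: `ρ` is
moreover bounded on `S` by the diameter of `S`, expressed here through all upper bounds `D`. -/
lemma exists_ultrametric_on {X : Type*} [MetricSpace X] (S : Finset X) (hS : S.Nonempty) :
    ∃ ρ : X → X → ℝ,
      (∀ x y, ρ x y = ρ y x) ∧
      (∀ x, ρ x x = 0) ∧
      (∀ x ∈ S, ∀ y ∈ S, ∀ z ∈ S, ρ x z ≤ max (ρ x y) (ρ y z)) ∧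
      (∀ x ∈ S, ∀ y ∈ S, dist x y ≤ ρ x y) ∧
      (∀ D, (∀ x ∈ S, ∀ y ∈ S, dist x y ≤ D) → ∀ x ∈ S, ∀ y ∈ S, ρ x y ≤ D) ∧
      (∀ ε ∈ Set.Ioc (0 : ℝ) 1,
        (((S ×ˢ S).filter fun p =>
            p.1 ≠ p.2 ∧ (150 / Real.sqrt ε) * dist p.1 p.2 < ρ p.1 p.2).card : ℝ)
          ≤ ε * S.card * (S.card - 1)) := by
  induction S using Finset.strongInduction with
  | H S ih =>
  obtain ⟨⟨u, v⟩, huv, hmax⟩ := Finset.exists_max_image (S ×ˢ S) (fun p => dist p.1 p.2)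
    (hS.product hS)
  obtain ⟨hu, hv⟩ := Finset.mem_product.1 huv
  simp only at hu hv hmax
  have hdiam : ∀ x ∈ S, ∀ y ∈ S, dist x y ≤ dist u v := fun x hx y hy =>
    hmax (x, y) (Finset.mk_mem_product hx hy)
  by_cases hne : u = v
  · have heq : ∀ x ∈ S, ∀ y ∈ S, x = y := by
      intro x hx y hy
      have := hdiam x hx y hy
      rw [hne, dist_self] at this
      exact dist_le_zero.1 this
    refine ⟨fun _ _ => 0, fun _ _ => rfl, fun _ => rfl, fun _ _ _ _ _ _ => by simp, ?_, ?_, ?_⟩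
    · intro x hx y hy
      simp [heq x hx y hy]
    · intro D hD x hx y hy
      exact dist_nonneg.trans (hD x hx y hy)
    · rintro ε ⟨hε0, hε1⟩
      rw [Finset.filter_eq_empty_iff.2]
      · have : (1 : ℝ) ≤ S.card := by exact_mod_cast hS.card_pos
        have : (0 : ℝ) ≤ S.card - 1 := by linarith
        simp only [Finset.card_empty, Nat.cast_zero]
        positivity
      · rintro ⟨x, y⟩ hxy ⟨h1, _⟩
        exact h1 (heq x (Finset.mem_product.1 hxy).1 y (Finset.mem_product.1 hxy).2)
  obtain ⟨A, B, hAB, rfl, hA, hB, hcut⟩ := exists_cut S u v hu hv hne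
  have hAs : A ⊂ A ∪ B := by
    refine (Finset.ssubset_iff_of_subset Finset.subset_union_left).2 ?_
    obtain ⟨b, hb⟩ := hB
    exact ⟨b, Finset.mem_union_right _ hb, Finset.disjoint_right.1 hAB hb⟩
  have hBs : B ⊂ A ∪ B := by
    refine (Finset.ssubset_iff_of_subset Finset.subset_union_right).2 ?_
    obtain ⟨b, hb⟩ := hA
    exact ⟨b, Finset.mem_union_left _ hb, Finset.disjoint_left.1 hAB hb⟩
  obtain ⟨ρA, symA, zA, uA, dA, bA, cA⟩ := ih A hAs hA
  obtain ⟨ρB, symB, zB, uB, dB, bB, cB⟩ := ih B hBs hB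
  have bA' := bA (dist u v) fun x hx y hy =>
    hdiam x (Finset.mem_union_left _ hx) y (Finset.mem_union_left _ hy)
  have bB' := bB (dist u v) fun x hx y hy =>
    hdiam x (Finset.mem_union_right _ hx) y (Finset.mem_union_right _ hy)
  have hdisj : ∀ x, x ∈ A → x ∉ B := fun _ h => Finset.disjoint_left.1 hAB h
  have hdisj' : ∀ x, x ∈ B → x ∉ A := fun _ h => Finset.disjoint_right.1 hAB h
  -- Outside `A × A`, `B × B` and the diagonal, the value is the diameter of `A ∪ B`.
  set ρ : X → X → ℝ := fun x y =>
    if x = y then 0 else if x ∈ A ∧ y ∈ A then ρA x y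
      else if x ∈ B ∧ y ∈ B then ρB x y else dist u v with hρ
  have rA : ∀ x ∈ A, ∀ y ∈ A, ρ x y = ρA x y := by
    intro x hx y hy
    by_cases h : x = y
    · simp [hρ, h, zA]
    · simp [hρ, h, hx, hy]
  have rB : ∀ x ∈ B, ∀ y ∈ B, ρ x y = ρB x y := by
    intro x hx y hy
    by_cases h : x = y
    · simp [hρ, h, zB]
    · simp [hρ, h, hx, hy, hdisj' x hx]
  have rAB : ∀ x ∈ A, ∀ y ∈ B, ρ x y = dist u v := by
    intro x hx y hy
    have h : x ≠ y := by rintro rfl; exact hdisj x hx hy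
    simp [hρ, h, hdisj x hx, hdisj' y hy]
  have rBA : ∀ x ∈ B, ∀ y ∈ A, ρ x y = dist u v := by
    intro x hx y hy
    have h : x ≠ y := by rintro rfl; exact hdisj x hy hx
    simp [hρ, h, hdisj' x hx, hdisj y hy]
  refine ⟨ρ, ?_, ?_, ?_, ?_, ?_, ?_⟩
  · intro x y
    simp only [hρ, eq_comm (a := x), and_comm (a := x ∈ A), and_comm (a := x ∈ B), symA x y,
      symB x y]
  · intro x
    simp [hρ]
  · intro x hx y hy z hz
    rcases Finset.mem_union.1 hx with hx | hx <;> rcases Finset.mem_union.1 hy with hy | hy <;>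
      rcases Finset.mem_union.1 hz with hz | hz
    · rw [rA x hx z hz, rA x hx y hy, rA y hy z hz]; exact uA x hx y hy z hz
    · rw [rAB x hx z hz, rAB y hy z hz]; exact le_max_right _ _
    · rw [rA x hx z hz, rAB x hx y hy]; exact le_max_of_le_left (bA' x hx z hz)
    · rw [rAB x hx z hz, rAB x hx y hy]; exact le_max_left _ _
    · rw [rBA x hx z hz, rBA x hx y hy]; exact le_max_left _ _
    · rw [rB x hx z hz, rBA x hx y hy]; exact le_max_of_le_left (bB' x hx z hz)
    · rw [rBA x hx z hz, rBA y hy z hz]; exact le_max_right _ _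
    · rw [rB x hx z hz, rB x hx y hy, rB y hy z hz]; exact uB x hx y hy z hz
  · intro x hx y hy
    have := hdiam x hx y hy
    rcases Finset.mem_union.1 hx with hx | hx <;> rcases Finset.mem_union.1 hy with hy | hy
    · rw [rA x hx y hy]; exact dA x hx y hy
    · rwa [rAB x hx y hy]
    · rwa [rBA x hx y hy]
    · rw [rB x hx y hy]; exact dB x hx y hy
  · intro D hD x hx y hy
    have := hD u hu v hv
    rcases Finset.mem_union.1 hx with hx | hx <;> rcases Finset.mem_union.1 hy with hy | hy
    · rw [rA x hx y hy]; exact (bA' x hx y hy).trans this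
    · rwa [rAB x hx y hy]
    · rwa [rBA x hx y hy]
    · rw [rB x hx y hy]; exact (bB' x hx y hy).trans this
  · intro ε hε
    have hcA := cA ε hε
    have hcB := cB ε hε
    have hcC := hcut ε hε
    set FA := (A ×ˢ A).filter fun p =>
      p.1 ≠ p.2 ∧ (150 / Real.sqrt ε) * dist p.1 p.2 < ρA p.1 p.2 with hFA
    set FB := (B ×ˢ B).filter fun p =>
      p.1 ≠ p.2 ∧ (150 / Real.sqrt ε) * dist p.1 p.2 < ρB p.1 p.2 with hFB
    set FC := (A ×ˢ B).filter fun p => (150 / Real.sqrt ε) * dist p.1 p.2 < dist u v with hFC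
    have hsub : (((A ∪ B) ×ˢ (A ∪ B)).filter fun p =>
        p.1 ≠ p.2 ∧ (150 / Real.sqrt ε) * dist p.1 p.2 < ρ p.1 p.2) ⊆
        (FA ∪ FB) ∪ (FC ∪ FC.image Prod.swap) := by
      rintro ⟨x, y⟩ hxy
      obtain ⟨hm, h1, h2⟩ := Finset.mem_filter.1 hxy
      obtain ⟨hx, hy⟩ := Finset.mem_product.1 hm
      simp only at h1 h2 hx hy
      simp only [Finset.mem_union]
      rcases Finset.mem_union.1 hx with hx | hx <;> rcases Finset.mem_union.1 hy with hy | hy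
      · rw [rA x hx y hy] at h2
        exact Or.inl (Or.inl (Finset.mem_filter.2 ⟨Finset.mk_mem_product hx hy, h1, h2⟩))
      · rw [rAB x hx y hy] at h2
        exact Or.inr (Or.inl (Finset.mem_filter.2 ⟨Finset.mk_mem_product hx hy, h2⟩))
      · rw [rBA x hx y hy, dist_comm x y] at h2
        exact Or.inr (Or.inr (Finset.mem_image.2
          ⟨(y, x), Finset.mem_filter.2 ⟨Finset.mk_mem_product hy hx, h2⟩, rfl⟩))
      · rw [rB x hx y hy] at h2
        exact Or.inl (Or.inr (Finset.mem_filter.2 ⟨Finset.mk_mem_product hx hy, h1, h2⟩))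
    have hle : (((A ∪ B) ×ˢ (A ∪ B)).filter fun p =>
        p.1 ≠ p.2 ∧ (150 / Real.sqrt ε) * dist p.1 p.2 < ρ p.1 p.2).card ≤
        FA.card + FB.card + (FC.card + FC.card) := by
      refine (Finset.card_le_card hsub).trans ?_
      refine (Finset.card_union_le _ _).trans (add_le_add (Finset.card_union_le _ _) ?_)
      exact (Finset.card_union_le _ _).trans (add_le_add le_rfl Finset.card_image_le)
    have hle' : ((((A ∪ B) ×ˢ (A ∪ B)).filter fun p =>
        p.1 ≠ p.2 ∧ (150 / Real.sqrt ε) * dist p.1 p.2 < ρ p.1 p.2).card : ℝ) ≤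
        FA.card + FB.card + (FC.card + FC.card) := by exact_mod_cast hle
    rw [Finset.card_union_of_disjoint hAB]
    push_cast
    -- Every pair is separated exactly once: `a(a-1) + b(b-1) + 2ab = (a+b)(a+b-1)`.
    linarith

/-- Every finite metric space on `n ≥ 2` points embeds into an
ultrametric `ρ` (a metric satisfying the strong triangle inequality) which is
non-contractive (`ρ ≥ d`) and has scaling distortion `O(√(1/ε))`: for every
`ε ∈ (0,1]` the number of unordered pairs of distinct points with
`ρ(x,y) > (150/√ε)·d(x,y)` is at most `ε·n(n−1)/2`.  (Counting ordered pairs,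
the bound is `ε·n(n−1)`, which is equivalent since the condition is symmetric.) -/
theorem scaling_embedding_into_ultrametric
    {X : Type*} [MetricSpace X] [Fintype X] (hn : 2 ≤ Fintype.card X) :
    ∃ ρ : X → X → ℝ,
      (∀ x y : X, ρ x y = ρ y x) ∧
      (∀ x y : X, ρ x y = 0 ↔ x = y) ∧
      (∀ x y z : X, ρ x z ≤ max (ρ x y) (ρ y z)) ∧
      (∀ x y : X, dist x y ≤ ρ x y) ∧
      (∀ ε ∈ Set.Ioc (0 : ℝ) 1,
        (Set.ncard {p : X × X |
            p.1 ≠ p.2 ∧ (150 / Real.sqrt ε) * dist p.1 p.2 < ρ p.1 p.2} : ℝ)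
          ≤ ε * (Fintype.card X : ℝ) * ((Fintype.card X : ℝ) - 1)) := by
  classical
  have hne : (Finset.univ : Finset X).Nonempty := by
    rw [← Finset.card_pos, Finset.card_univ]
    omega
  obtain ⟨ρ, hsym, hz, hu, hd, _, hc⟩ := exists_ultrametric_on (Finset.univ : Finset X) hne
  refine ⟨ρ, hsym, fun x y => ⟨fun h => ?_, fun h => h ▸ hz x⟩,
    fun x y z => hu x (by simp) y (by simp) z (by simp),
    fun x y => hd x (by simp) y (by simp), fun ε hε => ?_⟩
  · exact dist_le_zero.1 ((hd x (by simp) y (by simp)).trans h.le)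
  · refine le_trans (le_of_eq ?_) (hc ε hε)
    rw [← Set.ncard_coe_finset]
    simp
end

section
/- Fix q ∈ [1,2) and c > 0. There is a constant C depending only on q and c such that the following holds. Let (X,d) be a finite metric space with n = |X| ≥ 2, let N = n(n−1)/2, let (Y,ρ) be a metric space and let f : X → Y be non-contractive. If for every ε ∈ (0,1] the number of unordered pairs {u,v} with ρ(f(u),f(v)) > (c/√ε)·d(u,v) is at most ε·N, then the ℓ_q-distortion of f satisfies ((1/N)·Σ_{unordered pairs {u,v}} (ρ(f(u),f(v))/d(u,v))^q)^{1/q} ≤ C. -/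
/-!
Decompose the distortions `x` dyadically. If `c < x`, let `k` be the largest natural number with
`c * 2 ^ k < x`; then `x ^ q ≤ (2 * c) ^ q * (2 ^ q) ^ k`. The hypothesis at `ε = 4 ^ (-k)` says
that at most a `4 ^ (-k)` fraction of the pairs satisfies `c * 2 ^ k < x`, so the average of `x ^ q`
is at most `c ^ q + (2 * c) ^ q * ∑ k, (2 ^ q / 4) ^ k`, a geometric series which converges exactly
because `q < 2`. The pointwise bound is `rpow_le_dyadic_sum` and the summed bound is
`sum_rpow_le_of_dyadic_tail`.
-/

/-- Pointwise dyadic bound. The sum is over all levels `k < K` with `c * 2 ^ k < x`, although its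
top term alone would do, so that summing over `x` yields the level-set cardinalities. -/
lemma rpow_le_dyadic_sum {q c x : ℝ} (hq : 0 ≤ q) (hc : 0 < c) (hx : 0 ≤ x) (K : ℕ)
    (hK : x ≤ c * 2 ^ K) :
    x ^ q ≤ c ^ q + ∑ k ∈ Finset.range K,
      if c * 2 ^ k < x then (2 * c) ^ q * ((2 : ℝ) ^ q) ^ k else 0 := by
  induction K with
  | zero => simpa using Real.rpow_le_rpow hx (by simpa using hK) hq
  | succ K ih =>
    rw [Finset.sum_range_succ]
    by_cases h : x ≤ c * 2 ^ K
    · rw [if_neg (not_lt.mpr h), add_zero]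
      exact ih h
    · rw [if_pos (not_le.mp h)]
      have h1 : x ^ q ≤ (2 * c) ^ q * ((2 : ℝ) ^ q) ^ K := by
        calc x ^ q ≤ ((2 * c) * 2 ^ K) ^ q :=
              Real.rpow_le_rpow hx (by rw [pow_succ] at hK; linarith) hq
          _ = (2 * c) ^ q * ((2 : ℝ) ^ q) ^ K := by
              rw [Real.mul_rpow (by positivity) (by positivity), ← Real.rpow_natCast,
                ← Real.rpow_natCast, ← Real.rpow_mul (by norm_num), ← Real.rpow_mul (by norm_num),
                mul_comm q]
      have h2 : 0 ≤ ∑ k ∈ Finset.range K,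
          if c * 2 ^ k < x then (2 * c) ^ q * ((2 : ℝ) ^ q) ^ k else 0 :=
        Finset.sum_nonneg fun k _ => by split_ifs <;> positivity
      have h3 : 0 ≤ c ^ q := by positivity
      linarith

/-- A weak-type quadratic tail bound along dyadic levels implies a strong-type bound for each
exponent `q < 2`. -/
lemma sum_rpow_le_of_dyadic_tail {ι : Type*} (s : Finset ι) (x : ι → ℝ) {q c M : ℝ}
    (hq : 0 ≤ q) (hq2 : q < 2) (hc : 0 < c) (hx : ∀ i ∈ s, 0 ≤ x i)
    (hs : (s.card : ℝ) ≤ M)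
    (htail : ∀ k : ℕ, ((s.filter fun i => c * 2 ^ k < x i).card : ℝ) ≤ (1 / 4) ^ k * M) :
    ∑ i ∈ s, x i ^ q ≤ (c ^ q + (2 * c) ^ q * (1 - (2 : ℝ) ^ q / 4)⁻¹) * M := by
  have hM : 0 ≤ M := le_trans (Nat.cast_nonneg _) hs
  have hr0 : (0 : ℝ) ≤ 2 ^ q / 4 := by positivity
  have hr1 : (2 : ℝ) ^ q / 4 < 1 := by
    have : (2 : ℝ) ^ q < 2 ^ (2 : ℝ) := Real.rpow_lt_rpow_of_exponent_lt (by norm_num) hq2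
    norm_num at this
    linarith
  -- Finitely many values, hence one dyadic level above all of them.
  obtain ⟨K, hK⟩ : ∃ K : ℕ, ∀ i ∈ s, x i ≤ c * 2 ^ K := by
    obtain ⟨K, hK⟩ := pow_unbounded_of_one_lt ((∑ i ∈ s, x i) / c) (one_lt_two (α := ℝ))
    refine ⟨K, fun i hi => (Finset.single_le_sum hx hi).trans ?_⟩
    rw [div_lt_iff₀ hc] at hK
    linarith
  calc ∑ i ∈ s, x i ^ q
      ≤ ∑ i ∈ s, (c ^ q + ∑ k ∈ Finset.range K,
          if c * 2 ^ k < x i then (2 * c) ^ q * ((2 : ℝ) ^ q) ^ k else 0) :=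
        Finset.sum_le_sum fun i hi => rpow_le_dyadic_sum hq hc (hx i hi) K (hK i hi)
    _ = s.card * c ^ q + ∑ k ∈ Finset.range K,
          ((s.filter fun i => c * 2 ^ k < x i).card : ℝ) *
            ((2 * c) ^ q * ((2 : ℝ) ^ q) ^ k) := by
        rw [Finset.sum_add_distrib, Finset.sum_comm]
        simp [Finset.sum_ite]
    _ ≤ M * c ^ q + ∑ k ∈ Finset.range K,
          ((1 / 4) ^ k * M) * ((2 * c) ^ q * ((2 : ℝ) ^ q) ^ k) := by
        gcongr with k _
        exact htail k
    _ = M * c ^ q + M * (2 * c) ^ q * ∑ k ∈ Finset.range K, ((2 : ℝ) ^ q / 4) ^ k := by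
        rw [Finset.mul_sum]
        congr 1
        refine Finset.sum_congr rfl fun k _ => ?_
        rw [div_pow, div_pow, one_pow]
        ring
    _ ≤ M * c ^ q + M * (2 * c) ^ q * (1 - (2 : ℝ) ^ q / 4)⁻¹ := by
        gcongr
        rw [← tsum_geometric_of_lt_one hr0 hr1]
        exact (summable_geometric_of_lt_one hr0 hr1).sum_le_tsum _ fun k _ => by positivity
    _ = _ := by ring


/-- For `q ∈ [1,2)` and `c > 0` there is a constant `C = C(q,c)`
such that any non-contractive embedding `f` of a finite metric space on `n ≥ 2`
points into a metric space, with scaling distortion `c/√ε` (for each `ε ∈ (0,1]`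
at most `ε·N` unordered pairs — equivalently `ε·n(n−1)` ordered pairs — have
distortion exceeding `c/√ε`), has `ℓ_q`-distortion at most `C`.
The sum runs over all ordered pairs, normalized by `n(n−1)`; diagonal terms
contribute `(0/0)^q = 0`, so this equals the average of `dist_f^q` over
unordered pairs. -/
theorem lq_distortion_of_scaling_lt_two
    (q c : ℝ) (hq1 : 1 ≤ q) (hq2 : q < 2) (hc : 0 < c) :
    ∃ C : ℝ, ∀ (X : Type) [MetricSpace X] [Fintype X]
      (Y : Type) [MetricSpace Y] (f : X → Y),
      2 ≤ Fintype.card X →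
      (∀ u v : X, dist u v ≤ dist (f u) (f v)) →
      (∀ ε ∈ Set.Ioc (0 : ℝ) 1,
        (Set.ncard {p : X × X |
            p.1 ≠ p.2 ∧ (c / Real.sqrt ε) * dist p.1 p.2 < dist (f p.1) (f p.2)} : ℝ)
          ≤ ε * (Fintype.card X : ℝ) * ((Fintype.card X : ℝ) - 1)) →
      ((∑ p : X × X, (dist (f p.1) (f p.2) / dist p.1 p.2) ^ q) /
          ((Fintype.card X : ℝ) * ((Fintype.card X : ℝ) - 1))) ^ (1 / q) ≤ C := by
  classical
  refine ⟨(c ^ q + (2 * c) ^ q * (1 - (2 : ℝ) ^ q / 4)⁻¹) ^ (1 / q), ?_⟩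
  intro X _ _ Y _ f hn _ htail
  have hn' : (2 : ℝ) ≤ Fintype.card X := by exact_mod_cast hn
  have hM : 0 < (Fintype.card X : ℝ) * ((Fintype.card X : ℝ) - 1) := by nlinarith
  set x : X × X → ℝ := fun p => dist (f p.1) (f p.2) / dist p.1 p.2 with hxdef
  have hx0 : ∀ p, 0 ≤ x p := fun p => by positivity
  -- Diagonal terms vanish since `0 / 0 = 0` and `q ≠ 0`.
  have hsum : ∑ p : X × X, x p ^ q
      = ∑ p ∈ (Finset.univ : Finset X).offDiag, x p ^ q := by
    refine (Finset.sum_subset (Finset.subset_univ _) fun p _ hp => ?_).symm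
    have hp' : p.1 = p.2 := by simpa [Finset.mem_offDiag] using hp
    simp [hxdef, hp', Real.zero_rpow (by linarith : q ≠ 0)]
  have hcard : (((Finset.univ : Finset X).offDiag.card : ℕ) : ℝ)
      ≤ (Fintype.card X : ℝ) * ((Fintype.card X : ℝ) - 1) := by
    rw [Finset.offDiag_card, Finset.card_univ, Nat.cast_sub (Nat.le_mul_self _)]
    push_cast
    linarith
  have key := sum_rpow_le_of_dyadic_tail (Finset.univ : Finset X).offDiag x
    (by linarith : 0 ≤ q) hq2 hc (fun p _ => hx0 p) hcard (fun k => by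
      have h := htail ((1 / 4) ^ k) ⟨by positivity, pow_le_one₀ (by norm_num) (by norm_num)⟩
      have hsq : Real.sqrt ((1 / 4) ^ k) = (1 / 2) ^ k := by
        rw [show (1 / 4 : ℝ) = (1 / 2) ^ 2 by norm_num, ← pow_mul, mul_comm, pow_mul,
          Real.sqrt_sq (by positivity)]
      have hset : {p : X × X | p.1 ≠ p.2 ∧
          (c / Real.sqrt ((1 / 4) ^ k)) * dist p.1 p.2 < dist (f p.1) (f p.2)}
          = ↑((Finset.univ : Finset X).offDiag.filter fun p => c * 2 ^ k < x p) := by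
        ext p
        simp only [Set.mem_setOf_eq, Finset.coe_filter, Finset.mem_offDiag, Finset.mem_univ,
          true_and]
        refine and_congr_right fun hp => ?_
        rw [hsq, hxdef, lt_div_iff₀ (dist_pos.mpr hp), one_div, inv_pow, div_inv_eq_mul]
      rw [hset, Set.ncard_coe_finset] at h
      linarith)
  refine Real.rpow_le_rpow ?_ ?_ (by positivity)
  · exact div_nonneg (Finset.sum_nonneg fun p _ => Real.rpow_nonneg (hx0 p) q) hM.le
  · rw [div_le_iff₀ hM]
    exact hsum.trans_le key
end

section
/- There is a universal constant C such that the following holds for every c > 0. Let (X,d) be a finite metric space with n = |X| ≥ 2, let N = n(n−1)/2, let (Y,ρ) be a metric space and let f : X → Y be non-contractive. If for every ε ∈ (0,1] the number of unordered pairs {u,v} with ρ(f(u),f(v)) > (c/√ε)·d(u,v) is at most ε·N, then the ℓ_2-distortion of f satisfies ((1/N)·Σ_{unordered pairs {u,v}} (ρ(f(u),f(v))/d(u,v))^2)^{1/2} ≤ C·c·√(1 + log n). -/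
/-! Scaling the squared distortions by `c⁻²` gives numbers `x p`, one for each of the `M = n (n - 1)`
ordered pairs of distinct points, and the hypothesis at `ε = 1/k` becomes the weak-type bound
`#{p | k < x p} ≤ M / k` for every integer `k ≥ 1`. At `k = M + 1` this count is below `1`, so every
`x p` is at most `M + 1`, and summing the layer-cake inequality `x p ≤ 1 + #{k ∈ [1, M] | k < x p}`
over `p` bounds `∑ x p` by `M (1 + H_M) ≤ M (2 + log M) ≤ 2 M (1 + log n)`.
Hence `C = √2` works. -/

/-- Discrete layer-cake inequality, truncated at height `M + 1`. -/
lemma le_one_add_sum_indicator (x : ℝ) (M : ℕ) (hx : x ≤ M + 1) :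
    x ≤ 1 + ∑ k ∈ Finset.Icc 1 M, (if (k : ℝ) < x then (1 : ℝ) else 0) := by
  induction M with
  | zero => simpa using hx
  | succ M ih =>
    rcases lt_or_ge ((M : ℝ) + 1) x with h | h
    · have hsum : ∑ k ∈ Finset.Icc 1 (M + 1), (if (k : ℝ) < x then (1 : ℝ) else 0)
          = ∑ k ∈ Finset.Icc 1 (M + 1), (1 : ℝ) := by
        refine Finset.sum_congr rfl fun k hk => if_pos ?_
        have : (k : ℝ) ≤ M + 1 := by exact_mod_cast (Finset.mem_Icc.1 hk).2
        linarith
      rw [hsum]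
      simp only [Finset.sum_const, Nat.card_Icc, nsmul_eq_mul, mul_one]
      push_cast [Nat.add_sub_cancel] at hx ⊢
      linarith
    · rw [Finset.sum_Icc_succ_top (by omega)]
      have h1 := ih h
      have h2 : (0 : ℝ) ≤ if ((M + 1 : ℕ) : ℝ) < x then (1 : ℝ) else 0 := by
        split_ifs <;> norm_num
      linarith

/-- A weak-`L¹` bound on a finite set costs only a logarithm when passing to `L¹`. -/
lemma sum_le_of_weak_type {ι : Type*} (s : Finset ι) (x : ι → ℝ)
    (h : ∀ k : ℕ, 1 ≤ k → ((s.filter fun p => (k : ℝ) < x p).card : ℝ) ≤ s.card / k) :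
    ∑ p ∈ s, x p ≤ s.card * (2 + Real.log s.card) := by
  have hbd : ∀ p ∈ s, x p ≤ s.card + 1 := by
    intro p hp
    by_contra! hlt
    have h1 := h (s.card + 1) (by omega)
    have h2 : 1 ≤ (s.filter fun p => ((s.card + 1 : ℕ) : ℝ) < x p).card :=
      Finset.card_pos.2 ⟨p, Finset.mem_filter.2 ⟨hp, by exact_mod_cast hlt⟩⟩
    have h3 : (1 : ℝ) ≤ ((s.filter fun p => ((s.card + 1 : ℕ) : ℝ) < x p).card : ℝ) := by
      exact_mod_cast h2
    have h4 := h3.trans h1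
    rw [le_div_iff₀ (by positivity)] at h4
    push_cast at h4
    linarith
  calc ∑ p ∈ s, x p
      ≤ ∑ p ∈ s, (1 + ∑ k ∈ Finset.Icc 1 s.card, (if (k : ℝ) < x p then (1 : ℝ) else 0)) :=
        Finset.sum_le_sum fun p hp => le_one_add_sum_indicator _ _ (hbd p hp)
    _ = s.card + ∑ k ∈ Finset.Icc 1 s.card, ((s.filter fun p => (k : ℝ) < x p).card : ℝ) := by
        rw [Finset.sum_add_distrib, Finset.sum_comm]
        simp
    _ ≤ s.card + ∑ k ∈ Finset.Icc 1 s.card, (s.card : ℝ) / k := by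
        gcongr with k hk
        exact h k (Finset.mem_Icc.1 hk).1
    _ = s.card * (1 + (harmonic s.card : ℝ)) := by
        rw [harmonic_eq_sum_Icc]
        push_cast
        rw [mul_add, mul_one, Finset.mul_sum]
        simp only [div_eq_mul_inv]
    _ ≤ s.card * (2 + Real.log s.card) := by
        have := harmonic_le_one_add_log s.card
        exact mul_le_mul_of_nonneg_left (by linarith) (Nat.cast_nonneg _)

/-- There is a universal constant `C` such that for every `c > 0`,
any non-contractive embedding `f` of a finite metric space on `n ≥ 2` points into
a metric space with scaling distortion `c/√ε` (for each `ε ∈ (0,1]` at most `ε·N`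
unordered pairs — equivalently `ε·n(n−1)` ordered pairs — have distortion
exceeding `c/√ε`) has `ℓ₂`-distortion at most `C·c·√(1 + log n)`.
The sum runs over ordered pairs, normalized by `n(n−1)`; diagonal terms
contribute `(0/0)² = 0`, so this equals the average of `dist_f²` over unordered
pairs. -/
theorem l2_distortion_of_scaling :
    ∃ C : ℝ, ∀ (c : ℝ), 0 < c → ∀ (X : Type) [MetricSpace X] [Fintype X]
      (Y : Type) [MetricSpace Y] (f : X → Y),
      2 ≤ Fintype.card X →
      (∀ u v : X, dist u v ≤ dist (f u) (f v)) →
      (∀ ε ∈ Set.Ioc (0 : ℝ) 1,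
        (Set.ncard {p : X × X |
            p.1 ≠ p.2 ∧ (c / Real.sqrt ε) * dist p.1 p.2 < dist (f p.1) (f p.2)} : ℝ)
          ≤ ε * (Fintype.card X : ℝ) * ((Fintype.card X : ℝ) - 1)) →
      Real.sqrt ((∑ p : X × X, (dist (f p.1) (f p.2) / dist p.1 p.2) ^ 2) /
          ((Fintype.card X : ℝ) * ((Fintype.card X : ℝ) - 1)))
        ≤ C * c * Real.sqrt (1 + Real.log (Fintype.card X)) := by
  classical
  refine ⟨Real.sqrt 2, fun c hc X _ _ Y _ f hn _ hsc => ?_⟩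
  have hn2 : (2 : ℝ) ≤ Fintype.card X := by exact_mod_cast hn
  set n : ℝ := (Fintype.card X : ℝ) with hn_def
  have hM : 0 < n * (n - 1) := by nlinarith
  set s : Finset (X × X) := (Finset.univ : Finset X).offDiag with hs
  have hcard : (s.card : ℝ) = n * (n - 1) := by
    rw [hs, Finset.offDiag_card, Finset.card_univ, Nat.cast_sub (Nat.le_mul_self _)]
    push_cast
    ring
  set x : X × X → ℝ := fun p => (dist (f p.1) (f p.2) / dist p.1 p.2 / c) ^ 2 with hx
  have hweak : ∀ k : ℕ, 1 ≤ k →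
      ((s.filter fun p => (k : ℝ) < x p).card : ℝ) ≤ s.card / k := by
    intro k hk
    have hk1 : (1 : ℝ) ≤ k := by exact_mod_cast hk
    have hk0 : (0 : ℝ) < k := by linarith
    have h := hsc (1 / k) ⟨by positivity, by rw [div_le_one hk0]; exact hk1⟩
    rw [hcard]
    have heq : {p : X × X | p.1 ≠ p.2 ∧
        (c / Real.sqrt (1 / k)) * dist p.1 p.2 < dist (f p.1) (f p.2)}
        = ((s.filter fun p => (k : ℝ) < x p : Finset (X × X)) : Set (X × X)) := by
      ext p
      simp only [Set.mem_ofPred_eq, Finset.coe_filter, hs, Finset.mem_offDiag, Finset.mem_univ,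
        true_and]
      refine and_congr_right fun hp => ?_
      have hd : 0 < dist p.1 p.2 := dist_pos.2 hp
      rw [← Real.sqrt_lt_sqrt_iff hk0.le, hx, Real.sqrt_sq (by positivity), lt_div_iff₀ hc,
        lt_div_iff₀ hd, Real.sqrt_div zero_le_one, Real.sqrt_one, div_div_eq_mul_div, div_one,
        mul_comm c]
    rw [heq, Set.ncard_coe_finset] at h
    calc _ ≤ _ := h
      _ = _ := by ring
  have hsum := sum_le_of_weak_type s x hweak
  have hlog : Real.log (s.card : ℝ) ≤ 2 * Real.log n := by
    have h2 : 2 * Real.log n = Real.log (n ^ 2) := by rw [Real.log_pow]; norm_num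
    rw [h2, hcard]
    exact Real.log_le_log hM (by nlinarith)
  -- Diagonal pairs contribute `(0 / 0) ^ 2 = 0`, so the sum lives on the off-diagonal.
  have htot : ∑ p : X × X, (dist (f p.1) (f p.2) / dist p.1 p.2) ^ 2 = c ^ 2 * ∑ p ∈ s, x p := by
    rw [Finset.mul_sum]
    symm
    rw [← Finset.sum_subset (Finset.subset_univ s)]
    · refine Finset.sum_congr rfl fun p _ => ?_
      simp only [hx]
      field_simp
    · intro p _ hp
      have hp' : p.1 = p.2 := by simpa [hs] using hp
      simp [hp']
  have hlog0 : 0 ≤ Real.log n := Real.log_nonneg (by linarith)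
  rw [htot]
  refine Real.sqrt_le_iff.2 ⟨by positivity, ?_⟩
  rw [mul_pow, mul_pow, Real.sq_sqrt zero_le_two, Real.sq_sqrt (by linarith), div_le_iff₀ hM]
  calc c ^ 2 * ∑ p ∈ s, x p ≤ c ^ 2 * (n * (n - 1) * (2 + 2 * Real.log n)) := by
        rw [hcard] at hsum hlog
        gcongr
        refine hsum.trans ?_
        gcongr
    _ = _ := by ring
end

section
/- Fix q ∈ (2,∞) and c > 0. There is a constant C depending only on q and c such that the following holds. Let (X,d) be a finite metric space with n = |X| ≥ 2, let N = n(n−1)/2, let (Y,ρ) be a metric space and let f : X → Y be non-contractive. If for every ε ∈ (0,1] the number of unordered pairs {u,v} with ρ(f(u),f(v)) > (c/√ε)·d(u,v) is at most ε·N, then the ℓ_q-distortion of f satisfies ((1/N)·Σ_{unordered pairs {u,v}} (ρ(f(u),f(v))/d(u,v))^q)^{1/q} ≤ C·n^{1−2/q}. -/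
/-!
The proof bounds the decreasing rearrangement of the distortions. Let `M = n(n-1)` be the number of
ordered off-diagonal pairs. The scaling hypothesis at `ε = k/(2M)` says that at most `k/2 < k` pairs
have distortion above `c/√ε`, so every set of `k` pairs contains one whose distortion is at most
`c √(2M/k)`; that is, the `k`-th largest distortion is at most `c √(2M/k)`. By
`sum_le_sum_of_forall_subset_exists_le`, the sum of the `q`-th powers is at most
`c^q (2M)^{q/2} ∑ k^{-q/2}`, where the series converges because `q > 2`. Dividing by `M` leaves
`M^{q/2-1} ≤ n^{q-2}` up to a constant, and the `q`-th root is `n^{1-2/q}`.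
-/

/-- A rearrangement inequality: the hypothesis says that the `k`-th largest value of `r` on `s` is
at most `g k`. Removing an element witnessing the hypothesis for `s` itself reduces to a smaller
set, so no sorting is needed. -/
theorem sum_le_sum_of_forall_subset_exists_le {α : Type*} (r : α → ℝ) (g : ℕ → ℝ) (s : Finset α)
    (h : ∀ t ⊆ s, t.Nonempty → ∃ p ∈ t, r p ≤ g t.card) :
    ∑ p ∈ s, r p ≤ ∑ k ∈ Finset.range s.card, g (k + 1) := by
  classical
  induction hn : s.card generalizing s with
  | zero => simp [Finset.card_eq_zero.mp hn]
  | succ n ih =>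
    obtain ⟨p, hp, hle⟩ := h s subset_rfl (Finset.card_pos.mp (by omega))
    have hcard : (s.erase p).card = n := by rw [Finset.card_erase_of_mem hp, hn]; rfl
    have := ih (s.erase p) (fun t ht => h t (ht.trans (Finset.erase_subset p s))) hcard
    rw [← Finset.sum_erase_add s r hp, Finset.sum_range_succ]
    rw [hn] at hle
    linarith


/-- For `q ∈ (2,∞)` and `c > 0` there is a constant `C = C(q,c)`
such that any non-contractive embedding `f` of a finite metric space on `n ≥ 2`
points into a metric space with scaling distortion `c/√ε` (for each `ε ∈ (0,1]`
at most `ε·N` unordered pairs — equivalently `ε·n(n−1)` ordered pairs — have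
distortion exceeding `c/√ε`) has `ℓ_q`-distortion at most `C·n^(1−2/q)`.
The sum runs over ordered pairs, normalized by `n(n−1)`; diagonal terms
contribute `(0/0)^q = 0`, so this equals the average of `dist_f^q` over
unordered pairs. -/
theorem lq_distortion_of_scaling_gt_two
    (q c : ℝ) (hq : 2 < q) (hc : 0 < c) :
    ∃ C : ℝ, ∀ (X : Type) [MetricSpace X] [Fintype X]
      (Y : Type) [MetricSpace Y] (f : X → Y),
      2 ≤ Fintype.card X →
      (∀ u v : X, dist u v ≤ dist (f u) (f v)) →
      (∀ ε ∈ Set.Ioc (0 : ℝ) 1,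
        (Set.ncard {p : X × X |
            p.1 ≠ p.2 ∧ (c / Real.sqrt ε) * dist p.1 p.2 < dist (f p.1) (f p.2)} : ℝ)
          ≤ ε * (Fintype.card X : ℝ) * ((Fintype.card X : ℝ) - 1)) →
      ((∑ p : X × X, (dist (f p.1) (f p.2) / dist p.1 p.2) ^ q) /
          ((Fintype.card X : ℝ) * ((Fintype.card X : ℝ) - 1))) ^ (1 / q)
        ≤ C * (Fintype.card X : ℝ) ^ (1 - 2 / q) := by
  have hq0 : 0 < q := by linarith
  have hsum : Summable fun k : ℕ => ((k + 1 : ℕ) : ℝ) ^ (-(q / 2)) :=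
    (summable_nat_add_iff 1).mpr (Real.summable_nat_rpow.mpr (by linarith))
  set Z : ℝ := ∑' k : ℕ, ((k + 1 : ℕ) : ℝ) ^ (-(q / 2)) with hZ
  have hZ0 : 0 ≤ Z := tsum_nonneg fun k => by positivity
  refine ⟨(c ^ q * 2 ^ (q / 2) * Z) ^ (1 / q), ?_⟩
  intro X _ _ Y _ f hn _ hscale
  classical
  set n : ℝ := (Fintype.card X : ℝ) with hn_def
  have hn2 : (2 : ℝ) ≤ n := by rw [hn_def]; exact_mod_cast hn
  set M : ℝ := n * (n - 1) with hM
  have hM0 : 0 < M := mul_pos (by linarith) (by linarith)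
  have hcardM : ((Finset.univ : Finset X).offDiag.card : ℝ) = M := by
    rw [Finset.offDiag_card, Finset.card_univ, Nat.cast_sub (Nat.le_mul_self _), hM]
    push_cast
    ring
  set r : X × X → ℝ := fun p => (dist (f p.1) (f p.2) / dist p.1 p.2) ^ q with hr
  set g : ℕ → ℝ := fun k => c ^ q * (2 * M) ^ (q / 2) * (k : ℝ) ^ (-(q / 2)) with hg
  -- `g k` is the `q`-th power of the distortion threshold at `ε = k / (2M)`.
  have hg_eq : ∀ k : ℕ, 0 < k → (c / √((k : ℝ) / (2 * M))) ^ q = g k := by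
    intro k hk
    have hk0 : (0 : ℝ) < k := by exact_mod_cast hk
    rw [Real.div_rpow hc.le (Real.sqrt_nonneg _), Real.sqrt_eq_rpow,
      ← Real.rpow_mul (by positivity), show (1 / 2 : ℝ) * q = q / 2 by ring,
      Real.div_rpow hk0.le (by positivity), hg]
    simp only
    rw [Real.rpow_neg hk0.le]
    field_simp
  have hdiag : ∑ p : X × X, r p = ∑ p ∈ (Finset.univ : Finset X).offDiag, r p := by
    refine (Finset.sum_subset (Finset.subset_univ _) ?_).symm
    intro p _ hp
    have : p.1 = p.2 := by simpa [Finset.mem_offDiag] using hp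
    simp [hr, this, Real.zero_rpow hq0.ne']
  have hrank : ∀ t ⊆ (Finset.univ : Finset X).offDiag, t.Nonempty →
      ∃ p ∈ t, r p ≤ g t.card := by
    intro t ht hne
    by_contra! hcon
    have hk : 0 < t.card := Finset.card_pos.mpr hne
    have hk0 : (0 : ℝ) < t.card := by exact_mod_cast hk
    have hkM : (t.card : ℝ) ≤ M := by
      rw [← hcardM]; exact_mod_cast Finset.card_le_card ht
    have hε := hscale ((t.card : ℝ) / (2 * M))
      ⟨by positivity, by rw [div_le_one (by positivity)]; linarith⟩
    rw [mul_assoc, ← hM] at hε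
    have hsub : (t : Set (X × X)) ⊆ {p : X × X | p.1 ≠ p.2 ∧
        (c / √((t.card : ℝ) / (2 * M))) * dist p.1 p.2 < dist (f p.1) (f p.2)} := by
      intro p hp
      have hne : p.1 ≠ p.2 := (Finset.mem_offDiag.mp (ht hp)).2.2
      refine ⟨hne, ?_⟩
      have hlt := hcon p hp
      rw [← hg_eq _ hk] at hlt
      exact (lt_div_iff₀ (dist_pos.mpr hne)).mp
        ((Real.rpow_lt_rpow_iff (by positivity) (by positivity) hq0).mp hlt)
    have hle := Set.ncard_le_ncard hsub (Set.toFinite _)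
    rw [Set.ncard_coe_finset] at hle
    have hle' : (t.card : ℝ) ≤ _ := (Nat.cast_le (α := ℝ).mpr hle).trans hε
    have : (t.card : ℝ) / (2 * M) * M = t.card / 2 := by field_simp
    linarith
  have hS : ∑ p : X × X, r p ≤ c ^ q * (2 * M) ^ (q / 2) * Z := by
    rw [hdiag]
    refine (sum_le_sum_of_forall_subset_exists_le r g _ hrank).trans ?_
    rw [hg, ← Finset.mul_sum]
    exact mul_le_mul_of_nonneg_left (hsum.sum_le_tsum _ fun k _ => by positivity)
      (by positivity)
  have hMn : M ^ (q / 2 - 1) ≤ n ^ (q - 2) := by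
    calc M ^ (q / 2 - 1) ≤ (n ^ (2 : ℝ)) ^ (q / 2 - 1) := by
          refine Real.rpow_le_rpow hM0.le ?_ (by linarith)
          rw [Real.rpow_two, hM]; nlinarith
      _ = n ^ (q - 2) := by
          rw [← Real.rpow_mul (by linarith)]; congr 1; ring
  have havg : (∑ p : X × X, r p) / M ≤ c ^ q * 2 ^ (q / 2) * Z * n ^ (q - 2) := by
    rw [div_le_iff₀ hM0]
    refine hS.trans ?_
    have hsplit : M ^ (q / 2) = M ^ (q / 2 - 1) * M := by
      rw [← Real.rpow_add_one hM0.ne']; congr 1; ring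
    rw [Real.mul_rpow zero_le_two hM0.le, hsplit]
    calc c ^ q * (2 ^ (q / 2) * (M ^ (q / 2 - 1) * M)) * Z
        = c ^ q * 2 ^ (q / 2) * Z * M ^ (q / 2 - 1) * M := by ring
      _ ≤ c ^ q * 2 ^ (q / 2) * Z * n ^ (q - 2) * M := by gcongr
  have hr0 : 0 ≤ ∑ p : X × X, r p := Finset.sum_nonneg fun p _ => by positivity
  calc ((∑ p : X × X, r p) / M) ^ (1 / q)
      ≤ (c ^ q * 2 ^ (q / 2) * Z * n ^ (q - 2)) ^ (1 / q) :=
        Real.rpow_le_rpow (by positivity) havg (by positivity)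
    _ = (c ^ q * 2 ^ (q / 2) * Z) ^ (1 / q) * n ^ (1 - 2 / q) := by
        rw [Real.mul_rpow (by positivity) (by positivity), ← Real.rpow_mul (by linarith)]
        congr 2
        field_simp
end

section
/- Let (X,d) be a finite metric space with n = |X| ≥ 2 and diameter Δ = max_{x,y} d(x,y) > 0, and let u ∈ X satisfy |B(u,Δ/2)| ≤ n/2, where B(x,r) = {z ∈ X : d(x,z) ≤ r}. Let ε̂ = sup{ε ∈ (0,1] : |B(u,√ε·Δ/4)| ≥ ε·n}. Then |B(u,√ε̂·Δ/2)| ≤ 4·ε̂·n. -/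
/-! The set whose supremum is `εh` is bounded above by `1` and contains `1 / n`, so `εh > 0`.
Since `√(4 εh) Δ / 4 = √εh Δ / 2`, the claimed bound is exactly the failure of the defining
condition at the scale `4 εh`, which holds because `4 εh > εh`, as long as `4 εh ≤ 1`.
If `4 εh > 1`, the bound exceeds `n` and is trivial. -/

/-- Claim 2 of the paper.  Let `(X,d)` be a finite metric
space with `n ≥ 2` points and diameter `Δ > 0`, and let `u` satisfy
`|B(u,Δ/2)| ≤ n/2`.  With
`ε̂ = sup{ε ∈ (0,1] : |B(u,√ε·Δ/4)| ≥ ε·n}`, we have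
`|B(u,√ε̂·Δ/2)| ≤ 4·ε̂·n`. -/
theorem ball_bound_at_sup_scale
    {X : Type*} [MetricSpace X] [Fintype X] (hn : 2 ≤ Fintype.card X)
    (Δ : ℝ) (hΔpos : 0 < Δ)
    (hΔub : ∀ x y : X, dist x y ≤ Δ) (hΔmax : ∃ x y : X, dist x y = Δ)
    (u : X)
    (hu : (Set.ncard (Metric.closedBall u (Δ / 2)) : ℝ) ≤ (Fintype.card X : ℝ) / 2)
    (εh : ℝ)
    (hεh : εh = sSup {ε : ℝ | ε ∈ Set.Ioc (0 : ℝ) 1 ∧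
      ε * (Fintype.card X : ℝ)
        ≤ (Set.ncard (Metric.closedBall u (Real.sqrt ε * Δ / 4)) : ℝ)}) :
    (Set.ncard (Metric.closedBall u (Real.sqrt εh * Δ / 2)) : ℝ)
      ≤ 4 * εh * (Fintype.card X : ℝ) := by
  have hn0 : (0 : ℝ) < Fintype.card X := by
    exact_mod_cast (by omega : 0 < Fintype.card X)
  set S := {ε : ℝ | ε ∈ Set.Ioc (0 : ℝ) 1 ∧
      ε * (Fintype.card X : ℝ)
        ≤ (Set.ncard (Metric.closedBall u (Real.sqrt ε * Δ / 4)) : ℝ)} with hS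
  have hbdd : BddAbove S := ⟨1, fun ε hε => hε.1.2⟩
  -- `1 / n` belongs to the set because every ball around `u` contains `u`.
  have hmem : (1 / (Fintype.card X : ℝ)) ∈ S := by
    refine ⟨⟨by positivity, ?_⟩, ?_⟩
    · rw [div_le_one hn0]
      exact_mod_cast (by omega : 1 ≤ Fintype.card X)
    · rw [one_div_mul_cancel hn0.ne']
      have hpos : 0 < Set.ncard
          (Metric.closedBall u (Real.sqrt (1 / (Fintype.card X : ℝ)) * Δ / 4)) := by
        rw [Set.ncard_pos (Set.toFinite _)]
        exact ⟨u, Metric.mem_closedBall_self (by positivity)⟩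
      exact_mod_cast hpos
  have hεpos : 0 < εh := by
    have h := le_csSup hbdd hmem
    rw [← hεh] at h
    exact lt_of_lt_of_le (by positivity) h
  by_cases h4 : 4 * εh ≤ 1
  · by_contra! hcon
    have hsqrt : Real.sqrt (4 * εh) = 2 * Real.sqrt εh := by
      rw [Real.sqrt_mul (by norm_num), show (4 : ℝ) = 2 ^ 2 by norm_num,
        Real.sqrt_sq (by norm_num)]
    have hrad : Real.sqrt (4 * εh) * Δ / 4 = Real.sqrt εh * Δ / 2 := by
      rw [hsqrt]; ring
    have h : 4 * εh ∈ S := by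
      refine ⟨⟨by positivity, h4⟩, ?_⟩
      rw [hrad]
      exact hcon.le
    have h' := le_csSup hbdd h
    rw [← hεh] at h'
    linarith
  · push Not at h4
    have hle : (Set.ncard (Metric.closedBall u (Real.sqrt εh * Δ / 2)) : ℝ)
        ≤ Fintype.card X := by
      rw [← Nat.card_eq_fintype_card]
      exact_mod_cast Set.ncard_le_card _
    nlinarith
end

section
/- Let (X,d) be a finite metric space with n = |X| ≥ 2 and diameter Δ > 0, let u ∈ X satisfy |B(u,Δ/2)| ≤ n/2, and let ε̂ = sup{ε ∈ (0,1] : |B(u,√ε·Δ/4)| ≥ ε·n}. Then there exists r ∈ [(1/4+1/25)·√ε̂·Δ, (1/2−1/25)·√ε̂·Δ] such that for every ε ∈ (0, 32·ε̂], the number of points w ∈ X with r − √ε·Δ/150 < d(u,w) < r + √ε·Δ/150 is less than √(ε·ε̂/2)·n. -/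
/-!
Write `s = √ε̂`. The annulus `sΔ/4 < d(u,w) ≤ sΔ/2` has fewer than `3ε̂n` points: the small ball has
at least `ε̂n` points, because `ε̂` belongs to the set whose supremum it is, and the large ball has
fewer than `4ε̂n` points, by maximality of `ε̂` if `4ε̂ ≤ 1` and by the hypothesis on `B(u,Δ/2)`
otherwise.

If every radius `r` in the given interval, of length `0.17 sΔ`, were bad, each such `r` would carry
an open interval `(r - h, r + h)` with `h = √ε Δ/150` that contains at least
`√(εε̂/2) n ≥ 105 (sn/Δ) h` of the distances from `u`. As `h ≤ √32 sΔ/150 < sΔ/25`, these intervals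
stay inside `(sΔ/4, sΔ/2)`. A Vitali selection (`mul_length_le_of_heavy_intervals`) gives disjoint
ones with `∑ h ≥ 0.17 sΔ / 5`, hence at least `105 · 0.034 ε̂n > 3ε̂n` points in the annulus, a
contradiction.
-/

/-- A Vitali-type covering estimate: if every `r ∈ [a, b]` is the centre of an open interval of
radius `h r` that contains at least `c * h r` of the values of `f` (with multiplicity), all of them
coming from `A`, then `c * (b - a) ≤ 5 * |A|`. -/
theorem mul_length_le_of_heavy_intervals {X : Type*} [Finite X] (f : X → ℝ) (a b R c : ℝ)
    (hc : 0 < c) (h : ℝ → ℝ) (A : Set X)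
    (hpos : ∀ r ∈ Set.Icc a b, 0 < h r) (hR : ∀ r ∈ Set.Icc a b, h r ≤ R)
    (hmass : ∀ r ∈ Set.Icc a b,
      c * h r ≤ (Set.ncard {w : X | r - h r < f w ∧ f w < r + h r} : ℝ))
    (hA : ∀ r ∈ Set.Icc a b, {w : X | r - h r < f w ∧ f w < r + h r} ⊆ A) :
    c * (b - a) ≤ 5 * (Set.ncard A : ℝ) := by
  classical
  obtain ⟨v, hvt, hdisj, hcov⟩ := Vitali.exists_disjoint_subfamily_covering_enlargement
    (fun r => Set.Ioo (r - h r) (r + h r)) (Set.Icc a b) h (3 / 2) (by norm_num)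
    (fun r hr => (hpos r hr).le) R hR
    (fun r hr => ⟨r, by constructor <;> linarith [hpos r hr]⟩)
  -- Disjoint intervals that each contain a value of `f` are finite in number.
  have hne : ∀ r : v, ∃ w : X, f w ∈ Set.Ioo ((r : ℝ) - h r) (r + h r) := by
    intro r
    have h1 := hmass r (hvt r.2)
    have h2 := mul_pos hc (hpos r (hvt r.2))
    have h3 : 0 < Set.ncard {w : X | (r : ℝ) - h r < f w ∧ f w < r + h r} := by
      exact_mod_cast h2.trans_le h1
    exact Set.nonempty_of_ncard_ne_zero h3.ne'
  choose g hg using hne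
  have hfin : v.Finite := by
    have : Function.Injective g := by
      intro r r' hrr
      by_contra hne
      have hd := hdisj r.2 r'.2 (fun e => hne (Subtype.ext e))
      exact Set.disjoint_left.mp hd (hg r) (hrr ▸ hg r')
    exact Set.finite_coe_iff.1 (Finite.of_injective g this)
  set V := hfin.toFinset with hV
  have hmemV : ∀ r, r ∈ V ↔ r ∈ v := fun r => hfin.mem_toFinset
  have hVt : ∀ r ∈ V, r ∈ Set.Icc a b := fun r hr => hvt ((hmemV r).1 hr)
  have hlen : b - a ≤ ∑ r ∈ V, 5 * h r := by
    -- If an interval meets another one whose radius is at least `2/3` of its own, then its centre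
    -- lies in the enlargement of the latter by the factor `1 + 3/2 = 5/2`.
    have hsub : Set.Icc a b ⊆ ⋃ r ∈ V, Set.Ioo (r - 5 / 2 * h r) (r + 5 / 2 * h r) := by
      intro x hx
      obtain ⟨r, hr, ⟨y, ⟨hy1, hy2⟩, hy3, hy4⟩, hle⟩ := hcov x hx
      simp only [Set.mem_iUnion]
      exact ⟨r, (hmemV r).2 hr, by constructor <;> linarith⟩
    have h1 := (MeasureTheory.measure_mono (μ := MeasureTheory.volume) hsub).trans
      (MeasureTheory.measure_biUnion_finset_le V _)
    simp only [Real.volume_Icc, Real.volume_Ioo] at h1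
    rw [← ENNReal.ofReal_sum_of_nonneg
      (fun r hr => by linarith [hpos r (hVt r hr)])] at h1
    rw [ENNReal.ofReal_le_ofReal_iff
      (Finset.sum_nonneg fun r hr => by linarith [hpos r (hVt r hr)])] at h1
    refine h1.trans (le_of_eq (Finset.sum_congr rfl fun r _ => by ring))
  have hcount : ∑ r ∈ V, c * h r ≤ (Set.ncard A : ℝ) := by
    have := Fintype.ofFinite X
    let F : ℝ → Finset X := fun r => {w : X | r - h r < f w ∧ f w < r + h r}.toFinset
    have hF : (V : Set ℝ).PairwiseDisjoint F := by
      intro r hr r' hr' hne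
      have hd := hdisj ((hmemV r).1 hr) ((hmemV r').1 hr') hne
      refine Finset.disjoint_left.mpr fun w hw hw' => ?_
      have h1 : r - h r < f w ∧ f w < r + h r := by simpa [F] using hw
      have h2 : r' - h r' < f w ∧ f w < r' + h r' := by simpa [F] using hw'
      exact Set.disjoint_left.mp hd h1 h2
    calc ∑ r ∈ V, c * h r ≤ ∑ r ∈ V, ((F r).card : ℝ) := by
          refine Finset.sum_le_sum fun r hr => ?_
          have := hmass r (hVt r hr)
          rwa [Set.ncard_eq_toFinset_card'] at this
      _ = ((V.biUnion F).card : ℝ) := by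
          rw [Finset.card_biUnion hF]; push_cast; rfl
      _ ≤ (Set.ncard A : ℝ) := by
          rw [Set.ncard_eq_toFinset_card']
          exact_mod_cast Finset.card_le_card (Finset.biUnion_subset.2 fun r hr w hw =>
            Set.mem_toFinset.2 (hA r (hVt r hr) (Set.mem_toFinset.1 hw)))
  rw [← Finset.mul_sum] at hlen hcount
  nlinarith [mul_le_mul_of_nonneg_left hlen hc.le]

/-- Claim 3 of the paper.  Let `(X,d)` be a finite metric
space with `n ≥ 2` points and diameter `Δ > 0`, let `u` satisfy
`|B(u,Δ/2)| ≤ n/2`, and let `ε̂ = sup{ε ∈ (0,1] : |B(u,√ε·Δ/4)| ≥ ε·n}`.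
Then some radius `r ∈ [(1/4+1/25)·√ε̂·Δ, (1/2−1/25)·√ε̂·Δ]` is good for all
`ε ∈ (0,32ε̂]` simultaneously: the open annulus
`{w : r − √ε·Δ/150 < d(u,w) < r + √ε·Δ/150}` contains fewer than
`√(ε·ε̂/2)·n` points. -/
theorem exists_good_radius_all_small_eps
    {X : Type*} [MetricSpace X] [Fintype X] (hn : 2 ≤ Fintype.card X)
    (Δ : ℝ) (hΔpos : 0 < Δ)
    (hΔub : ∀ x y : X, dist x y ≤ Δ) (hΔmax : ∃ x y : X, dist x y = Δ)
    (u : X)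
    (hu : (Set.ncard (Metric.closedBall u (Δ / 2)) : ℝ) ≤ (Fintype.card X : ℝ) / 2)
    (εh : ℝ)
    (hεh : εh = sSup {ε : ℝ | ε ∈ Set.Ioc (0 : ℝ) 1 ∧
      ε * (Fintype.card X : ℝ)
        ≤ (Set.ncard (Metric.closedBall u (Real.sqrt ε * Δ / 4)) : ℝ)}) :
    ∃ r ∈ Set.Icc ((1/4 + 1/25) * Real.sqrt εh * Δ)
        ((1/2 - 1/25) * Real.sqrt εh * Δ),
      ∀ ε ∈ Set.Ioc (0 : ℝ) (32 * εh),
        (Set.ncard {w : X | r - Real.sqrt ε * Δ / 150 < dist u w ∧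
            dist u w < r + Real.sqrt ε * Δ / 150} : ℝ)
          < Real.sqrt (ε * εh / 2) * (Fintype.card X : ℝ) := by
  set n : ℝ := (Fintype.card X : ℝ) with hn_def
  have hn2 : (2 : ℝ) ≤ n := by rw [hn_def]; exact_mod_cast hn
  have hn0 : 0 < n := by linarith
  set S : Set ℝ := {ε : ℝ | ε ∈ Set.Ioc (0 : ℝ) 1 ∧
      ε * n ≤ (Set.ncard (Metric.closedBall u (Real.sqrt ε * Δ / 4)) : ℝ)} with hS
  have hbdd : BddAbove S := ⟨1, fun ε hε => hε.1.2⟩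
  have hmem : 1 / n ∈ S := by
    refine ⟨⟨by positivity, by rw [div_le_one hn0]; linarith⟩, ?_⟩
    rw [one_div_mul_cancel hn0.ne']
    have : 0 < Set.ncard (Metric.closedBall u (Real.sqrt (1 / n) * Δ / 4)) := by
      rw [Set.ncard_pos]
      exact ⟨u, Metric.mem_closedBall_self (by positivity)⟩
    exact_mod_cast this
  have he0 : 0 < εh := by
    rw [hεh]; exact lt_of_lt_of_le (by positivity) (le_csSup hbdd hmem)
  have he1 : εh ≤ 1 := by
    rw [hεh]; exact csSup_le ⟨_, hmem⟩ fun ε hε => hε.1.2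
  have hmono : ∀ {p q : ℝ}, p ≤ q → (Set.ncard (Metric.closedBall u p) : ℝ)
      ≤ (Set.ncard (Metric.closedBall u q) : ℝ) := fun hpq => Nat.cast_le.2
    (Set.ncard_le_ncard (Metric.closedBall_subset_closedBall hpq) (Set.toFinite _))
  set s := Real.sqrt εh with hs
  have hs0 : 0 < s := Real.sqrt_pos.2 he0
  have hs1 : s ≤ 1 := Real.sqrt_le_one.2 he1
  have hss : s * s = εh := Real.mul_self_sqrt he0.le
  have hsmall : εh * n ≤ (Set.ncard (Metric.closedBall u (s * Δ / 4)) : ℝ) := by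
    rw [← le_div_iff₀ hn0]
    conv_lhs => rw [hεh]
    refine csSup_le ⟨_, hmem⟩ fun ε hε => ?_
    rw [le_div_iff₀ hn0]
    refine hε.2.trans ?_
    have hle : Real.sqrt ε ≤ s := Real.sqrt_le_sqrt (by rw [hεh]; exact le_csSup hbdd hε)
    exact hmono (by gcongr)
  have hlarge : (Set.ncard (Metric.closedBall u (s * Δ / 2)) : ℝ) < 4 * εh * n := by
    rcases le_or_gt (4 * εh) 1 with h4 | h4
    · by_contra! hcon
      have hsq : Real.sqrt (4 * εh) = 2 * s := by
        rw [Real.sqrt_eq_iff_mul_self_eq (by positivity) (by positivity), ← hss]; ring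
      have : 4 * εh ∈ S := by
        refine ⟨⟨by positivity, h4⟩, ?_⟩
        rw [hsq, show 2 * s * Δ / 4 = s * Δ / 2 by ring]
        exact hcon
      have := le_csSup hbdd this
      rw [← hεh] at this
      linarith
    · have : (Set.ncard (Metric.closedBall u (s * Δ / 2)) : ℝ)
          ≤ (Set.ncard (Metric.closedBall u (Δ / 2)) : ℝ) := by
        exact hmono (by nlinarith)
      nlinarith
  set A : Set X := Metric.closedBall u (s * Δ / 2) \ Metric.closedBall u (s * Δ / 4) with hAdef
  have hAcard : (Set.ncard A : ℝ) < 3 * εh * n := by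
    have h1 : Set.ncard A + Set.ncard (Metric.closedBall u (s * Δ / 4))
        = Set.ncard (Metric.closedBall u (s * Δ / 2)) :=
      Set.ncard_sdiff_add_ncard_of_subset
        (Metric.closedBall_subset_closedBall (by nlinarith [mul_pos hs0 hΔpos]))
    have h2 : (Set.ncard A : ℝ) + Set.ncard (Metric.closedBall u (s * Δ / 4))
        = Set.ncard (Metric.closedBall u (s * Δ / 2)) := by exact_mod_cast h1
    linarith
  by_contra! hbad
  have hsΔ : 0 < s * Δ := mul_pos hs0 hΔpos
  choose! e he hmass using hbad
  have hrad : ∀ r ∈ Set.Icc ((1/4 + 1/25) * s * Δ) ((1/2 - 1/25) * s * Δ),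
      Real.sqrt (e r) * Δ / 150 ≤ s * Δ / 25 := by
    intro r hr
    -- `√32 ≤ 6 = 150 / 25`
    have : Real.sqrt (e r) ≤ 6 * s := by
      rw [Real.sqrt_le_left (by positivity)]
      nlinarith [(he r hr).2]
    nlinarith
  have key := mul_length_le_of_heavy_intervals (fun w => dist u w)
    ((1/4 + 1/25) * s * Δ) ((1/2 - 1/25) * s * Δ) (s * Δ / 25) (105 * s * n / Δ)
    (by positivity) (fun r => Real.sqrt (e r) * Δ / 150) A
    (fun r hr => by have := Real.sqrt_pos.2 (he r hr).1; positivity) hrad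
    (fun r hr => by
      refine le_trans ?_ (hmass r hr)
      have h1 : 105 * s * n / Δ * (Real.sqrt (e r) * Δ / 150)
          = 7 / 10 * (Real.sqrt (e r) * s) * n := by
        field_simp; ring
      rw [h1]
      -- `7/10 ≤ 1/√2`
      have h2 : 7 / 10 * (Real.sqrt (e r) * s) ≤ Real.sqrt (e r * εh / 2) := by
        apply Real.le_sqrt_of_sq_le
        rw [mul_pow, mul_pow, Real.sq_sqrt (he r hr).1.le, Real.sq_sqrt he0.le]
        nlinarith [mul_pos (he r hr).1 he0]
      exact mul_le_mul_of_nonneg_right h2 hn0.le)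
    (fun r hr w hw => by
      obtain ⟨hw1, hw2⟩ := hw
      have h1 := hrad r hr
      obtain ⟨hr1, hr2⟩ := hr
      rw [hAdef, Set.mem_sdiff, Metric.mem_closedBall', Metric.mem_closedBall', not_le]
      constructor <;> linarith)
  have h5 : 105 * s * n / Δ * ((1/2 - 1/25) * s * Δ - (1/4 + 1/25) * s * Δ)
      = 1785 / 100 * εh * n := by
    rw [← hss]; field_simp; norm_num
  rw [h5] at key
  nlinarith [mul_pos he0 hn0]
end

section
/- Let (X,d) be a finite metric space with n = |X| ≥ 2 and diameter Δ > 0, let u ∈ X satisfy |B(u,Δ/2)| ≤ n/2, and let ε̂ = sup{ε ∈ (0,1] : |B(u,√ε·Δ/4)| ≥ ε·n}. Then for every ε ∈ (32·ε̂, 1] and every r ∈ [(1/4+1/25)·√ε̂·Δ, (1/2−1/25)·√ε̂·Δ], setting X₁ = B(u,r) and X₂ = X ∖ X₁, the number of ordered pairs (x,y) with x ∈ X₁, y ∈ X₂ and d(x,y) ≤ √ε·Δ/150 is strictly less than ε·|X₁|·|X₂|. -/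
/-!
Write `t = √(ε/8)` and `s = √ε̂`. Since `ε/8 > 4 ε̂` we have `s ≤ t/2`, and clearly `√ε ≤ 3t`.
A close pair `(x, y)` with `x ∈ B(u,r)` therefore satisfies
`d(u,y) ≤ (23/50) s Δ + √ε Δ/150 ≤ (23/100 + 2/100) t Δ = tΔ/4`,
so `y` lies in `B(u, √(ε/8)·Δ/4)`. As `ε/8` exceeds the supremum `ε̂`, this ball has fewer than
`(ε/8) n` points, so there are fewer than `(ε/8) n |X₁|` close pairs. Finally `r ≤ Δ/2`, hence
`|X₂| ≥ n/2` and the bound follows.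
-/


/-- Claim 4 of the paper.  Let `(X,d)` be a finite metric
space with `n ≥ 2` points and diameter `Δ > 0`, let `u` satisfy
`|B(u,Δ/2)| ≤ n/2`, and let `ε̂ = sup{ε ∈ (0,1] : |B(u,√ε·Δ/4)| ≥ ε·n}`.
For every `ε ∈ (32ε̂,1]` and every `r ∈ [(1/4+1/25)·√ε̂·Δ, (1/2−1/25)·√ε̂·Δ]`,
setting `X₁ = B(u,r)` and `X₂ = X ∖ X₁`, the number of ordered pairs
`(x,y) ∈ X₁ × X₂` with `d(x,y) ≤ √ε·Δ/150` is strictly less than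
`ε·|X₁|·|X₂|`. -/
theorem big_eps_cut_bound
    {X : Type*} [MetricSpace X] [Fintype X] (hn : 2 ≤ Fintype.card X)
    (Δ : ℝ) (hΔpos : 0 < Δ)
    (hΔub : ∀ x y : X, dist x y ≤ Δ) (hΔmax : ∃ x y : X, dist x y = Δ)
    (u : X)
    (hu : (Set.ncard (Metric.closedBall u (Δ / 2)) : ℝ) ≤ (Fintype.card X : ℝ) / 2)
    (εh : ℝ)
    (hεh : εh = sSup {ε : ℝ | ε ∈ Set.Ioc (0 : ℝ) 1 ∧
      ε * (Fintype.card X : ℝ)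
        ≤ (Set.ncard (Metric.closedBall u (Real.sqrt ε * Δ / 4)) : ℝ)}) :
    ∀ ε ∈ Set.Ioc (32 * εh) 1,
      ∀ r ∈ Set.Icc ((1/4 + 1/25) * Real.sqrt εh * Δ)
          ((1/2 - 1/25) * Real.sqrt εh * Δ),
        (Set.ncard {p : X × X | p.1 ∈ Metric.closedBall u r ∧
            p.2 ∉ Metric.closedBall u r ∧
            dist p.1 p.2 ≤ Real.sqrt ε * Δ / 150} : ℝ)
          < ε * (Set.ncard (Metric.closedBall u r) : ℝ)
              * (Set.ncard ((Metric.closedBall u r)ᶜ : Set X) : ℝ) := by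
  intro ε hε r hr
  obtain ⟨hε1, hε2⟩ := hε
  obtain ⟨hr1, hr2⟩ := hr
  have h0 : 0 ≤ εh := by
    rw [hεh]; exact Real.sSup_nonneg fun x hx => hx.1.1.le
  have h1 : εh ≤ 1 := by
    rw [hεh]; exact Real.sSup_le (fun x hx => hx.1.2) zero_le_one
  have hεpos : 0 < ε := by linarith
  set s := Real.sqrt εh with hs
  have hs0 : 0 ≤ s := Real.sqrt_nonneg _
  have hs1 : s ≤ 1 := by rw [hs]; exact Real.sqrt_le_one.mpr h1
  set t := Real.sqrt (ε / 8) with ht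
  have ht0 : 0 ≤ t := Real.sqrt_nonneg _
  have hss : s ^ 2 = εh := Real.sq_sqrt h0
  have htt : t ^ 2 = ε / 8 := Real.sq_sqrt (by linarith)
  have hst : 2 * s ≤ t := Real.le_sqrt_of_sq_le (by nlinarith)
  have hεt : Real.sqrt ε ≤ 3 * t := by
    rw [Real.sqrt_le_left (by linarith)]; nlinarith
  -- `ε / 8` lies above the supremum, so its ball is small.
  have hsmall : (Set.ncard (Metric.closedBall u (t * Δ / 4)) : ℝ)
      < ε / 8 * (Fintype.card X : ℝ) := by
    by_contra! hcon
    have hle : ε / 8 ≤ εh := by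
      rw [hεh]
      exact le_csSup ⟨1, fun x hx => hx.1.2⟩ ⟨⟨by linarith, by linarith⟩, hcon⟩
    linarith
  have hpairs : (Set.ncard {p : X × X | p.1 ∈ Metric.closedBall u r ∧
        p.2 ∉ Metric.closedBall u r ∧ dist p.1 p.2 ≤ Real.sqrt ε * Δ / 150} : ℝ)
      ≤ (Set.ncard (Metric.closedBall u r) : ℝ)
        * (Set.ncard (Metric.closedBall u (t * Δ / 4)) : ℝ) := by
    rw [← Nat.cast_mul, ← Set.ncard_prod]
    refine Nat.cast_le.mpr (Set.ncard_le_ncard ?_ (Set.toFinite _))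
    rintro ⟨x, y⟩ ⟨hx, -, hxy⟩
    refine ⟨hx, ?_⟩
    simp only [Metric.mem_closedBall] at hx hxy ⊢
    have htri := dist_triangle y x u
    rw [dist_comm y x] at htri
    have h2 : 2 * s * Δ ≤ t * Δ := mul_le_mul_of_nonneg_right hst hΔpos.le
    have h3 : Real.sqrt ε * Δ ≤ 3 * t * Δ := mul_le_mul_of_nonneg_right hεt hΔpos.le
    linarith
  have hr0 : 0 ≤ r := le_trans (by positivity) hr1
  have hX1 : (0 : ℝ) < (Set.ncard (Metric.closedBall u r) : ℝ) :=
    Nat.cast_pos.mpr ((Set.ncard_pos (Set.toFinite _)).mpr ⟨u, Metric.mem_closedBall_self hr0⟩)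
  have hX1le : (Set.ncard (Metric.closedBall u r) : ℝ) ≤ (Fintype.card X : ℝ) / 2 := by
    refine le_trans (Nat.cast_le.mpr (Set.ncard_le_ncard ?_ (Set.toFinite _))) hu
    have hsΔ : s * Δ ≤ 1 * Δ := mul_le_mul_of_nonneg_right hs1 hΔpos.le
    exact Metric.closedBall_subset_closedBall (by linarith)
  have hsum : (Set.ncard (Metric.closedBall u r) : ℝ)
      + (Set.ncard ((Metric.closedBall u r)ᶜ : Set X) : ℝ) = (Fintype.card X : ℝ) := by
    rw [← Nat.card_eq_fintype_card]
    exact_mod_cast Set.ncard_add_ncard_compl (Metric.closedBall u r)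
  have hX2 : (Fintype.card X : ℝ) / 8 ≤ (Set.ncard ((Metric.closedBall u r)ᶜ : Set X) : ℝ) := by
    have : (0 : ℝ) ≤ (Fintype.card X : ℝ) := Nat.cast_nonneg _
    linarith
  calc _ ≤ _ := hpairs
    _ < (Set.ncard (Metric.closedBall u r) : ℝ) * (ε / 8 * (Fintype.card X : ℝ)) :=
      mul_lt_mul_of_pos_left hsmall hX1
    _ = ε * (Set.ncard (Metric.closedBall u r) : ℝ) * ((Fintype.card X : ℝ) / 8) := by ring
    _ ≤ _ := mul_le_mul_of_nonneg_left hX2 (by positivity)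
end

section
/- Let (W,d) be a finite pseudometric space, u ∈ W, and let n ∈ ℕ with n ≥ |W|, Λ̂ > 0, θ ≥ 0, β > 0, and ε_lim ∈ (0,1] with ε_lim ≥ |W|/(β·n). Let C = 8·√(44e) and α = √ε_lim / C. Then there exists r with θ·Λ̂ ≤ r ≤ (θ+α)·Λ̂ such that, setting Z = {w ∈ W : d(u,w) ≤ r}, for every ε ∈ (0, ε_lim] the number of ordered pairs (x,y) with x ∈ Z, y ∈ W ∖ Z and d(x,y) ≤ √ε·Λ̂/(150·C) is at most ε·|Z|·(n−|Z|)·β. -/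
/-- The paper's constant `C = 8·√(c·ĉ)` with `c = 2e`, `ĉ = 22`, i.e.
`C = 8·√(44e)`. -/
noncomputable def decomposeConst : ℝ := 8 * Real.sqrt (44 * Real.exp 1)

/-!
Write `m = |W|`, `N r = |B(u,r)|` and `ℓ = (√εlim / C) Λ`, the length of the interval of admissible
radii. A pair at distance at most `s` that is separated by `B(u,r)` lies in
`(B(u,r) ∖ B(u,r-s)) × (B(u,r+s) ∖ B(u,r))`. Since `εlim β n ≥ m`, the allowed number of pairs is at
least `(ε/εlim) N r (m - N r)`, so a radius `r` that fails for `ε` satisfies, with `K = √(ε/εlim)`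
and `s = K ℓ / 150`,
`K² N r (m - N r) < (N r - N (r-s)) (N (r+s) - N r)`.

This forces the monotone function `f = √N - √(m - N)` to increase by at least
`K √m / 3 = 50 √m s / ℓ` on `[r-s, r+s]` (`potential_gap`): it is a discrete form of the fact that
`(N')² > k² N (m - N)` makes `√N` grow at a rate of order `k √m` while `N ≤ m/2`, and makes
`√(m - N)` decrease at that rate afterwards. If every radius failed, the Vitali covering lemma
would extract disjoint intervals `[r-s, r+s]` whose lengths `2s` sum to at least `ℓ/5`, so the
total increase of `f` would be at least `5 √m` (`covering_bound`). But `f` takes values in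
`[-√m, √m]`.
-/

/-- If at every centre `r` of an interval of length `ℓ` a monotone function bounded by `V` grows by
at least `A s` on some `[r-s, r+s]`, then `A ℓ` is at most `10` times its total oscillation `2 V`.
The factor `10` is the length of an interval of radius `s` enlarged five times by Vitali's lemma. -/
theorem covering_bound (f : ℝ → ℝ) (hf : Monotone f) (V A a ℓ : ℝ) (hV : ∀ x, |f x| ≤ V)
    (hA : 0 ≤ A)
    (h : ∀ r ∈ Set.Icc a (a + ℓ), ∃ s, 0 < s ∧ A * s ≤ f (r + s) - f (r - s)) :
    A * ℓ ≤ 10 * (2 * V) := by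
  classical
  choose! s hs0 hs using h
  obtain ⟨t, ht, htc⟩ := (isCompact_Icc (a := a) (b := a + ℓ)).elim_nhds_subcover
    (fun r => Metric.ball r (s r)) (fun r hr => Metric.ball_mem_nhds r (hs0 r hr))
  obtain ⟨v, hvt, hdisj, hcov⟩ := Vitali.exists_disjoint_subfamily_covering_enlargement_closedBall
    (t : Set ℝ) id s (∑ r ∈ t, s r)
    (fun r hr => Finset.single_le_sum (f := s) (fun i hi => (hs0 i (ht i hi)).le) hr)
    5 (by norm_num)
  have hvf : v.Finite := t.finite_toSet.subset hvt
  lift v to Finset ℝ using hvf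
  have hv : ∀ r ∈ v, r ∈ Set.Icc a (a + ℓ) := fun r hr => ht r (hvt hr)
  have hlen : ℓ ≤ ∑ r ∈ v, 10 * s r := by
    have hsub : Set.Icc a (a + ℓ) ⊆ ⋃ r ∈ v, Metric.closedBall r (5 * s r) := by
      intro x hx
      obtain ⟨r, hr, hxr⟩ := Set.mem_iUnion₂.1 (htc hx)
      obtain ⟨b, hb, hrb⟩ := hcov r hr
      exact Set.mem_iUnion₂.2 ⟨b, hb, hrb (Metric.ball_subset_closedBall hxr)⟩
    have h1 := (MeasureTheory.measure_mono (μ := MeasureTheory.volume) hsub).trans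
      (MeasureTheory.measure_biUnion_finset_le v _)
    simp only [Real.volume_Icc, Real.volume_closedBall] at h1
    rw [← ENNReal.ofReal_sum_of_nonneg
      (fun r hr => by have := hs0 r (hv r hr); positivity)] at h1
    have h2 := (ENNReal.ofReal_le_ofReal_iff
      (Finset.sum_nonneg fun r hr => by have := hs0 r (hv r hr); positivity)).1 h1
    calc ℓ = a + ℓ - a := by ring
      _ ≤ _ := h2
      _ = _ := Finset.sum_congr rfl fun r _ => by ring
  -- The images `(f (r-s), f (r+s)]` of the disjoint intervals are disjoint inside `(-V, V]`.
  have hinc : ∑ r ∈ v, (f (r + s r) - f (r - s r)) ≤ 2 * V := by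
    have hd : (v : Set ℝ).PairwiseDisjoint
        (fun r => Set.Ioc (f (r - s r)) (f (r + s r))) := by
      intro x hx y hy hxy
      have hxs := hs0 x (hv x hx)
      have hys := hs0 y (hv y hy)
      have hD := hdisj hx hy hxy
      simp only [Function.onFun, id, Real.closedBall_eq_Icc] at hD ⊢
      have hsep : x + s x ≤ y - s y ∨ y + s y ≤ x - s x := by
        by_contra! hc
        have hl : max (x - s x) (y - s y) ∈ Set.Icc (x - s x) (x + s x) → _ :=
          fun hz => Set.disjoint_left.1 hD hz
        refine hl ⟨le_max_left _ _, ?_⟩ ⟨le_max_right _ _, ?_⟩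
        · exact max_le (by linarith) hc.1.le
        · exact max_le hc.2.le (by linarith)
      rw [Set.disjoint_left]
      rintro z ⟨h1, h2⟩ ⟨h3, h4⟩
      rcases hsep with h5 | h5
      · linarith [hf h5]
      · linarith [hf h5]
    have hsub : (⋃ r ∈ v, Set.Ioc (f (r - s r)) (f (r + s r))) ⊆ Set.Ioc (-V) V := by
      intro z hz
      obtain ⟨r, _, h1, h2⟩ := Set.mem_iUnion₂.1 hz
      exact ⟨(abs_le.1 (hV _)).1.trans_lt h1, h2.trans (abs_le.1 (hV _)).2⟩
    have h1 := MeasureTheory.measure_mono (μ := MeasureTheory.volume) hsub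
    rw [MeasureTheory.measure_biUnion_finset hd (fun _ _ => measurableSet_Ioc)] at h1
    simp only [Real.volume_Ioc] at h1
    rw [← ENNReal.ofReal_sum_of_nonneg (fun r hr => sub_nonneg.2
      (hf (by have := hs0 r (hv r hr); linarith)))] at h1
    have hV0 : 0 ≤ V := (abs_nonneg _).trans (hV 0)
    have h2 := (ENNReal.ofReal_le_ofReal_iff (by linarith)).1 h1
    linarith
  calc A * ℓ ≤ A * ∑ r ∈ v, 10 * s r := by gcongr
    _ = 10 * ∑ r ∈ v, A * s r := by
      rw [Finset.mul_sum, Finset.mul_sum]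
      exact Finset.sum_congr rfl fun r _ => by ring
    _ ≤ 10 * ∑ r ∈ v, (f (r + s r) - f (r - s r)) := by
      gcongr with r hr
      exact hs r (hv r hr)
    _ ≤ _ := by gcongr

/-- With `X = p₁ - p₀` and `Y = p₂ - p₁`, the bounds `p₁² - p₀² ≤ min (2 p₁ X) (p₁²)` turn the
hypothesis into `g² < Y² + 4 X Y ≤ (2 (X + Y))²`. -/
theorem root_gap (p₀ p₁ p₂ g : ℝ) (h0 : 0 ≤ p₀) (h01 : p₀ ≤ p₁) (h12 : p₁ ≤ p₂)
    (h : g ^ 2 * p₁ ^ 2 < (p₁ ^ 2 - p₀ ^ 2) * (p₂ ^ 2 - p₁ ^ 2)) : g ≤ 2 * (p₂ - p₀) := by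
  obtain ⟨X, rfl⟩ : ∃ X, p₁ = p₀ + X := ⟨p₁ - p₀, by ring⟩
  obtain ⟨Y, rfl⟩ : ∃ Y, p₂ = p₀ + X + Y := ⟨p₂ - (p₀ + X), by ring⟩
  have hX : 0 ≤ X := by linarith
  have hY : 0 ≤ Y := by linarith
  have hp : 0 < (p₀ + X) ^ 2 := by
    rcases (add_nonneg h0 hX).eq_or_lt with h' | h'
    · exfalso
      rw [← h'] at h
      have : p₀ = 0 := by linarith
      simp [this] at h
    · positivity
  have key : g ^ 2 * (p₀ + X) ^ 2 < (2 * (X + Y)) ^ 2 * (p₀ + X) ^ 2 := by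
    refine h.trans_le ?_
    have e1 : ((p₀ + X) ^ 2 - p₀ ^ 2) * Y ^ 2 ≤ (p₀ + X) ^ 2 * Y ^ 2 := by
      gcongr; nlinarith
    have e2 : ((p₀ + X) ^ 2 - p₀ ^ 2) * (2 * (p₀ + X) * Y)
        ≤ (2 * (p₀ + X) * X) * (2 * (p₀ + X) * Y) := by
      gcongr; nlinarith
    have e3 : 0 ≤ (4 * X ^ 2 + 4 * X * Y + 3 * Y ^ 2) * (p₀ + X) ^ 2 := by positivity
    nlinarith
  have := lt_of_mul_lt_mul_right key hp.le
  have := abs_le_of_sq_le_sq this.le (by positivity)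
  linarith [le_abs_self g]

/-- The increment of `√N - √(m - N)` across a failing scale. The square root of the smaller of
`N₁` and `m - N₁` carries the increase. -/
theorem potential_gap (N₀ N₁ N₂ m K : ℝ) (h0 : 0 ≤ N₀) (h01 : N₀ ≤ N₁) (h12 : N₁ ≤ N₂)
    (h2 : N₂ ≤ m) (h : K ^ 2 * (N₁ * (m - N₁)) < (N₁ - N₀) * (N₂ - N₁)) :
    K * √m / 3 ≤ (√N₂ - √(m - N₂)) - (√N₀ - √(m - N₀)) := by
  have a0 : √N₀ ≤ √N₁ := Real.sqrt_le_sqrt h01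
  have a1 : √N₁ ≤ √N₂ := Real.sqrt_le_sqrt h12
  have b0 : √(m - N₁) ≤ √(m - N₀) := Real.sqrt_le_sqrt (by linarith)
  have b1 : √(m - N₂) ≤ √(m - N₁) := Real.sqrt_le_sqrt (by linarith)
  -- `2/3` is a rational lower bound for `1/√2`.
  have hg : (2 / 3 * (K * √m)) ^ 2 = 4 / 9 * (K ^ 2 * m) := by
    rw [mul_pow, mul_pow, Real.sq_sqrt (by linarith)]; ring
  have hK := sq_nonneg K
  rcases le_total N₁ (m / 2) with hm | hm
  · have := root_gap (√N₀) (√N₁) (√N₂) (2 / 3 * (K * √m)) (Real.sqrt_nonneg _) a0 a1 (by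
      rw [hg, Real.sq_sqrt h0, Real.sq_sqrt (h0.trans h01), Real.sq_sqrt (by linarith)]
      refine lt_of_le_of_lt ?_ h
      have : K ^ 2 * (4 / 9 * m * N₁) ≤ K ^ 2 * (N₁ * (m - N₁)) := by
        refine mul_le_mul_of_nonneg_left ?_ hK
        nlinarith
      linarith)
    linarith
  · have := root_gap (√(m - N₂)) (√(m - N₁)) (√(m - N₀)) (2 / 3 * (K * √m))
      (Real.sqrt_nonneg _) b1 b0 (by
      rw [hg, Real.sq_sqrt (by linarith), Real.sq_sqrt (by linarith), Real.sq_sqrt (by linarith)]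
      have : K ^ 2 * (4 / 9 * m * (m - N₁)) ≤ K ^ 2 * (N₁ * (m - N₁)) := by
        gcongr
        · linarith
        · linarith
      linarith)
    linarith

/-- By the triangle inequality through `u`, a separated pair at distance at most `s` has its first
point in the inner annulus of width `s` and its second point in the outer one. -/
theorem cut_le {W : Type*} [PseudoMetricSpace W] [Fintype W] (u : W) (r s : ℝ) (hs : 0 ≤ s) :
    (Set.ncard {p : W × W | p.1 ∈ Metric.closedBall u r ∧ p.2 ∉ Metric.closedBall u r ∧
        dist p.1 p.2 ≤ s} : ℝ) ≤
      ((Metric.closedBall u r).ncard - (Metric.closedBall u (r - s)).ncard : ℝ) *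
        ((Metric.closedBall u (r + s)).ncard - (Metric.closedBall u r).ncard) := by
  have hsub : {p : W × W | p.1 ∈ Metric.closedBall u r ∧ p.2 ∉ Metric.closedBall u r ∧
        dist p.1 p.2 ≤ s} ⊆ (Metric.closedBall u r \ Metric.closedBall u (r - s)) ×ˢ
          (Metric.closedBall u (r + s) \ Metric.closedBall u r) := by
    rintro ⟨x, y⟩ ⟨hx, hy, hxy⟩
    simp only [Metric.mem_closedBall, not_le, Set.mem_prod, Set.mem_sdiff] at *
    have := dist_triangle_left y u x
    have h' := dist_triangle y x u
    rw [dist_comm y x] at h'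
    exact ⟨⟨hx, by linarith⟩, by linarith, hy⟩
  have h1 := Set.ncard_le_ncard hsub (Set.toFinite _)
  have e1 := Set.ncard_sdiff_add_ncard_of_subset
    (Metric.closedBall_subset_closedBall (x := u) (show r - s ≤ r by linarith)) (Set.toFinite _)
  have e2 := Set.ncard_sdiff_add_ncard_of_subset
    (Metric.closedBall_subset_closedBall (x := u) (show r ≤ r + s by linarith)) (Set.toFinite _)
  rw [Set.ncard_prod] at h1
  rw [← e1, ← e2, Nat.cast_add, Nat.cast_add, add_sub_cancel_right]
  rw [← e1] at e2 ⊢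
  push_cast
  have h1' : (_ : ℝ) ≤ _ := Nat.cast_le.2 h1
  push_cast at h1'
  linarith

/-- Lemma 5 of the paper, the `decompose` algorithm.
Given a finite pseudometric space `(W,d)`, `u ∈ W`, parameters `n ≥ |W|`,
`Λ̂ > 0`, `θ ≥ 0`, `β > 0` and `ε_lim ∈ (0,1]` with `ε_lim ≥ |W|/(β·n)`,
there is a radius `r ∈ [θ·Λ̂, (θ+α)·Λ̂]` with `α = √ε_lim/C`, `C = 8√(44e)`,
such that with `Z = B(u,r)`, for all `ε ∈ (0,ε_lim]` the number of ordered
pairs `(x,y)`, `x ∈ Z`, `y ∉ Z`, `d(x,y) ≤ √ε·Λ̂/(150C)` is at most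
`ε·|Z|·(n−|Z|)·β`. -/
theorem decompose_lemma
    {W : Type*} [PseudoMetricSpace W] [Fintype W] (u : W)
    (n : ℕ) (hn : Fintype.card W ≤ n)
    (Λ : ℝ) (hΛ : 0 < Λ) (θ : ℝ) (hθ : 0 ≤ θ) (β : ℝ) (hβ : 0 < β)
    (εlim : ℝ) (hεlim : εlim ∈ Set.Ioc (0 : ℝ) 1)
    (hW : (Fintype.card W : ℝ) / (β * (n : ℝ)) ≤ εlim) :
    ∃ r : ℝ, θ * Λ ≤ r ∧ r ≤ (θ + Real.sqrt εlim / decomposeConst) * Λ ∧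
      ∀ ε ∈ Set.Ioc (0 : ℝ) εlim,
        (Set.ncard {p : W × W | p.1 ∈ Metric.closedBall u r ∧
            p.2 ∉ Metric.closedBall u r ∧
            dist p.1 p.2 ≤ Real.sqrt ε * Λ / (150 * decomposeConst)} : ℝ)
          ≤ ε * (Set.ncard (Metric.closedBall u r) : ℝ)
              * ((n : ℝ) - (Set.ncard (Metric.closedBall u r) : ℝ)) * β := by
  by_contra! hcon
  obtain ⟨hε0, _⟩ := hεlim
  have hC : 0 < decomposeConst := by unfold decomposeConst; positivity
  set C := decomposeConst
  set m : ℝ := (Fintype.card W : ℝ) with hm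
  have hm0 : 0 < m := Nat.cast_pos.2 (Fintype.card_pos_iff.2 ⟨u⟩)
  have hmn : m ≤ n := Nat.cast_le.2 hn
  have hn0 : (0 : ℝ) < n := hm0.trans_le hmn
  set N : ℝ → ℝ := fun r => ((Metric.closedBall u r).ncard : ℝ) with hN
  have hNmono : Monotone N := fun x y hxy =>
    Nat.cast_le.2 (Set.ncard_le_ncard (Metric.closedBall_subset_closedBall hxy) (Set.toFinite _))
  have hN0 : ∀ r, 0 ≤ N r := fun r => Nat.cast_nonneg _
  have hNm : ∀ r, N r ≤ m := fun r => Nat.cast_le.2 (by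
    rw [← Nat.card_eq_fintype_card]; exact Set.ncard_le_card _)
  have hT : 0 < √εlim := Real.sqrt_pos.2 hε0
  set ℓ : ℝ := √εlim / C * Λ with hℓ
  have hℓ0 : 0 < ℓ := by positivity
  have hsm : 0 < √m := Real.sqrt_pos.2 hm0
  have hbound := covering_bound (fun r => √(N r) - √(m - N r))
    (fun x y hxy => sub_le_sub (Real.sqrt_le_sqrt (hNmono hxy))
      (Real.sqrt_le_sqrt (by linarith [hNmono hxy])))
    (√m) (50 * √m / ℓ) (θ * Λ) ℓ
    (fun x => by
      have h1 : √(N x) ≤ √m := Real.sqrt_le_sqrt (hNm x)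
      have h2 : √(m - N x) ≤ √m := Real.sqrt_le_sqrt (by linarith [hN0 x])
      have h3 := Real.sqrt_nonneg (N x)
      have h4 := Real.sqrt_nonneg (m - N x)
      exact abs_le.2 ⟨by linarith, by linarith⟩)
    (by positivity)
    (fun r hr => by
      obtain ⟨ε, ⟨hε, _⟩, hbad⟩ := hcon r hr.1 (by rw [add_mul]; exact hr.2)
      have hsε : 0 < √ε := Real.sqrt_pos.2 hε
      set s : ℝ := √ε * Λ / (150 * C) with hs
      have hs0 : 0 < s := by positivity
      refine ⟨s, hs0, ?_⟩
      have hcut := cut_le u r s hs0.le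
      have hgap := potential_gap (N (r - s)) (N r) (N (r + s)) m (√ε / √εlim) (hN0 _)
        (hNmono (by linarith)) (hNmono (by linarith)) (hNm _) (by
          refine lt_of_le_of_lt ?_ (hbad.trans_le hcut)
          change _ ≤ ε * N r * (n - N r) * β
          rw [div_pow, Real.sq_sqrt hε.le, Real.sq_sqrt hε0.le]
          -- `m - N ≤ m (n - N) / n ≤ εlim β (n - N)`, the first step because `m ≤ n`.
          have h1 : m ≤ εlim * (β * n) := (div_le_iff₀ (by positivity)).1 hW
          have h2 : (m - N r) * n ≤ (εlim * β * (n - N r)) * n := by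
            have h3 : 0 ≤ (n : ℝ) - N r := by linarith [hNm r]
            have h4 := mul_le_mul_of_nonneg_right h1 h3
            have h5 := mul_le_mul_of_nonneg_right hmn (hN0 r)
            linarith
          have h3 : m - N r ≤ εlim * β * (n - N r) := le_of_mul_le_mul_right h2 hn0
          calc ε / εlim * (N r * (m - N r))
              ≤ ε / εlim * (N r * (εlim * β * (n - N r))) := by
                have := hN0 r
                gcongr
            _ = ε * N r * (n - N r) * β := by field_simp)
      refine le_trans (le_of_eq ?_) hgap
      rw [hs, hℓ]
      field_simp
      norm_num)
  have : 50 * √m / ℓ * ℓ = 50 * √m := by field_simp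
  linarith
end

section
/- Let (X,d) be a metric space, Z ⊆ X a finite subset, χ ≥ 2, 0 < Δ < diam(Z), and v ∈ Z. Then there exists a Borel probability measure μ on the interval [Δ/4, Δ/2] such that, writing S(r) = {z ∈ Z : d(v,z) ≤ r}, for every θ ∈ (0,1) with θ ≥ 1/χ, setting η = ln(1/θ)/(16·ln χ), every x ∈ Z satisfies: μ({r : B_Z(x,ηΔ) ∩ S(r) ≠ ∅ and B_Z(x,ηΔ) ⊄ S(r)}) ≤ (1−θ)·( μ({r : B_Z(x,ηΔ) ∩ S(r) ≠ ∅}) + 2·χ^{−2} ), where B_Z(x,ρ) = {z ∈ Z : d(x,z) ≤ ρ}. -/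
/-!
The radius is drawn from the exponential law of rate `l = 8 ln χ / Δ`, truncated to
`[Δ/4, Δ/2]`. With `F t = exp (-l (t - Δ/4))` and `q = χ⁻² = F (Δ/2)`, the interval `[s, t]`
inside the support has mass `(F s - F t) / (1 - q)`.

Let `a` be the maximum of `Δ/4` and the least distance from `v` to a point of `B = B_Z(x, ηΔ)`.
For `r` in the support, the ball `S(r)` meets `B` exactly when `a ≤ r`, and cuts `B` only when
`a ≤ r ≤ a + 2ηΔ`, since every point of `B` is within `2ηΔ` of a closest one. If `a > Δ/2`, the cut
has probability zero. Otherwise, the rate being chosen so that `exp (-2 l ηΔ) = θ`, the cut has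
probability at most `(1 - θ) F a / (1 - q)`, whereas the hit has probability
`(F a - q) / (1 - q)`. The difference `q / (1 - q)` is at most `2 q` because `q ≤ 1/4`.
-/

open MeasureTheory

/-- The measure on `ℝ` with the untruncated, unshifted exponential density `K l exp (-l t)`; `K`
absorbs both the shift of the origin and the normalization of the truncated law. -/
noncomputable def expDensityMeasure (K l : ℝ) : Measure ℝ :=
  volume.withDensity fun t => ENNReal.ofReal (K * (l * Real.exp (-l * t)))

lemma expDensityMeasure_Icc {K l : ℝ} (hK : 0 ≤ K) (hl : 0 ≤ l) {s t : ℝ} (hst : s ≤ t) :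
    expDensityMeasure K l (Set.Icc s t) =
      ENNReal.ofReal (K * Real.exp (-l * s) - K * Real.exp (-l * t)) := by
  have hcont : Continuous fun t : ℝ => K * (l * Real.exp (-l * t)) := by fun_prop
  rw [expDensityMeasure, withDensity_apply _ measurableSet_Icc,
    ← ofReal_integral_eq_lintegral_ofReal hcont.continuousOn.integrableOn_Icc
      (Filter.Eventually.of_forall fun r => by positivity),
    integral_Icc_eq_integral_Ioc, ← intervalIntegral.integral_of_le hst]
  congr 1
  have hderiv : ∀ r ∈ Set.uIcc s t,
      HasDerivAt (fun r : ℝ => -(K * Real.exp (-l * r))) (K * (l * Real.exp (-l * r))) r := by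
    intro r _
    have h : HasDerivAt (fun r : ℝ => -(K * Real.exp (-l * r)))
        (-(K * (Real.exp (-l * r) * (-l * 1)))) r :=
      ((((hasDerivAt_id r).const_mul (-l)).exp).const_mul K).neg
    rwa [show -(K * (Real.exp (-l * r) * (-l * 1))) = K * (l * Real.exp (-l * r)) by ring] at h
  rw [intervalIntegral.integral_eq_sub_of_hasDerivAt hderiv (hcont.intervalIntegrable s t)]
  ring

/-- Lemma 6, quoted from [ABN06].  Let `(X,d)` be a metric
space, `Z ⊆ X` finite, `χ ≥ 2`, `0 < Δ < diam(Z)`, and `v ∈ Z`.  There is a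
Borel probability measure `μ` on `[Δ/4, Δ/2]` such that, writing
`S(r) = {z ∈ Z : d(v,z) ≤ r}` and `B = B_Z(x,ηΔ) = {z ∈ Z : d(x,z) ≤ ηΔ}`
with `η = ln(1/θ)/(16 ln χ)`, for every `θ ∈ (0,1)` with `θ ≥ 1/χ` and every
`x ∈ Z`:
`μ{r : B ∩ S(r) ≠ ∅ ∧ B ⊄ S(r)} ≤ (1−θ)·(μ{r : B ∩ S(r) ≠ ∅} + 2·χ⁻²)`. -/
theorem random_ball_cut_lemma
    {X : Type*} [MetricSpace X] (Z : Set X) (hZ : Z.Finite)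
    (χ : ℝ) (hχ : 2 ≤ χ) (Δ : ℝ) (hΔ : 0 < Δ) (hΔdiam : Δ < Metric.diam Z)
    (v : X) (hv : v ∈ Z) :
    ∃ μ : Measure ℝ, IsProbabilityMeasure μ ∧
      μ (Set.Icc (Δ / 4) (Δ / 2))ᶜ = 0 ∧
      ∀ θ : ℝ, θ ∈ Set.Ioo (0 : ℝ) 1 → 1 / χ ≤ θ → ∀ x ∈ Z,
        (μ {r : ℝ |
            ({z ∈ Z | dist x z ≤ (Real.log (1/θ) / (16 * Real.log χ)) * Δ} ∩
              {z ∈ Z | dist v z ≤ r}).Nonempty ∧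
            ¬ ({z ∈ Z | dist x z ≤ (Real.log (1/θ) / (16 * Real.log χ)) * Δ} ⊆
              {z ∈ Z | dist v z ≤ r})}).toReal
          ≤ (1 - θ) *
            ((μ {r : ℝ |
              ({z ∈ Z | dist x z ≤ (Real.log (1/θ) / (16 * Real.log χ)) * Δ} ∩
                {z ∈ Z | dist v z ≤ r}).Nonempty}).toReal + 2 / χ ^ 2) := by
  have hlogχ : 0 < Real.log χ := Real.log_pos (by linarith)
  set A : ℝ := Δ / 4 with hA
  set C : ℝ := Δ / 2 with hC
  have hAC : A ≤ C := by rw [hA, hC]; linarith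
  set q : ℝ := 1 / χ ^ 2 with hq
  have hq0 : 0 < q := by positivity
  have hq4 : q ≤ 1 / 4 := one_div_le_one_div_of_le (by norm_num) (by nlinarith)
  set l : ℝ := 8 * Real.log χ / Δ with hl
  have hl0 : 0 < l := by positivity
  set K : ℝ := Real.exp (l * A) / (1 - q) with hK
  have hK0 : 0 < K := div_pos (Real.exp_pos _) (by linarith)
  have hFA : K * Real.exp (-l * A) = 1 / (1 - q) := by
    rw [hK, div_mul_eq_mul_div, ← Real.exp_add]
    congr 1
    rw [Real.exp_eq_one_iff]
    ring
  have hFC : K * Real.exp (-l * C) = q / (1 - q) := by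
    rw [hK, div_mul_eq_mul_div, ← Real.exp_add]
    congr 1
    have h : l * A + -l * C = -(2 * Real.log χ) := by
      rw [hl, hA, hC]; field_simp; ring
    rw [h, Real.exp_neg, two_mul, Real.exp_add, Real.exp_log (by linarith), hq, one_div, sq]
  have hmass : K * Real.exp (-l * A) - K * Real.exp (-l * C) = 1 := by
    rw [hFA, hFC, ← sub_div]
    exact div_self (by linarith)
  set ν := expDensityMeasure K l with hν
  have hprob : IsProbabilityMeasure (ν.restrict (Set.Icc A C)) := ⟨by
    rw [Measure.restrict_apply_univ, hν, expDensityMeasure_Icc hK0.le hl0.le hAC, hmass,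
      ENNReal.ofReal_one]⟩
  refine ⟨ν.restrict (Set.Icc A C), hprob, ?_, ?_⟩
  · rw [Measure.restrict_apply measurableSet_Icc.compl, Set.compl_inter_self, measure_empty]
  rintro θ ⟨hθ0, hθ1⟩ - x hx
  have hlogθ : 0 < Real.log (1 / θ) := Real.log_pos (by rw [lt_div_iff₀ hθ0]; linarith)
  set ρ : ℝ := Real.log (1 / θ) / (16 * Real.log χ) * Δ with hρ
  have hρ0 : 0 < ρ := by positivity
  have hθρ : Real.exp (-l * (2 * ρ)) = θ := by
    have h : -l * (2 * ρ) = Real.log θ := by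
      rw [hl, hρ, one_div, Real.log_inv]; field_simp; ring
    rw [h, Real.exp_log hθ0]
  set B : Set X := {z ∈ Z | dist x z ≤ ρ} with hB
  have hBfin : B.Finite := hZ.subset fun z hz => hz.1
  obtain ⟨z₀, hz₀, hmin⟩ :=
    hBfin.exists_minimalFor (fun z => dist v z) B ⟨x, hx, by rw [dist_self]; exact hρ0.le⟩
  replace hmin : ∀ z ∈ B, dist v z₀ ≤ dist v z := fun z hz =>
    (le_total (dist v z₀) (dist v z)).elim id fun h => hmin hz h
  set a := max (dist v z₀) A with ha
  -- On the support `[A, C]`, the cut event is contained in `[a, a + 2ρ]`.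
  have hcut : ∀ r, A ≤ r → (B ∩ {z ∈ Z | dist v z ≤ r}).Nonempty →
      ¬ B ⊆ {z ∈ Z | dist v z ≤ r} → r ∈ Set.Icc a (a + 2 * ρ) := by
    rintro r hAr ⟨z, hzB, -, hzr⟩ hsub
    obtain ⟨w, hwB, hw⟩ := Set.not_subset.1 hsub
    have hrw : r < dist v w := lt_of_not_ge fun h => hw ⟨hwB.1, h⟩
    have h1 := dist_triangle4 v z₀ x w
    have h2 : dist z₀ x ≤ ρ := by rw [dist_comm]; exact hz₀.2
    have h3 : dist x w ≤ ρ := hwB.2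
    have h4 : dist v z₀ ≤ a := le_max_left _ _
    exact ⟨max_le ((hmin z hzB).trans hzr) hAr, by linarith⟩
  have hrhs : 0 ≤ (1 - θ) * (((ν.restrict (Set.Icc A C))
      {r : ℝ | (B ∩ {z ∈ Z | dist v z ≤ r}).Nonempty}).toReal + 2 / χ ^ 2) :=
    mul_nonneg (by linarith) (by positivity)
  rcases lt_or_ge C a with hCa | haC
  · refine le_trans (le_of_eq ?_) hrhs
    rw [Measure.restrict_apply' measurableSet_Icc, ENNReal.toReal_eq_zero_iff]
    left
    convert measure_empty (μ := ν)
    refine Set.eq_empty_of_forall_notMem ?_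
    rintro r ⟨⟨h1, h2⟩, h3⟩
    exact absurd ((hcut r h3.1 h1 h2).1.trans h3.2) (not_le.2 hCa)
  set G : ℝ := K * Real.exp (-l * a) with hG
  have hGC : K * Real.exp (-l * C) ≤ G :=
    mul_le_mul_of_nonneg_left (Real.exp_le_exp.2 (by nlinarith)) hK0.le
  have hle : ((ν.restrict (Set.Icc A C)) {r : ℝ | (B ∩ {z ∈ Z | dist v z ≤ r}).Nonempty ∧
      ¬ B ⊆ {z ∈ Z | dist v z ≤ r}}).toReal ≤ (1 - θ) * G := by
    refine ENNReal.toReal_le_of_le_ofReal (mul_nonneg (by linarith) (by positivity)) ?_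
    rw [Measure.restrict_apply' measurableSet_Icc]
    refine (measure_mono (t := Set.Icc a (a + 2 * ρ)) ?_).trans (le_of_eq ?_)
    · rintro r ⟨⟨h1, h2⟩, h3⟩
      exact hcut r h3.1 h1 h2
    · rw [hν, expDensityMeasure_Icc hK0.le hl0.le (by linarith), mul_add, Real.exp_add, hθρ, hG]
      congr 1
      ring
  have hge : G - q / (1 - q) ≤ ((ν.restrict (Set.Icc A C))
      {r : ℝ | (B ∩ {z ∈ Z | dist v z ≤ r}).Nonempty}).toReal := by
    rw [← ENNReal.ofReal_le_iff_le_toReal (measure_ne_top _ _), ← hFC, hG,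
      ← expDensityMeasure_Icc hK0.le hl0.le haC, Measure.restrict_apply' measurableSet_Icc]
    refine measure_mono fun r hr => ⟨?_, (le_max_right _ _).trans hr.1, hr.2⟩
    exact ⟨z₀, hz₀, hz₀.1, (le_max_left _ _).trans hr.1⟩
  have hqq : q / (1 - q) ≤ 2 / χ ^ 2 := by
    have h : 2 / χ ^ 2 = 2 * q := by rw [hq]; ring
    rw [h, div_le_iff₀ (by linarith)]
    nlinarith
  exact hle.trans (mul_le_mul_of_nonneg_left (by linarith) (by linarith))
end

section
/- There is a universal constant Ĉ such that the following holds. Let G be a finite connected simple graph on n ≥ 2 vertices with positive edge weights ω, and let d_G denote its shortest-path metric. Then G contains a spanning tree T such that for every ε ∈ (0,1], the number of unordered pairs of distinct vertices {u,v} with d_T(u,v) > (Ĉ/√ε)·d_G(u,v) is at most ε·n(n−1)/2. -/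
/-!
The spanning tree comes from a recursive decomposition of the vertex set, cutting one shortest path
at a time, and the bad pairs are counted cut by cut.

A cluster `X` (`ScalingTree.Cluster`) has a center `x₀`, weights `w` with `ω / 2 ≤ w ≤ ω`, and a
distinguished shortest path outside of which `w = ω`. Let `D` be the distance from `x₀` in `X` and
`R` its maximum. A shortest path `P` from `x₀` is chosen: the distinguished one if it reaches
distance `R / 2`, otherwise one to a farthest vertex. With `E v = min_i (D (P i) / 2 + d (P i, v))`,
the function `σ = D - E` is `2`-Lipschitz, shortest walks from `x₀` stay in its sublevel sets, and
shortest walks from the minimizing `P i` stay in its superlevel sets (`ScalingTree.exists_cut`). Cutting at a level `τ` between one quarter and one half of the length of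
`P`, and joining the trees of the two sides by the edge of `P` that crosses the cut, keeps the
distance in the tree from the center at most `4 D` (and at most `2 D` on the distinguished path):
the upper side is centered at the first vertex of `P` above the cut, and either it keeps the rest of
the old distinguished path or the weights along the new one are halved, which pays for the detour
(`ScalingTree.Cluster.splits_along`, `ScalingTree.Cluster.splits_across`). Each edge is halved at
most once, because a new path is halved only inside a part of the cluster that contains no vertex of the
old distinguished path. In particular the tree has diameter at most `8 R` on `X`.

The level is chosen by a growth argument (`ScalingTree.exists_sparse_level`): a Vitali covering
shows that some `τ` is sparse at all scales `η ∈ (0, 1]` at once, i.e. the band `N` of points with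
`|σ - τ| ≤ η R / 512` satisfies `#N ≤ η² #X` or `(#N)² ≤ 2 η² #A #B`, where `A` and `B` are the two
sides of the cut.

Fix `η`, call a pair bad if its stretch in the tree exceeds `16384 / η`, and heavy if moreover its
first entry has more than `η² n` bad partners. Since the tree has diameter at most `8 R`, a bad pair
whose connecting walk meets the cut is close to it, so if its first entry is heavy then the whole
pair lies in `N`, and `#N > η² n`; then the second alternative holds (`ScalingTree.card_heavy_le`).
Hence the number of heavy pairs is at most `η² (a² + b² + 2 a b) = η² (#X)²` by induction, where
`a = #A` and `b = #B` (`ScalingTree.Cluster.exists_goodTree`). Light first entries contribute at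
most another `n · η² n` pairs, and `η = √ε / 2` gives at most `ε n² / 2 ≤ ε n (n - 1)` ordered pairs.
-/

/-- The shortest-path (pseudo)distance of a weighted graph: the infimum of the
total `ω`-weight over all walks from `u` to `v`. -/
noncomputable def spDist {V : Type*} (G : SimpleGraph V) (ω : Sym2 V → ℝ)
    (u v : V) : ℝ :=
  sInf {x : ℝ | ∃ p : G.Walk u v, x = (p.edges.map ω).sum}

namespace ScalingTree

open Finset

variable {V : Type}

/-! ### Bounded walks and shortest-path distances -/

/-- `Rch H w u v ℓ`: some walk of `H` from `u` to `v` has total `w`-weight at most `ℓ`. -/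
def Rch (H : SimpleGraph V) (w : Sym2 V → ℝ) (u v : V) (ℓ : ℝ) : Prop :=
  ∃ p : H.Walk u v, (p.edges.map w).sum ≤ ℓ

/-- The subgraph of `G` induced on `X`, kept as a graph on all of `V` (vertices outside `X` are
isolated). -/
def res (G : SimpleGraph V) (X : Finset V) : SimpleGraph V where
  Adj u v := G.Adj u v ∧ u ∈ X ∧ v ∈ X
  symm := ⟨fun _ _ h => ⟨h.1.symm, h.2.2, h.2.1⟩⟩
  loopless := ⟨fun _ h => G.loopless.irrefl _ h.1⟩

lemma res_adj {G : SimpleGraph V} {X : Finset V} {u v : V} :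
    (res G X).Adj u v ↔ G.Adj u v ∧ u ∈ X ∧ v ∈ X := Iff.rfl

lemma res_mono {G : SimpleGraph V} {X Y : Finset V} (h : Y ⊆ X) : res G Y ≤ res G X :=
  fun _ _ hab => ⟨hab.1, h hab.2.1, h hab.2.2⟩

lemma res_le (G : SimpleGraph V) (X : Finset V) : res G X ≤ G := fun _ _ h => h.1

variable {H H' : SimpleGraph V} {w w' : Sym2 V → ℝ} {u v z : V} {a b : ℝ}

lemma Rch.refl (H : SimpleGraph V) (w : Sym2 V → ℝ) (u : V) {a : ℝ} (ha : 0 ≤ a) :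
    Rch H w u u a := ⟨.nil, by simpa using ha⟩

lemma Rch.mono (h : Rch H w u v a) (hab : a ≤ b) : Rch H w u v b :=
  let ⟨p, hp⟩ := h; ⟨p, hp.trans hab⟩

lemma Rch.trans (h : Rch H w u v a) (h' : Rch H w v z b) : Rch H w u z (a + b) := by
  obtain ⟨p, hp⟩ := h
  obtain ⟨q, hq⟩ := h'
  refine ⟨p.append q, ?_⟩
  simp only [SimpleGraph.Walk.edges_append, List.map_append, List.sum_append]
  linarith

lemma Rch.symm (h : Rch H w u v a) : Rch H w v u a := by
  obtain ⟨p, hp⟩ := h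
  refine ⟨p.reverse, ?_⟩
  simpa [SimpleGraph.Walk.edges_reverse, List.map_reverse, List.sum_reverse] using hp

lemma Rch.edge (h : H.Adj u v) : Rch H w u v (w s(u, v)) :=
  ⟨.cons h .nil, by simp⟩

lemma Rch.le (h : Rch H w u v a) (hH : H ≤ H') : Rch H' w u v a := by
  obtain ⟨p, hp⟩ := h
  exact ⟨p.mapLe hH, by rwa [SimpleGraph.Walk.edges_mapLe_eq_edges]⟩

lemma Rch.weight (h : Rch H w u v a) (hw : ∀ e ∈ H.edgeSet, w' e ≤ w e) : Rch H w' u v a := by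
  obtain ⟨p, hp⟩ := h
  refine ⟨p, (List.sum_le_sum fun e he => ?_).trans hp⟩
  exact hw e (p.edges_subset_edgeSet he)

lemma Rch.weight_mul {c : ℝ} (h : Rch H w u v a) (hc : 0 ≤ c)
    (hw : ∀ e ∈ H.edgeSet, w' e ≤ c * w e) : Rch H w' u v (c * a) := by
  obtain ⟨p, hp⟩ := h
  refine ⟨p, (List.sum_le_sum (g := fun e => c * w e) fun e he => ?_).trans ?_⟩
  · exact hw e (p.edges_subset_edgeSet he)
  · rw [List.sum_map_mul_left]
    exact mul_le_mul_of_nonneg_left hp hc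

lemma Rch.nonneg (h : Rch H w u v a) (hw : ∀ e ∈ H.edgeSet, 0 ≤ w e) : 0 ≤ a := by
  obtain ⟨p, hp⟩ := h
  refine le_trans (List.sum_nonneg fun x hx => ?_) hp
  obtain ⟨e, he, rfl⟩ := List.mem_map.1 hx
  exact hw e (p.edges_subset_edgeSet he)

lemma Rch.reachable (h : Rch H w u v a) : H.Reachable u v := let ⟨p, _⟩ := h; ⟨p⟩

/-- A function that varies by at most `w e` along each edge `e` varies by at most `a` between
vertices joined by a walk of weight `a`. -/
lemma Rch.lipschitz {f : V → ℝ} (hf : ∀ x y, H.Adj x y → f y ≤ f x + w s(x, y))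
    (h : Rch H w u v a) : f v ≤ f u + a := by
  obtain ⟨p, hp⟩ := h
  suffices f v ≤ f u + (p.edges.map w).sum by linarith
  clear hp
  induction p with
  | nil => simp
  | cons hadj p ih =>
    have := hf _ _ hadj
    simp only [SimpleGraph.Walk.edges_cons, List.map_cons, List.sum_cons]
    linarith

lemma Rch.mem {G : SimpleGraph V} {X : Finset V} (h : Rch (res G X) w u v a) (hu : u ∈ X) :
    v ∈ X := by
  obtain ⟨p, -⟩ := h
  induction p with
  | nil => exact hu
  | cons hadj p ih => exact ih hadj.2.2

lemma spDist_le (hw : ∀ e ∈ H.edgeSet, 0 ≤ w e) (h : Rch H w u v a) : spDist H w u v ≤ a := by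
  obtain ⟨p, hp⟩ := h
  refine le_trans (csInf_le (⟨0, ?_⟩ : BddBelow _) ⟨p, rfl⟩) hp
  rintro x ⟨q, rfl⟩
  exact Rch.nonneg ⟨q, le_rfl⟩ hw

lemma spDist_nonneg (hw : ∀ e ∈ H.edgeSet, 0 ≤ w e) : 0 ≤ spDist H w u v := by
  refine Real.sInf_nonneg ?_
  rintro x ⟨q, rfl⟩
  exact Rch.nonneg ⟨q, le_rfl⟩ hw

/-- On a finite graph with non-negative weights the infimum defining the distance is attained:
only the finitely many paths matter. -/
lemma rch_spDist [Fintype V] (hw : ∀ e ∈ H.edgeSet, 0 ≤ w e) (h : H.Reachable u v) :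
    Rch H w u v (spDist H w u v) := by
  classical
  have hfin : Finite (H.Path u v) := inferInstance
  obtain ⟨q⟩ := h
  have : Nonempty (H.Path u v) := ⟨q.toPath⟩
  obtain ⟨p, hp⟩ := Finite.exists_min (fun p : H.Path u v => (p.1.edges.map w).sum)
  refine ⟨p.1, le_csInf ⟨_, q, rfl⟩ ?_⟩
  rintro x ⟨r, rfl⟩
  refine (hp r.toPath).trans ?_
  have hs : List.Sublist r.bypass.edges r.edges := r.edges_bypass_sublist_edges
  refine (hs.map w).sum_le_sum fun x hx => ?_
  obtain ⟨e, he, rfl⟩ := List.mem_map.1 hx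
  exact hw e (r.edges_subset_edgeSet he)

lemma spDist_triangle [Fintype V] (hw : ∀ e ∈ H.edgeSet, 0 ≤ w e) (h : H.Reachable u v)
    (h' : Rch H w v z a) : spDist H w u z ≤ spDist H w u v + a :=
  spDist_le hw ((rch_spDist hw h).trans h')

/-- If every vertex lying on a walk of weight at most `a` from `u` to `v` belongs to `Y`, such a walk
survives in the subgraph induced on `Y`. -/
lemma Rch.restrict {G : SimpleGraph V} {X Y : Finset V} (h : Rch (res G X) w u v a)
    (hY : ∀ z b c, Rch (res G X) w u z b → Rch (res G X) w z v c → b + c ≤ a → z ∈ Y) :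
    Rch (res G Y) w u v a := by
  classical
  obtain ⟨p, hp⟩ := h
  have hmem : ∀ z ∈ p.support, z ∈ Y := by
    intro z hz
    refine hY z _ _ ⟨p.takeUntil z hz, le_rfl⟩ ⟨p.dropUntil z hz, le_rfl⟩ ?_
    rw [← List.sum_append, ← List.map_append, ← SimpleGraph.Walk.edges_append,
      SimpleGraph.Walk.take_spec]
    exact hp
  refine ⟨p.transfer (res G Y) ?_, by rwa [SimpleGraph.Walk.edges_transfer]⟩
  intro e he
  induction e with
  | _ x y =>
    exact ⟨(p.adj_of_mem_edges he).1, hmem _ (p.fst_mem_support_of_mem_edges he),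
      hmem _ (p.snd_mem_support_of_mem_edges he)⟩

/-! ### Geodesic sequences and the cut function -/

/-- `P 0, …, P k` is a walk of `H` starting at `x₀` along which the distance from `x₀` grows by
exactly the edge weight at each step, i.e. a shortest path from `x₀`. -/
structure Spine (H : SimpleGraph V) (w : Sym2 V → ℝ) (x₀ : V) (P : ℕ → V) (k : ℕ) : Prop where
  zero : P 0 = x₀
  adj : ∀ i < k, H.Adj (P i) (P (i + 1))
  inc : ∀ i < k, spDist H w x₀ (P (i + 1)) = spDist H w x₀ (P i) + w s(P i, P (i + 1))

lemma exists_spine [Fintype V] {x₀ t : V} (hw : ∀ e ∈ H.edgeSet, 0 ≤ w e)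
    (h : H.Reachable x₀ t) : ∃ P k, P k = t ∧ Spine H w x₀ P k := by
  have key : ∀ x (p : H.Walk x t), H.Reachable x₀ x →
      (p.edges.map w).sum ≤ spDist H w x₀ t - spDist H w x₀ x →
      ∃ (P : ℕ → V) (k : ℕ), P 0 = x ∧ P k = t ∧ (∀ i < k, H.Adj (P i) (P (i + 1))) ∧
        ∀ i < k, spDist H w x₀ (P (i + 1)) = spDist H w x₀ (P i) + w s(P i, P (i + 1)) := by
    intro x p
    induction p with
    | nil => exact fun _ _ => ⟨fun _ => _, 0, rfl, rfl, by simp, by simp⟩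
    | @cons a b c hadj p ih =>
      intro hr hp
      simp only [SimpleGraph.Walk.edges_cons, List.map_cons, List.sum_cons] at hp
      have h1 := spDist_triangle hw hr (Rch.edge (w := w) hadj)
      have h2 := spDist_triangle hw (hr.trans hadj.reachable) ⟨p, le_rfl⟩
      obtain ⟨P, k, h0, hk, hA, hI⟩ := ih h (hr.trans hadj.reachable) (by linarith)
      refine ⟨fun i => Nat.casesOn i a P, k + 1, rfl, hk, ?_, ?_⟩
      · rintro (_ | i) hi
        · simpa [h0] using hadj
        · exact hA i (by omega)
      · rintro (_ | i) hi
        · change spDist H w x₀ (P 0) = spDist H w x₀ a + w s(a, P 0)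
          rw [h0]
          linarith
        · exact hI i (by omega)
  obtain ⟨p, hp⟩ := rch_spDist hw h
  have h0 : 0 ≤ spDist H w x₀ x₀ := spDist_nonneg hw
  have h0' : spDist H w x₀ x₀ ≤ 0 := spDist_le hw (Rch.refl H w x₀ le_rfl)
  obtain ⟨P, k, h1, h2, h3, h4⟩ := key x₀ p (.refl _) (by linarith)
  exact ⟨P, k, h2, h1, h3, h4⟩

namespace Spine

variable {x₀ : V} {P : ℕ → V} {k : ℕ}

lemma mem {G : SimpleGraph V} {X : Finset V} (hP : Spine (res G X) w x₀ P k) (h0 : x₀ ∈ X) :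
    ∀ i ≤ k, P i ∈ X := by
  rintro (_ | i) hi
  · rwa [hP.zero]
  · exact (hP.adj i (by omega)).2.2

/-- The portion of the walk between the indices `i` and `i + m`, seen in any graph containing
its edges, with weights rescaled by `c`. -/
lemma rch (hP : Spine H w x₀ P k) (c : ℝ) (i m : ℕ) (h : i + m ≤ k)
    (hadj : ∀ l, i ≤ l → l < i + m →
      H'.Adj (P l) (P (l + 1)) ∧ w' s(P l, P (l + 1)) ≤ c * w s(P l, P (l + 1))) :
    Rch H' w' (P i) (P (i + m)) (c * (spDist H w x₀ (P (i + m)) - spDist H w x₀ (P i))) := by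
  induction m with
  | zero => exact Rch.refl _ _ _ (by simp)
  | succ m ih =>
    have h1 := ih (by omega) fun l h1 h2 => hadj l h1 (by omega)
    have h2 := hadj (i + m) (by omega) (by omega)
    have h3 := Rch.edge (w := w') h2.1
    refine (h1.trans h3).mono ?_
    rw [← add_assoc, hP.inc (i + m) (by omega)]
    linarith [h2.2]

lemma mono (hw : ∀ e ∈ H.edgeSet, 0 ≤ w e) (hP : Spine H w x₀ P k) {i j : ℕ} (hij : i ≤ j)
    (hj : j ≤ k) : spDist H w x₀ (P i) ≤ spDist H w x₀ (P j) := by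
  obtain ⟨m, rfl⟩ := Nat.exists_eq_add_of_le hij
  have := (hP.rch 1 i m hj (H' := H) (w' := w)
    fun l h1 h2 => ⟨hP.adj l (by omega), by simp⟩).nonneg hw
  linarith

end Spine

lemma spDist_self (hw : ∀ e ∈ H.edgeSet, 0 ≤ w e) : spDist H w u u = 0 :=
  le_antisymm (spDist_le hw (Rch.refl H w u le_rfl)) (spDist_nonneg hw)

/-- The defining properties of the cut function `σ` of a shortest path `P 0, …, P k`. With `D` the
distance from the center `x₀`, it is `σ v = D v - E v` where
`E v = min_i (D (P i) / 2 + d (P i, v))`. Sublevel sets of `σ` contain a shortest walk from `x₀` to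
each of their points, and superlevel sets contain a shortest walk from the minimizing `P i` to each
of theirs. -/
structure IsCut (G : SimpleGraph V) (w : Sym2 V → ℝ) (X : Finset V) (x₀ : V) (P : ℕ → V) (k : ℕ)
    (E σ : V → ℝ) : Prop where
  eq : ∀ v, E v = spDist (res G X) w x₀ v - σ v
  le_half : ∀ v ∈ X, σ v ≤ spDist (res G X) w x₀ v / 2
  path : ∀ i ≤ k, σ (P i) = spDist (res G X) w x₀ (P i) / 2
  lip : ∀ x y, (res G X).Adj x y → σ y ≤ σ x + 2 * w s(x, y)
  below : ∀ τ, ∀ v ∈ X, σ v < τ →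
    Rch (res G {z ∈ X | σ z < τ}) w x₀ v (spDist (res G X) w x₀ v)
  above : ∀ τ, ∀ v ∈ X, τ ≤ σ v → ∃ i ≤ k, τ ≤ spDist (res G X) w x₀ (P i) / 2 ∧
    Rch (res G {z ∈ X | τ ≤ σ z}) w (P i) v (E v - spDist (res G X) w x₀ (P i) / 2)

lemma exists_cut [Fintype V] {G : SimpleGraph V} {X : Finset V} {x₀ : V} {P : ℕ → V} {k : ℕ}
    (hw : ∀ e ∈ (res G X).edgeSet, 0 ≤ w e) (hx : x₀ ∈ X)
    (hconn : ∀ v ∈ X, (res G X).Reachable x₀ v) (hP : Spine (res G X) w x₀ P k) :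
    ∃ E σ : V → ℝ, IsCut G w X x₀ P k E σ := by
  set H := res G X with hH
  set D := spDist H w x₀ with hD
  have hPX := hP.mem hx
  have hreach : ∀ x ∈ X, ∀ y ∈ X, H.Reachable x y := fun x hx y hy =>
    (hconn x hx).symm.trans (hconn y hy)
  have hmin : ∀ v, ∃ e : ℝ, (∃ i ≤ k, e = D (P i) / 2 + spDist H w (P i) v) ∧
      ∀ i ≤ k, e ≤ D (P i) / 2 + spDist H w (P i) v := by
    intro v
    obtain ⟨i, hi, h⟩ := (range (k + 1)).exists_min_image
      (fun i => D (P i) / 2 + spDist H w (P i) v) ⟨0, by simp⟩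
    exact ⟨_, ⟨i, by simpa [Nat.lt_succ_iff] using hi, rfl⟩,
      fun j hj => h j (by simpa [Nat.lt_succ_iff] using hj)⟩
  choose E hE1 hE2 using hmin
  have hDtri : ∀ x ∈ X, ∀ y a, Rch H w x y a → D y ≤ D x + a := fun x hx y a h =>
    spDist_triangle hw (hconn x hx) h
  have hDnn : ∀ v, 0 ≤ D v := fun v => spDist_nonneg hw
  have hEtri : ∀ x ∈ X, ∀ y a, Rch H w x y a → E y ≤ E x + a := by
    intro x hx y a h
    obtain ⟨i, hi, he⟩ := hE1 x
    have := spDist_triangle hw (hreach (P i) (hPX i hi) x hx) h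
    linarith [hE2 y i hi]
  have hhalf : ∀ v ∈ X, D v / 2 ≤ E v := by
    intro v hv
    obtain ⟨i, hi, he⟩ := hE1 v
    have h1 := rch_spDist hw (hreach (P i) (hPX i hi) v hv)
    have := hDtri _ (hPX i hi) _ _ h1
    linarith [h1.nonneg hw]
  have hEP : ∀ i ≤ k, E (P i) = D (P i) / 2 := by
    intro i hi
    refine le_antisymm ?_ (hhalf _ (hPX i hi))
    have := hE2 (P i) i hi
    rwa [spDist_self hw, add_zero] at this
  refine ⟨E, fun v => D v - E v, fun v => by ring, fun v hv => by linarith [hhalf v hv],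
    fun i hi => by linarith [hEP i hi], ?_, ?_, ?_⟩
  · intro x y hxy
    have h1 := hDtri x hxy.2.1 y _ (Rch.edge (w := w) hxy)
    have h2 := hEtri y hxy.2.2 x _ (Rch.edge (w := w) hxy.symm)
    rw [Sym2.eq_swap] at h2
    linarith
  · intro τ v hv hτ
    refine (rch_spDist hw (hconn v hv)).restrict fun z b c hb hc hbc => ?_
    have hz : z ∈ X := hb.mem hx
    have h1 : D z ≤ b := spDist_le hw hb
    have h2 := hEtri z hz v _ hc
    simp only [mem_filter, hz, true_and]
    linarith
  · intro τ v hv hτ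
    obtain ⟨i, hi, he⟩ := hE1 v
    have hgen : ∀ z b c, Rch H w (P i) z b → Rch H w z v c → b + c ≤ spDist H w (P i) v →
        z ∈ X ∧ τ ≤ D z - E z := by
      intro z b c hb hc hbc
      have hz : z ∈ X := hb.mem (hPX i hi)
      have h1 := hEtri _ (hPX i hi) _ _ hb
      have h2 := hDtri z hz v _ hc
      rw [hEP i hi] at h1
      exact ⟨hz, by linarith⟩
    refine ⟨i, hi, ?_, ?_⟩
    · have := (hgen (P i) 0 _ (Rch.refl _ _ _ le_rfl)
        (rch_spDist hw (hreach (P i) (hPX i hi) v hv)) (by simp)).2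
      rw [hEP i hi] at this
      linarith
    · have hr := rch_spDist hw (hreach (P i) (hPX i hi) v hv)
      refine (hr.restrict (Y := {z ∈ X | τ ≤ D z - E z}) fun z b c hb hc hbc => ?_).mono
        (by linarith)
      simpa using hgen z b c hb hc hbc

/-! ### Choosing a sparse level -/

/-- If, for each `τ` in a finite family `F` of centers of disjoint intervals of radius `κ * η τ`,
the function `√#{s > ·}` drops by at least `η τ * q / 3` across the interval of `τ`, then the drops
add up to at most `√#{s > y}` for every `y` to the left of the family. -/
lemma sum_drop_le (X : Finset V) (s : V → ℝ) {κ q : ℝ} (hκ : 0 < κ) (η : ℝ → ℝ) (F : Finset ℝ)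
    (hη : ∀ τ ∈ F, 0 < η τ)
    (hdrop : ∀ τ ∈ F, √(#{z ∈ X | τ + κ * η τ < s z} : ℝ) + η τ * q / 3 ≤
      √(#{z ∈ X | τ - κ * η τ ≤ s z} : ℝ))
    (hdisj : (F : Set ℝ).PairwiseDisjoint fun τ => Metric.closedBall τ (κ * η τ)) :
    ∀ y, (∀ τ ∈ F, y < τ - κ * η τ) → ∑ τ ∈ F, η τ * q / 3 ≤ √(#{z ∈ X | y < s z} : ℝ) := by
  induction F using Finset.induction_on_min_value (fun τ : ℝ => τ) with
  | empty => intro y _; simp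
  | insert a F ha hmin ih =>
    intro y hy
    rw [sum_insert ha]
    have hya := hy a (mem_insert_self a F)
    have h1 := ih (fun τ h => hη τ (mem_insert_of_mem h))
      (fun τ h => hdrop τ (mem_insert_of_mem h))
      (hdisj.subset (by simp)) (a + κ * η a) ?_
    · have h2 := hdrop a (mem_insert_self a F)
      have h3 : √(#{z ∈ X | a - κ * η a ≤ s z} : ℝ) ≤ √(#{z ∈ X | y < s z} : ℝ) := by
        refine Real.sqrt_le_sqrt (Nat.cast_le.2 (card_le_card fun z hz => ?_))
        simp only [mem_filter] at hz ⊢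
        exact ⟨hz.1, hya.trans_le hz.2⟩
      linarith
    · intro b hb
      by_contra! hcon
      have hab : a ≠ b := fun h => ha (h ▸ hb)
      have hra := mul_pos hκ (hη a (mem_insert_self a F))
      have hrb := mul_pos hκ (hη b (mem_insert_of_mem hb))
      have hd := hdisj (by simp) (by simp [hb]) hab
      refine Set.disjoint_left.1 hd (?_ : min (a + κ * η a) b ∈ _) ?_
      · rw [Metric.mem_closedBall, Real.dist_eq, abs_le]
        have := hmin b hb
        constructor
        · have : a ≤ min (a + κ * η a) b := le_min (by linarith) this
          linarith
        · linarith [min_le_left (a + κ * η a) b]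
      · rw [Metric.mem_closedBall, Real.dist_eq, abs_le]
        constructor
        · have : b - κ * η b ≤ min (a + κ * η a) b := le_min (by linarith) (by linarith)
          linarith
        · linarith [min_le_right (a + κ * η a) b]

/-- Every interval of length at least `32 κ` contains a level `τ` that is sparse at all scales:
for every `η ∈ (0, 1]` the number of points with value within `κ η` of `τ` is at most `η² |X|`, or
its square is at most `η² |X|` times the number of points above `τ`.

If every level failed, at a scale `η τ` say, the Vitali covering lemma would produce finitely many
disjoint intervals of radius `κ η τ` whose fivefold enlargements cover the interval. Each of them
makes `√#{s > ·}` drop by `√|X| η τ / 3`, so `∑ η τ ≤ 3`, and the enlargements have total length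
at most `30 κ`. -/
lemma exists_sparse_level (X : Finset V) (s : V → ℝ) {κ α β : ℝ} (hκ : 0 < κ)
    (hαβ : 32 * κ ≤ β - α) : ∃ τ ∈ Set.Icc α β, ∀ η : ℝ, 0 < η → η ≤ 1 →
      (#{z ∈ X | |s z - τ| ≤ κ * η} : ℝ) ≤ η ^ 2 * #X ∨
      (#{z ∈ X | |s z - τ| ≤ κ * η} : ℝ) ^ 2 ≤ η ^ 2 * #X * #{z ∈ X | τ < s z} := by
  by_contra! hcon
  choose! η hη0 hη1 hN1 hN2 using hcon
  have hNpos : ∀ τ ∈ Set.Icc α β, 0 < #{z ∈ X | |s z - τ| ≤ κ * η τ} := by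
    intro τ hτ
    have := hN1 τ hτ
    have h : (0 : ℝ) ≤ η τ ^ 2 * #X := by positivity
    exact_mod_cast h.trans_lt this
  set q := √(#X : ℝ) with hq
  have hq2 : q ^ 2 = #X := Real.sq_sqrt (by positivity)
  have hdrop : ∀ τ ∈ Set.Icc α β, √(#{z ∈ X | τ + κ * η τ < s z} : ℝ) + η τ * q / 3 ≤
      √(#{z ∈ X | τ - κ * η τ ≤ s z} : ℝ) := by
    intro τ hτ
    set m := √(#{z ∈ X | τ + κ * η τ < s z} : ℝ) with hm
    set N : ℝ := (#{z ∈ X | |s z - τ| ≤ κ * η τ} : ℝ) with hN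
    have hm2 : m ^ 2 = #{z ∈ X | τ + κ * η τ < s z} := Real.sq_sqrt (by positivity)
    have hm0 : 0 ≤ m := Real.sqrt_nonneg _
    have hq0 : 0 ≤ q := Real.sqrt_nonneg _
    have hη := hη0 τ hτ
    have hκη := mul_pos hκ hη
    have hgt : (m ^ 2 : ℝ) ≤ #{z ∈ X | τ < s z} := by
      rw [hm2]
      refine Nat.cast_le.2 (card_le_card fun z hz => ?_)
      simp only [mem_filter] at hz ⊢
      exact ⟨hz.1, by linarith [hz.2]⟩
    have hN0 : 0 ≤ N := by positivity
    have h1 : (η τ * q) ^ 2 ≤ N := by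
      rw [mul_pow, hq2]; exact (hN1 τ hτ).le
    have h2 : η τ * q * m ≤ N := by
      refine le_of_sq_le_sq ?_ hN0
      have h3 := (hN2 τ hτ).le
      have h4 : η τ ^ 2 * #X * m ^ 2 ≤ η τ ^ 2 * #X * #{z ∈ X | τ < s z} := by gcongr
      rw [← hq2] at h3 h4
      nlinarith
    have hsplit : m ^ 2 + N ≤ #{z ∈ X | τ - κ * η τ ≤ s z} := by
      rw [hm2, hN]
      classical
      norm_cast
      rw [← card_union_of_disjoint]
      · refine card_le_card fun z hz => ?_
        simp only [mem_union, mem_filter, abs_le] at hz ⊢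
        rcases hz with hz | hz
        · exact ⟨hz.1, by linarith [hz.2]⟩
        · exact ⟨hz.1, by linarith [hz.2.1]⟩
      · rw [disjoint_left]
        intro z hz hz'
        simp only [mem_filter, abs_le] at hz hz'
        linarith [hz.2, hz'.2.2]
    refine Real.le_sqrt_of_sq_le (le_trans ?_ hsplit)
    nlinarith
  obtain ⟨U, hU, hdisj, hcov⟩ := Vitali.exists_disjoint_subfamily_covering_enlargement_closedBall
    (Set.Icc α β) (fun τ => τ) (fun τ => κ * η τ) κ
    (fun τ hτ => mul_le_of_le_one_right hκ.le (hη1 τ hτ)) 5 (by norm_num)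
  have : Nonempty V := by
    obtain ⟨z, -⟩ := card_pos.1 (hNpos α ⟨le_rfl, by linarith⟩)
    exact ⟨z⟩
  have hpt : ∀ τ ∈ U, ∃ z ∈ X, |s z - τ| ≤ κ * η τ := by
    intro τ hτ
    obtain ⟨z, hz⟩ := card_pos.1 (hNpos τ (hU hτ))
    exact ⟨z, by simpa using hz⟩
  choose! f hfX hf using hpt
  have hUfin : U.Finite := by
    refine Set.Finite.of_injOn (f := f) (t := (X : Set V)) (fun τ hτ => hfX τ hτ) ?_
      X.finite_toSet
    intro a ha b hb hab
    by_contra hne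
    refine Set.disjoint_left.1 (hdisj ha hb hne) (?_ : s (f a) ∈ _) ?_
    · simpa [Real.dist_eq] using hf a ha
    · rw [hab]; simpa [Real.dist_eq] using hf b hb
  obtain ⟨F, rfl⟩ := hUfin.exists_finset_coe
  obtain ⟨y, hy⟩ : ∃ y, ∀ τ ∈ F, y < τ - κ * η τ := by
    refine ⟨α - κ - 1, fun τ hτ => ?_⟩
    have h1 := (hU hτ).1
    have h2 := mul_le_of_le_one_right hκ.le (hη1 τ (hU hτ))
    linarith
  have hsum := sum_drop_le X s hκ η F (fun τ hτ => hη0 τ (hU hτ)) (fun τ hτ => hdrop τ (hU hτ))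
    hdisj y hy
  have hle : √(#{z ∈ X | y < s z} : ℝ) ≤ q :=
    Real.sqrt_le_sqrt (Nat.cast_le.2 (card_le_card (filter_subset _ _)))
  have hXpos : 0 < q := by
    have hα : α ∈ Set.Icc α β := ⟨le_rfl, by linarith⟩
    obtain ⟨z, hz⟩ := card_pos.1 (hNpos α hα)
    exact Real.sqrt_pos.2 (Nat.cast_pos.2 (card_pos.2 ⟨z, (mem_filter.1 hz).1⟩))
  have hS : ∑ τ ∈ F, η τ ≤ 3 := by
    rw [← sum_div, ← sum_mul] at hsum
    have : (∑ τ ∈ F, η τ) * q ≤ 3 * q := by linarith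
    exact le_of_mul_le_mul_right this hXpos
  have hvol : MeasureTheory.volume (Set.Icc α β) ≤
      ∑ τ ∈ F, MeasureTheory.volume (Metric.closedBall τ (5 * (κ * η τ))) := by
    refine (MeasureTheory.measure_mono fun τ hτ => ?_).trans
      (MeasureTheory.measure_biUnion_finset_le F _)
    obtain ⟨b, hb, hsub⟩ := hcov τ hτ
    have : τ ∈ Metric.closedBall τ (κ * η τ) :=
      Metric.mem_closedBall_self (mul_pos hκ (hη0 τ hτ)).le
    exact Set.mem_biUnion hb (hsub this)
  simp only [Real.volume_Icc, Real.volume_closedBall] at hvol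
  rw [← ENNReal.ofReal_sum_of_nonneg] at hvol
  · have h0 : ∀ τ ∈ F, 0 ≤ 2 * (5 * (κ * η τ)) := fun τ hτ =>
      by have := mul_pos hκ (hη0 τ (hU hτ)); linarith
    rw [ENNReal.ofReal_le_ofReal_iff (sum_nonneg h0)] at hvol
    have : ∑ τ ∈ F, 2 * (5 * (κ * η τ)) = 10 * κ * ∑ τ ∈ F, η τ := by
      rw [mul_sum]; exact sum_congr rfl fun τ _ => by ring
    rw [this] at hvol
    nlinarith
  · intro τ hτ
    have := mul_pos hκ (hη0 τ (hU hτ))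
    linarith

/-- The two-sided form of `exists_sparse_level`, obtained by applying it to `σ` above the median or
to `-σ` below it: the points close to the level `τ` are few, or the square of their number is
bounded by the product of the sizes of the two sides of the cut. -/
lemma exists_balanced_level (X : Finset V) (σ : V → ℝ) {κ α : ℝ} (hκ : 0 < κ) :
    ∃ τ ∈ Set.Icc α (α + 64 * κ), ∀ η : ℝ, 0 < η → η ≤ 1 →
      (#{z ∈ X | |σ z - τ| ≤ κ * η} : ℝ) ≤ η ^ 2 * #X ∨
      (#{z ∈ X | |σ z - τ| ≤ κ * η} : ℝ) ^ 2 ≤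
        2 * η ^ 2 * (#{z ∈ X | τ ≤ σ z} * #{z ∈ X | σ z < τ}) := by
  have hsplit : (#{z ∈ X | σ z < α + 32 * κ} : ℝ) + #{z ∈ X | α + 32 * κ ≤ σ z} = #X := by
    have := card_filter_add_card_filter_not (s := X) (fun z => σ z < α + 32 * κ)
    simp only [not_lt] at this
    exact_mod_cast this
  rcases le_total (#X : ℝ) (2 * #{z ∈ X | σ z < α + 32 * κ}) with h | h
  · obtain ⟨τ, hτ, H⟩ := exists_sparse_level X σ (α := α + 32 * κ) (β := α + 64 * κ) hκ
      (by linarith)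
    refine ⟨τ, ⟨by linarith [hτ.1], hτ.2⟩, fun η h0 h1 => (H η h0 h1).imp_right fun h2 => ?_⟩
    refine h2.trans ?_
    have hB : (#{z ∈ X | σ z < α + 32 * κ} : ℝ) ≤ #{z ∈ X | σ z < τ} := by
      refine Nat.cast_le.2 (card_le_card fun z hz => ?_)
      simp only [mem_filter] at hz ⊢
      exact ⟨hz.1, hz.2.trans_le hτ.1⟩
    have hA : (#{z ∈ X | τ < σ z} : ℝ) ≤ #{z ∈ X | τ ≤ σ z} := by
      refine Nat.cast_le.2 (card_le_card fun z hz => ?_)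
      simp only [mem_filter] at hz ⊢
      exact ⟨hz.1, hz.2.le⟩
    calc η ^ 2 * #X * #{z ∈ X | τ < σ z}
        ≤ η ^ 2 * (2 * #{z ∈ X | σ z < τ}) * #{z ∈ X | τ ≤ σ z} := by gcongr; linarith
      _ = _ := by ring
  · obtain ⟨τ, hτ, H⟩ := exists_sparse_level X (fun z => -σ z) (α := -(α + 32 * κ)) (β := -α) hκ
      (by linarith)
    refine ⟨-τ, ⟨by linarith [hτ.2], by linarith [hτ.1]⟩, fun η h0 h1 => ?_⟩
    have habs : ∀ z, |σ z - -τ| = |-σ z - τ| := fun z => by rw [← abs_neg]; ring_nf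
    simp only [habs]
    refine (H η h0 h1).imp_right fun h2 => h2.trans ?_
    have hA : (#{z ∈ X | α + 32 * κ ≤ σ z} : ℝ) ≤ #{z ∈ X | -τ ≤ σ z} := by
      refine Nat.cast_le.2 (card_le_card fun z hz => ?_)
      simp only [mem_filter] at hz ⊢
      exact ⟨hz.1, by linarith [hz.2, hτ.1]⟩
    have hB : (#{z ∈ X | τ < -σ z} : ℝ) = #{z ∈ X | σ z < -τ} := by
      simp only [lt_neg]
    rw [hB]
    calc η ^ 2 * #X * #{z ∈ X | σ z < -τ}
        ≤ η ^ 2 * (2 * #{z ∈ X | -τ ≤ σ z}) * #{z ∈ X | σ z < -τ} := by gcongr; linarith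
      _ = _ := by ring

/-! ### Counting badly stretched pairs -/

/-- A walk of weight `δ` between two vertices of `X` stays on one side of the cut at level `τ`, or
both of its endpoints have `σ`-value within `2 δ` of `τ`. -/
lemma crossing {G : SimpleGraph V} {ω : Sym2 V → ℝ} {X : Finset V} {σ : V → ℝ} {τ δ : ℝ}
    (hω : ∀ e ∈ (res G X).edgeSet, 0 < ω e)
    (hσ : ∀ x y, (res G X).Adj x y → σ y ≤ σ x + 2 * ω s(x, y))
    (hu : u ∈ X) (h : Rch (res G X) ω u v δ) :
    (τ ≤ σ u ∧ Rch (res G {z ∈ X | τ ≤ σ z}) ω u v δ) ∨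
    (σ u < τ ∧ Rch (res G {z ∈ X | σ z < τ}) ω u v δ) ∨
    (|σ u - τ| ≤ 2 * δ ∧ |σ v - τ| ≤ 2 * δ) := by
  obtain ⟨p, hp⟩ := h
  suffices H : (τ ≤ σ u ∧ Rch (res G {z ∈ X | τ ≤ σ z}) ω u v (p.edges.map ω).sum) ∨
      (σ u < τ ∧ Rch (res G {z ∈ X | σ z < τ}) ω u v (p.edges.map ω).sum) ∨
      (|σ u - τ| ≤ 2 * (p.edges.map ω).sum ∧ |σ v - τ| ≤ 2 * (p.edges.map ω).sum) by
    rcases H with H | H | H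
    · exact .inl ⟨H.1, H.2.mono hp⟩
    · exact .inr (.inl ⟨H.1, H.2.mono hp⟩)
    · exact .inr (.inr ⟨by linarith [H.1], by linarith [H.2]⟩)
  clear hp
  induction p with
  | @nil x =>
    rcases le_or_gt τ (σ x) with h | h
    · exact .inl ⟨h, Rch.refl _ _ _ (by simp)⟩
    · exact .inr (.inl ⟨h, Rch.refl _ _ _ (by simp)⟩)
  | @cons x y t hadj p ih =>
    simp only [SimpleGraph.Walk.edges_cons, List.map_cons, List.sum_cons]
    have h1 := hσ x y hadj
    have h2 := hσ y x hadj.symm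
    rw [Sym2.eq_swap] at h2
    have hwpos := hω s(x, y) hadj
    set L := (p.edges.map ω).sum with hL
    have hr : Rch (res G X) ω y t L := ⟨p, le_rfl⟩
    have hL0 : 0 ≤ L := hr.nonneg fun e he => (hω e he).le
    have hσ2 : ∀ x y, (res G X).Adj x y → σ y / 2 ≤ σ x / 2 + ω s(x, y) := fun x y h => by
      linarith [hσ x y h]
    have h3 := hr.lipschitz hσ2
    have h4 := hr.symm.lipschitz hσ2
    rcases ih hadj.2.2 with H | H | H
    · rcases le_or_gt τ (σ x) with h | h
      · refine .inl ⟨h, (Rch.edge ?_).trans H.2⟩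
        exact ⟨hadj.1, by simp [hadj.2.1, h], by simp [hadj.2.2, H.1]⟩
      · have ht := H.2.mem (by simp [hadj.2.2, H.1])
        rw [mem_filter] at ht
        refine .inr (.inr ⟨?_, ?_⟩) <;> rw [abs_le] <;> constructor <;> linarith [H.1, ht.2]
    · rcases le_or_gt τ (σ x) with h | h
      · have ht := H.2.mem (by simp [hadj.2.2, H.1])
        rw [mem_filter] at ht
        refine .inr (.inr ⟨?_, ?_⟩) <;> rw [abs_le] <;> constructor <;> linarith [H.1, ht.2]
      · refine .inr (.inl ⟨h, (Rch.edge ?_).trans H.2⟩)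
        exact ⟨hadj.1, by simp [hadj.2.1, h], by simp [hadj.2.2, H.1]⟩
    · simp only [abs_le] at H ⊢
      exact .inr (.inr ⟨⟨by linarith [H.1.1], by linarith [H.1.2]⟩,
        ⟨by linarith [H.2.1], by linarith [H.2.2]⟩⟩)

open Classical in
/-- The vertices `v ∈ X` that `T` separates badly from `u`: some walk from `u` to `v` inside `X` is
more than `K` times lighter than all walks in `T`. -/
noncomputable def bad (G : SimpleGraph V) (ω : Sym2 V → ℝ) (T : SimpleGraph V) (K : ℝ)
    (X : Finset V) (u : V) : Finset V :=
  {v ∈ X | ∃ δ, Rch (res G X) ω u v δ ∧ ¬ Rch T ω u v (K * δ)}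

open Classical in
/-- The bad pairs `(u, v)` whose first entry has more than `M` bad partners. -/
noncomputable def heavy (G : SimpleGraph V) (ω : Sym2 V → ℝ) (T : SimpleGraph V) (K M : ℝ)
    (X : Finset V) : Finset (V × V) :=
  {p ∈ X ×ˢ X | p.2 ∈ bad G ω T K X p.1 ∧ M < #(bad G ω T K X p.1)}

/-- If `K` is large compared to the diameter of `T` on `X`, a bad pair separated by the cut at
level `τ` has both values of `σ` within `κ η` of `τ`. A vertex having such a partner has all its bad
partners in this band `N`, hence is heavy only if `N` has more than `M` elements. All other heavy
pairs are heavy on their own side of the cut. -/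
lemma card_heavy_le {G T TA TB : SimpleGraph V} {ω : Sym2 V → ℝ} {X : Finset V} {σ : V → ℝ}
    {τ κ η K M R : ℝ} (hω : ∀ e ∈ (res G X).edgeSet, 0 < ω e)
    (hσ : ∀ x y, (res G X).Adj x y → σ y ≤ σ x + 2 * ω s(x, y))
    (hTA : TA ≤ T) (hTB : TB ≤ T) (hdiam : ∀ u ∈ X, ∀ v ∈ X, Rch T ω u v (8 * R))
    (hK : 0 < K) (hKκ : 32 * R ≤ K * (κ * η)) (hM : η ^ 2 * #X ≤ M)
    (hlev : (#{z ∈ X | |σ z - τ| ≤ κ * η} : ℝ) ≤ η ^ 2 * #X ∨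
      (#{z ∈ X | |σ z - τ| ≤ κ * η} : ℝ) ^ 2 ≤
        2 * η ^ 2 * (#{z ∈ X | τ ≤ σ z} * #{z ∈ X | σ z < τ}))
    (hA : (#(heavy G ω TA K M {z ∈ X | τ ≤ σ z}) : ℝ) ≤ η ^ 2 * #{z ∈ X | τ ≤ σ z} ^ 2)
    (hB : (#(heavy G ω TB K M {z ∈ X | σ z < τ}) : ℝ) ≤ η ^ 2 * #{z ∈ X | σ z < τ} ^ 2) :
    (#(heavy G ω T K M X) : ℝ) ≤ η ^ 2 * #X ^ 2 := by
  classical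
  set A := {z ∈ X | τ ≤ σ z} with hAdef
  set B := {z ∈ X | σ z < τ} with hBdef
  set N := {z ∈ X | |σ z - τ| ≤ κ * η} with hNdef
  have hXAB : (#X : ℝ) = #A + #B := by
    have := card_filter_add_card_filter_not (s := X) (fun z => τ ≤ σ z)
    simp only [not_le] at this
    exact_mod_cast this.symm
  have hσ2 : ∀ x y, (res G X).Adj x y → σ y / 2 ≤ σ x / 2 + ω s(x, y) := fun x y h => by
    linarith [hσ x y h]
  -- a walk witnessing a bad pair is short, since `T` has small diameter
  have hshort : ∀ u ∈ X, ∀ v ∈ bad G ω T K X u, ∃ δ, Rch (res G X) ω u v δ ∧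
      ¬ Rch T ω u v (K * δ) ∧ 4 * δ ≤ κ * η := by
    intro u hu v hv
    obtain ⟨hvX, δ, h1, h2⟩ := mem_filter.1 hv
    refine ⟨δ, h1, h2, ?_⟩
    have h3 : K * δ < 8 * R := by
      by_contra! hcon
      exact h2 ((hdiam u hu v hvX).mono hcon)
    have : K * (4 * δ) ≤ K * (κ * η) := by linarith
    exact le_of_mul_le_mul_left this hK
  have key : ∀ p ∈ heavy G ω T K M X, p ∈ heavy G ω TA K M A ∨ p ∈ heavy G ω TB K M B ∨
      (p ∈ N ×ˢ N ∧ M < #N) := by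
    rintro ⟨u, v⟩ hp
    simp only [heavy, mem_filter, mem_product] at hp
    obtain ⟨⟨hu, hv⟩, hbad, hheavy⟩ := hp
    by_cases hcr : |σ u - τ| ≤ κ * η / 2
    · right; right
      have hsub : bad G ω T K X u ⊆ N := by
        intro t ht
        obtain ⟨δ, h1, -, h3⟩ := hshort u hu t ht
        have h4 := h1.lipschitz hσ2
        have h5 := h1.symm.lipschitz hσ2
        refine mem_filter.2 ⟨(mem_filter.1 ht).1, ?_⟩
        rw [abs_le] at hcr ⊢
        constructor <;> linarith [hcr.1, hcr.2]
      have hκη : 0 ≤ κ * η := by linarith [abs_nonneg (σ u - τ)]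
      refine ⟨mem_product.2 ⟨mem_filter.2 ⟨hu, by linarith⟩, hsub hbad⟩, ?_⟩
      exact hheavy.trans_le (Nat.cast_le.2 (card_le_card hsub))
    · rcases le_or_gt τ (σ u) with h | h
      · left
        have hsub : bad G ω T K X u ⊆ bad G ω TA K A u := by
          intro t ht
          obtain ⟨δ, h1, h2, h3⟩ := hshort u hu t ht
          have huA : u ∈ A := mem_filter.2 ⟨hu, h⟩
          rcases crossing hω hσ hu h1 (τ := τ) with H | H | H
          · exact mem_filter.2 ⟨H.2.mem huA, δ, H.2, fun h' => h2 (h'.le hTA)⟩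
          · linarith [H.1]
          · exact absurd (by linarith [H.1]) hcr
        simp only [heavy, mem_filter, mem_product]
        exact ⟨⟨mem_filter.2 ⟨hu, h⟩, (mem_filter.1 (hsub hbad)).1⟩, hsub hbad,
          hheavy.trans_le (Nat.cast_le.2 (card_le_card hsub))⟩
      · right; left
        have hsub : bad G ω T K X u ⊆ bad G ω TB K B u := by
          intro t ht
          obtain ⟨δ, h1, h2, h3⟩ := hshort u hu t ht
          have huB : u ∈ B := mem_filter.2 ⟨hu, h⟩
          rcases crossing hω hσ hu h1 (τ := τ) with H | H | H
          · linarith [H.1]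
          · exact mem_filter.2 ⟨H.2.mem huB, δ, H.2, fun h' => h2 (h'.le hTB)⟩
          · exact absurd (by linarith [H.1]) hcr
        simp only [heavy, mem_filter, mem_product]
        exact ⟨⟨mem_filter.2 ⟨hu, h⟩, (mem_filter.1 (hsub hbad)).1⟩, hsub hbad,
          hheavy.trans_le (Nat.cast_le.2 (card_le_card hsub))⟩
  rw [hXAB]
  have hab : 0 ≤ η ^ 2 * ((#A : ℝ) * #B) := by positivity
  rcases hlev with hlev | hlev
  · have hsub : heavy G ω T K M X ⊆ heavy G ω TA K M A ∪ heavy G ω TB K M B := by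
      intro p hp
      rcases key p hp with h | h | h
      · exact mem_union_left _ h
      · exact mem_union_right _ h
      · linarith [h.2]
    have h1 : (#(heavy G ω T K M X) : ℝ) ≤ #(heavy G ω TA K M A) + #(heavy G ω TB K M B) := by
      exact_mod_cast (card_le_card hsub).trans (card_union_le _ _)
    nlinarith
  · have hsub : heavy G ω T K M X ⊆
        (heavy G ω TA K M A ∪ heavy G ω TB K M B) ∪ (N ×ˢ N) := by
      intro p hp
      rcases key p hp with h | h | h
      · exact mem_union_left _ (mem_union_left _ h)
      · exact mem_union_left _ (mem_union_right _ h)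
      · exact mem_union_right _ h.1
    have h1 : (#(heavy G ω T K M X) : ℝ) ≤
        #(heavy G ω TA K M A) + #(heavy G ω TB K M B) + (#N : ℝ) ^ 2 := by
      have h2 := (card_le_card hsub).trans ((card_union_le _ _).trans
        (Nat.add_le_add_right (card_union_le _ _) _))
      rw [card_product, ← sq] at h2
      exact_mod_cast h2
    nlinarith

/-! ### Clusters and their trees -/

/-- The data carried by a piece `X` of the recursive decomposition: a center `x₀`, a distinguished
shortest path `s 0, …, s k` from the center, and modified weights `w`, which agree with `ω` away from
the path and may be smaller by a factor of at most two on it. -/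
structure Cluster (G : SimpleGraph V) (ω : Sym2 V → ℝ) (X : Finset V) (x₀ : V) (w : Sym2 V → ℝ)
    (s : ℕ → V) (k : ℕ) : Prop where
  mem : x₀ ∈ X
  conn : ∀ v ∈ X, (res G X).Reachable x₀ v
  lo : ∀ e ∈ (res G X).edgeSet, ω e ≤ 2 * w e
  hi : ∀ e ∈ (res G X).edgeSet, w e ≤ ω e
  off : ∀ u v, (res G X).Adj u v → (∀ i ≤ k, v ≠ s i) → w s(u, v) = ω s(u, v)
  spine : Spine (res G X) w x₀ s k

/-- A tree spanning the cluster, in terms of edge count and reachability from the center: original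
lengths in the tree are at most four times the modified distance from the center, and at most twice
that distance for points of the distinguished path. -/
structure GoodTree (G : SimpleGraph V) (ω : Sym2 V → ℝ) (X : Finset V) (x₀ : V) (w : Sym2 V → ℝ)
    (s : ℕ → V) (k : ℕ) (T : SimpleGraph V) : Prop where
  le : T ≤ res G X
  card : T.edgeSet.ncard + 1 ≤ #X
  root : ∀ v ∈ X, Rch T ω x₀ v (4 * spDist (res G X) w x₀ v)
  path : ∀ i ≤ k, Rch T ω x₀ (s i) (2 * spDist (res G X) w x₀ (s i))

/-- `X` splits into clusters supported on `A` and `B` whose trees can always be joined to a tree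
for `X`. -/
def Splits (G : SimpleGraph V) (ω : Sym2 V → ℝ) (X : Finset V) (x₀ : V) (w : Sym2 V → ℝ)
    (s : ℕ → V) (k : ℕ) (A B : Finset V) : Prop :=
  ∃ (xB : V) (wB : Sym2 V → ℝ) (sB : ℕ → V) (kB : ℕ)
    (xA : V) (wA : Sym2 V → ℝ) (sA : ℕ → V) (kA : ℕ),
    Cluster G ω B xB wB sB kB ∧ Cluster G ω A xA wA sA kA ∧
    ∀ TA TB, GoodTree G ω A xA wA sA kA TA → GoodTree G ω B xB wB sB kB TB →
      ∃ T, TA ≤ T ∧ TB ≤ T ∧ GoodTree G ω X x₀ w s k T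

section Split

variable {G : SimpleGraph V} {ω : Sym2 V → ℝ} {X A B : Finset V} {x₀ : V} {P s : ℕ → V} {k l m : ℕ}
  {E σ : V → ℝ} {τ : ℝ}

lemma Cluster.pos (hC : Cluster G ω X x₀ w s k) (hω : ∀ e ∈ G.edgeSet, 0 < ω e) :
    ∀ e ∈ (res G X).edgeSet, 0 < w e := fun e he => by
  have h1 := hC.lo e he
  have h2 := hω e (SimpleGraph.edgeSet_mono (res_le G X) he)
  linarith

lemma exists_joined_tree [Fintype V] (hA : A ⊆ X) (hB : B ⊆ X) (hcard : #A + #B = #X) {x y : V}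
    (hx : x ∈ A) (hy : y ∈ B) (hadj : G.Adj y x) {TA TB : SimpleGraph V} (hTA : TA ≤ res G A)
    (hTB : TB ≤ res G B) (hcA : TA.edgeSet.ncard + 1 ≤ #A) (hcB : TB.edgeSet.ncard + 1 ≤ #B) :
    ∃ T, TA ≤ T ∧ TB ≤ T ∧ T ≤ res G X ∧ T.edgeSet.ncard + 1 ≤ #X ∧
      Rch T ω y x (ω s(y, x)) := by
  have hne : y ≠ x := hadj.ne
  refine ⟨TA ⊔ TB ⊔ SimpleGraph.fromEdgeSet {s(y, x)}, le_sup_left.trans le_sup_left,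
    le_sup_right.trans le_sup_left, ?_, ?_, Rch.edge (.inr ?_)⟩
  · refine sup_le (sup_le (hTA.trans (res_mono hA)) (hTB.trans (res_mono hB))) ?_
    intro a b hab
    rw [SimpleGraph.fromEdgeSet_adj, Set.mem_singleton_iff, Sym2.eq_iff] at hab
    rcases hab.1 with ⟨rfl, rfl⟩ | ⟨rfl, rfl⟩
    · exact ⟨hadj, hB hy, hA hx⟩
    · exact ⟨hadj.symm, hA hx, hB hy⟩
  · rw [SimpleGraph.edgeSet_sup, SimpleGraph.edgeSet_sup, SimpleGraph.edgeSet_fromEdgeSet]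
    have h1 := Set.ncard_union_le (TA.edgeSet ∪ TB.edgeSet) ({s(y, x)} \ {e | e.IsDiag})
    have h2 := Set.ncard_union_le TA.edgeSet TB.edgeSet
    have h3 : ({s(y, x)} \ {e | e.IsDiag} : Set (Sym2 V)).ncard ≤ 1 :=
      (Set.ncard_le_ncard Set.sdiff_subset (Set.finite_singleton _)).trans
        (Set.ncard_singleton _).le
    simp only [Sym2.diagSet] at h1 h3 ⊢
    omega
  · rw [SimpleGraph.fromEdgeSet_adj]
    exact ⟨rfl, hne⟩

/-- The tail of a shortest path, rescaled by `c`, is a shortest path from its first point in an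
induced subgraph containing it whose weights are at least `c` times the old ones. -/
lemma spine_tail [Fintype V] {wA : Sym2 V → ℝ} {c : ℝ} (hc : 0 ≤ c)
    (hw : ∀ e ∈ (res G X).edgeSet, 0 ≤ w e)
    (hconn : ∀ v ∈ X, (res G X).Reachable x₀ v) (hP : Spine (res G X) w x₀ P k)
    (hA : A ⊆ X) (hPA : ∀ i, m < i → i ≤ k → P i ∈ A)
    (hlow : ∀ e ∈ (res G A).edgeSet, c * w e ≤ wA e)
    (hpath : ∀ i, m < i → i < k → wA s(P i, P (i + 1)) = c * w s(P i, P (i + 1))) (hm : m < k) :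
    (∀ i, m + 1 + i ≤ k → spDist (res G A) wA (P (m + 1)) (P (m + 1 + i)) =
        c * (spDist (res G X) w x₀ (P (m + 1 + i)) - spDist (res G X) w x₀ (P (m + 1)))) ∧
      (∀ i, m + 1 + i ≤ k → Rch (res G A) wA (P (m + 1)) (P (m + 1 + i))
        (c * (spDist (res G X) w x₀ (P (m + 1 + i)) - spDist (res G X) w x₀ (P (m + 1))))) ∧
      Spine (res G A) wA (P (m + 1)) (fun i => P (m + 1 + i)) (k - (m + 1)) := by
  have hwA : ∀ e ∈ (res G A).edgeSet, 0 ≤ wA e := fun e he =>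
    (mul_nonneg hc (hw e (SimpleGraph.edgeSet_mono (res_mono hA) he))).trans (hlow e he)
  have hadj : ∀ i, m < i → i < k → (res G A).Adj (P i) (P (i + 1)) := fun i h1 h2 =>
    ⟨(hP.adj i h2).1, hPA i h1 h2.le, hPA (i + 1) (by omega) h2⟩
  have hrch : ∀ i, m + 1 + i ≤ k → Rch (res G A) wA (P (m + 1)) (P (m + 1 + i))
      (c * (spDist (res G X) w x₀ (P (m + 1 + i)) - spDist (res G X) w x₀ (P (m + 1)))) :=
    fun i hi => hP.rch c (m + 1) i hi fun l h1 h2 =>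
      ⟨hadj l (by omega) (by omega), (hpath l (by omega) (by omega)).le⟩
  have hdist : ∀ i, m + 1 + i ≤ k → spDist (res G A) wA (P (m + 1)) (P (m + 1 + i)) =
        c * (spDist (res G X) w x₀ (P (m + 1 + i)) - spDist (res G X) w x₀ (P (m + 1))) := by
    intro i hi
    refine le_antisymm (spDist_le hwA (hrch i hi)) ?_
    have h1 := (rch_spDist hwA (hrch i hi).reachable).lipschitz
      (f := fun v => c * spDist (res G X) w x₀ v) fun x y hxy => by
        have h2 := spDist_triangle hw (hconn x (hA hxy.2.1))
          (Rch.edge (w := w) (res_mono hA hxy))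
        have h3 := hlow s(x, y) hxy
        have h4 := mul_le_mul_of_nonneg_left h2 hc
        linarith
    linarith
  refine ⟨hdist, hrch, rfl, fun i hi => ?_, fun i hi => ?_⟩
  · exact hadj (m + 1 + i) (by omega) (by omega)
  · have h1 := hdist (i + 1) (by omega)
    have h2 := hpath (m + 1 + i) (by omega) (by omega)
    have h3 := hP.inc (m + 1 + i) (by omega)
    rw [← add_assoc] at h1 ⊢
    rw [h1, h2, hdist i (by omega), h3]
    ring

/-- The index at which the path of a cut leaves the sublevel set `{σ < τ}`. -/
lemma IsCut.exists_index (hcut : IsCut G w X x₀ P k E σ)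
    (hw : ∀ e ∈ (res G X).edgeSet, 0 ≤ w e) (hP : Spine (res G X) w x₀ P k) (hτ : 0 < τ)
    (hk : 2 * τ ≤ spDist (res G X) w x₀ (P k)) :
    ∃ m < k, (∀ i ≤ m, σ (P i) < τ) ∧ (∀ i, m < i → i ≤ k → τ ≤ σ (P i)) := by
  classical
  have hex : ∃ j, j ≤ k ∧ 2 * τ ≤ spDist (res G X) w x₀ (P j) := ⟨k, le_rfl, hk⟩
  obtain ⟨hjk, hj⟩ := Nat.find_spec hex
  rcases hfind : Nat.find hex with _ | m
  · rw [hfind, hP.zero, spDist_self hw] at hj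
    linarith
  · rw [hfind] at hjk hj
    refine ⟨m, hjk, fun i hi => ?_, fun i hi hik => ?_⟩
    · have := Nat.find_min hex (m := i) (by omega)
      rw [hcut.path i (by omega)]
      push Not at this
      linarith [this (by omega)]
    · rw [hcut.path i hik]
      linarith [hP.mono hw (i := m + 1) hi hik]

/-- The part of a cluster below the cut is again a cluster with the same center, weights and
distances, provided its distinguished path is the initial segment `s 0, …, s l`. -/
lemma Cluster.below [Fintype V] (hC : Cluster G ω X x₀ w s k) (hω : ∀ e ∈ G.edgeSet, 0 < ω e)
    (hcut : IsCut G w X x₀ P m E σ) (hτ : 0 < τ) (hl : l ≤ k) (hlB : ∀ i ≤ l, σ (s i) < τ)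
    (hlA : ∀ i, l < i → i ≤ k → τ ≤ σ (s i)) :
    (∀ v ∈ ({z ∈ X | σ z < τ} : Finset V),
      spDist (res G {z ∈ X | σ z < τ}) w x₀ v = spDist (res G X) w x₀ v) ∧
    Cluster G ω {z ∈ X | σ z < τ} x₀ w s l := by
  have hsub : ({z ∈ X | σ z < τ} : Finset V) ⊆ X := filter_subset _ _
  have hle : res G {z ∈ X | σ z < τ} ≤ res G X := res_mono hsub
  have hw : ∀ e ∈ (res G X).edgeSet, 0 ≤ w e := fun e he => (hC.pos hω e he).le
  have hwB : ∀ e ∈ (res G {z ∈ X | σ z < τ}).edgeSet, 0 ≤ w e := fun e he =>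
    hw e (SimpleGraph.edgeSet_mono hle he)
  have hx0 : σ x₀ < τ := by
    have := hcut.le_half x₀ hC.mem
    rw [spDist_self hw] at this
    linarith
  have hrch : ∀ v ∈ ({z ∈ X | σ z < τ} : Finset V),
      Rch (res G {z ∈ X | σ z < τ}) w x₀ v (spDist (res G X) w x₀ v) := fun v hv =>
    hcut.below τ v (mem_filter.1 hv).1 (mem_filter.1 hv).2
  have hdist : ∀ v ∈ ({z ∈ X | σ z < τ} : Finset V),
      spDist (res G {z ∈ X | σ z < τ}) w x₀ v = spDist (res G X) w x₀ v := fun v hv =>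
    le_antisymm (spDist_le hwB (hrch v hv))
      (spDist_le hw ((rch_spDist hwB (hrch v hv).reachable).le hle))
  have hmem := hC.spine.mem hC.mem
  have hsB : ∀ i ≤ l, s i ∈ ({z ∈ X | σ z < τ} : Finset V) := fun i hi =>
    mem_filter.2 ⟨hmem i (hi.trans hl), hlB i hi⟩
  refine ⟨hdist, mem_filter.2 ⟨hC.mem, hx0⟩, fun v hv => (hrch v hv).reachable,
    fun e he => hC.lo e (SimpleGraph.edgeSet_mono hle he),
    fun e he => hC.hi e (SimpleGraph.edgeSet_mono hle he), fun u v huv hv => ?_,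
    hC.spine.zero, fun i hi => ?_, fun i hi => ?_⟩
  · refine hC.off u v (hle huv) fun i hi h => ?_
    rcases le_or_gt i l with hil | hil
    · exact hv i hil h
    · have h1 := (mem_filter.1 huv.2.2).2
      rw [h] at h1
      linarith [hlA i hil hi]
  · exact ⟨(hC.spine.adj i (by omega)).1, hsB i hi.le, hsB (i + 1) hi⟩
  · rw [hdist _ (hsB i hi.le), hdist _ (hsB (i + 1) hi), hC.spine.inc i (by omega)]

lemma card_cut (X : Finset V) (σ : V → ℝ) (τ : ℝ) :
    #{z ∈ X | τ ≤ σ z} + #{z ∈ X | σ z < τ} = #X := by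
  have := card_filter_add_card_filter_not (s := X) (fun z => τ ≤ σ z)
  simpa only [not_le] using this

/-- Splitting along the distinguished path itself: both parts inherit the weights, and the path is
divided between them. -/
lemma Cluster.splits_along [Fintype V] (hC : Cluster G ω X x₀ w s k)
    (hω : ∀ e ∈ G.edgeSet, 0 < ω e) (hcut : IsCut G w X x₀ s k E σ) (hτ : 0 < τ)
    (h2 : 2 * τ ≤ spDist (res G X) w x₀ (s k)) (h4 : spDist (res G X) w x₀ (s k) ≤ 4 * τ) :
    Splits G ω X x₀ w s k {z ∈ X | τ ≤ σ z} {z ∈ X | σ z < τ} := by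
  have hw : ∀ e ∈ (res G X).edgeSet, 0 ≤ w e := fun e he => (hC.pos hω e he).le
  obtain ⟨m, hmk, hmB, hmA⟩ := hcut.exists_index hw hC.spine hτ h2
  obtain ⟨hdB, hCB⟩ := hC.below hω hcut hτ hmk.le hmB hmA
  have hmem := hC.spine.mem hC.mem
  have hsub : ({z ∈ X | τ ≤ σ z} : Finset V) ⊆ X := filter_subset _ _
  have hle : res G {z ∈ X | τ ≤ σ z} ≤ res G X := res_mono hsub
  have hsA : ∀ i, m < i → i ≤ k → s i ∈ ({z ∈ X | τ ≤ σ z} : Finset V) := fun i h1 h2 =>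
    mem_filter.2 ⟨hmem i h2, hmA i h1 h2⟩
  have hsB : ∀ i ≤ m, s i ∈ ({z ∈ X | σ z < τ} : Finset V) := fun i h =>
    mem_filter.2 ⟨hmem i (by omega), hmB i h⟩
  obtain ⟨hdA, hrA, hspA⟩ := spine_tail (c := 1) (wA := w) zero_le_one hw hC.conn hC.spine
    hsub hsA (by simp) (by simp) hmk
  simp only [one_mul] at hdA hrA
  set D := spDist (res G X) w x₀ with hD
  have hA : ∀ v ∈ ({z ∈ X | τ ≤ σ z} : Finset V), ∃ i ≤ k,
      Rch (res G {z ∈ X | τ ≤ σ z}) w (s (m + 1)) v (E v + D (s i) / 2 - D (s (m + 1))) := by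
    intro v hv
    obtain ⟨i, hik, hi, hr⟩ := hcut.above τ v (mem_filter.1 hv).1 (mem_filter.1 hv).2
    have him : m < i := by
      by_contra! h
      have := hmB i h
      rw [hcut.path i hik] at this
      linarith
    have h1 := hrA (i - (m + 1)) (by omega)
    rw [show m + 1 + (i - (m + 1)) = i by omega] at h1
    exact ⟨i, hik, (h1.trans hr).mono (by linarith)⟩
  have hwA : ∀ e ∈ (res G {z ∈ X | τ ≤ σ z}).edgeSet, 0 ≤ w e := fun e he =>
    hw e (SimpleGraph.edgeSet_mono hle he)
  refine ⟨x₀, w, s, m, s (m + 1), w, fun i => s (m + 1 + i), k - (m + 1), hCB, ?_, ?_⟩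
  · refine ⟨hsA (m + 1) (by omega) hmk, fun v hv => ?_,
      fun e he => hC.lo e (SimpleGraph.edgeSet_mono hle he),
      fun e he => hC.hi e (SimpleGraph.edgeSet_mono hle he), fun u v huv hv => ?_, hspA⟩
    · obtain ⟨i, -, hr⟩ := hA v hv
      exact hr.reachable
    · refine hC.off u v (hle huv) fun i hi h => ?_
      rcases le_or_gt i m with him | him
      · have h1 := (mem_filter.1 huv.2.2).2
        rw [h] at h1
        linarith [hmB i him]
      · refine hv (i - (m + 1)) (by omega) ?_
        rw [show m + 1 + (i - (m + 1)) = i by omega, h]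
  · intro TA TB hTA hTB
    obtain ⟨T, hAT, hBT, hTX, hcard, hedge⟩ := exists_joined_tree (ω := ω) hsub
      (filter_subset _ _) (card_cut X σ τ)
      (hsA (m + 1) (by omega) hmk) (hsB m le_rfl) (hC.spine.adj m hmk).1 hTA.le hTB.le hTA.card
      hTB.card
    have hinc := hC.spine.inc m hmk
    have hlo := hC.lo s(s m, s (m + 1)) (hC.spine.adj m hmk)
    have h5 := hcut.path (m + 1) hmk
    have h6 := hmA (m + 1) (by omega) hmk
    have hx : Rch T ω x₀ (s (m + 1)) (2 * D (s (m + 1))) := by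
      have h1 := (hTB.path m le_rfl).le hBT
      rw [hdB _ (hsB m le_rfl)] at h1
      exact (h1.trans hedge).mono (by linarith)
    refine ⟨T, hAT, hBT, hTX, hcard, fun v hv => ?_, fun i hi => ?_⟩
    · rcases lt_or_ge (σ v) τ with h | h
      · have h1 := (hTB.root v (mem_filter.2 ⟨hv, h⟩)).le hBT
        rwa [hdB v (mem_filter.2 ⟨hv, h⟩)] at h1
      · obtain ⟨i, hik, hr⟩ := hA v (mem_filter.2 ⟨hv, h⟩)
        have h1 := spDist_le hwA hr
        have h3 := hC.spine.mono hw hik le_rfl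
        have h7 := hcut.eq v
        refine (hx.trans ((hTA.root v (mem_filter.2 ⟨hv, h⟩)).le hAT)).mono ?_
        linarith
    · rcases le_or_gt i m with him | him
      · have h1 := (hTB.path i him).le hBT
        rwa [hdB _ (hsB i him)] at h1
      · have h1 := (hTA.path (i - (m + 1)) (by omega)).le hAT
        rw [hdA _ (by omega), show m + 1 + (i - (m + 1)) = i by omega] at h1
        exact (hx.trans h1).mono (by linarith)

open Classical in
/-- Splitting along a new shortest path, when the distinguished path stays below the cut: the part
above the cut takes the tail of the new path as its distinguished path, and the weights on it are
halved. -/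
lemma Cluster.splits_across [Fintype V] {k' : ℕ} (hC : Cluster G ω X x₀ w s k)
    (hω : ∀ e ∈ G.edgeSet, 0 < ω e) (hP : Spine (res G X) w x₀ P k')
    (hcut : IsCut G w X x₀ P k' E σ) (hτ : 0 < τ)
    (h2 : 2 * τ ≤ spDist (res G X) w x₀ (P k'))
    (hs : ∀ i ≤ k, spDist (res G X) w x₀ (s i) < 2 * τ) :
    Splits G ω X x₀ w s k {z ∈ X | τ ≤ σ z} {z ∈ X | σ z < τ} := by
  have hw : ∀ e ∈ (res G X).edgeSet, 0 ≤ w e := fun e he => (hC.pos hω e he).le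
  have hsmem := hC.spine.mem hC.mem
  have hsσ : ∀ i ≤ k, σ (s i) < τ := fun i hi => by
    linarith [hcut.le_half (s i) (hsmem i hi), hs i hi]
  obtain ⟨m, hmk, hmB, hmA⟩ := hcut.exists_index hw hP hτ h2
  obtain ⟨hdB, hCB⟩ := hC.below hω hcut hτ le_rfl hsσ (fun i h1 h2 => by omega)
  have hmem := hP.mem hC.mem
  have hsub : ({z ∈ X | τ ≤ σ z} : Finset V) ⊆ X := filter_subset _ _
  have hle : res G {z ∈ X | τ ≤ σ z} ≤ res G X := res_mono hsub
  have hPA : ∀ i, m < i → i ≤ k' → P i ∈ ({z ∈ X | τ ≤ σ z} : Finset V) := fun i h1 h2 =>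
    mem_filter.2 ⟨hmem i h2, hmA i h1 h2⟩
  have hPB : ∀ i ≤ m, P i ∈ ({z ∈ X | σ z < τ} : Finset V) := fun i h =>
    mem_filter.2 ⟨hmem i (by omega), hmB i h⟩
  have hoff : ∀ u v, (res G X).Adj u v → τ ≤ σ v → w s(u, v) = ω s(u, v) := fun u v huv hv =>
    hC.off u v huv fun i hi h => by
      rw [h] at hv
      linarith [hsσ i hi]
  have hwω : ∀ e ∈ (res G {z ∈ X | τ ≤ σ z}).edgeSet, w e = ω e := by
    intro e he
    induction e with
    | _ x y => exact hoff x y (hle he) (mem_filter.1 he.2.2).2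
  set wA : Sym2 V → ℝ := fun e =>
    if ∀ y ∈ e, ∃ i, m < i ∧ i ≤ k' ∧ P i = y then ω e / 2 else ω e with hwAdef
  have hposA : ∀ e ∈ (res G {z ∈ X | τ ≤ σ z}).edgeSet, 0 < ω e := fun e he =>
    hω e (SimpleGraph.edgeSet_mono (res_le _ _) he)
  have hlo : ∀ e ∈ (res G {z ∈ X | τ ≤ σ z}).edgeSet, ω e ≤ 2 * wA e := by
    intro e he
    have := hposA e he
    simp only [hwAdef]
    split_ifs <;> linarith
  have hhi : ∀ e ∈ (res G {z ∈ X | τ ≤ σ z}).edgeSet, wA e ≤ ω e := by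
    intro e he
    have := hposA e he
    simp only [hwAdef]
    split_ifs <;> linarith
  obtain ⟨hdA, hrA, hspA⟩ := spine_tail (c := 1 / 2) (wA := wA) (by norm_num) hw hC.conn hP
    hsub hPA (fun e he => by rw [hwω e he]; linarith [hlo e he]) (fun i h1 h2 => by
      have h3 : ∀ y ∈ s(P i, P (i + 1)), ∃ i, m < i ∧ i ≤ k' ∧ P i = y := by
        intro y hy
        rcases Sym2.mem_iff.1 hy with rfl | rfl
        · exact ⟨i, h1, h2.le, rfl⟩
        · exact ⟨i + 1, by omega, h2, rfl⟩
      simp only [hwAdef]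
      rw [if_pos h3, hoff _ _ (hP.adj i h2) (hmA (i + 1) (by omega) h2)]
      ring) hmk
  set D := spDist (res G X) w x₀ with hD
  have hA : ∀ v ∈ ({z ∈ X | τ ≤ σ z} : Finset V),
      Rch (res G {z ∈ X | τ ≤ σ z}) wA (P (m + 1)) v (E v - D (P (m + 1)) / 2) := by
    intro v hv
    obtain ⟨i, hik, hi, hr⟩ := hcut.above τ v (mem_filter.1 hv).1 (mem_filter.1 hv).2
    have him : m < i := by
      by_contra! h
      have := hmB i h
      rw [hcut.path i hik] at this
      linarith
    have h1 := hrA (i - (m + 1)) (by omega)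
    rw [show m + 1 + (i - (m + 1)) = i by omega] at h1
    have h2 := hr.weight (w' := wA) fun e he => (hhi e he).trans (hwω e he).ge
    exact (h1.trans h2).mono (by linarith)
  have hwA : ∀ e ∈ (res G {z ∈ X | τ ≤ σ z}).edgeSet, 0 ≤ wA e := fun e he => by
    linarith [hlo e he, hposA e he]
  refine ⟨x₀, w, s, k, P (m + 1), wA, fun i => P (m + 1 + i), k' - (m + 1), hCB, ?_, ?_⟩
  · refine ⟨hPA (m + 1) (by omega) hmk, fun v hv => (hA v hv).reachable, hlo, hhi,
      fun u v huv hv => ?_, hspA⟩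
    simp only [hwAdef]
    refine if_neg fun h => ?_
    obtain ⟨i, h1, h2, h3⟩ := h v (Sym2.mem_mk_right u v)
    refine hv (i - (m + 1)) (by omega) ?_
    rw [show m + 1 + (i - (m + 1)) = i by omega, h3]
  · intro TA TB hTA hTB
    obtain ⟨T, hAT, hBT, hTX, hcard, hedge⟩ := exists_joined_tree (ω := ω) hsub
      (filter_subset _ _) (card_cut X σ τ)
      (hPA (m + 1) (by omega) hmk) (hPB m le_rfl) (hP.adj m hmk).1 hTA.le hTB.le hTA.card
      hTB.card
    have hinc := hP.inc m hmk
    have h5 := hcut.path (m + 1) hmk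
    have h6 := hmA (m + 1) (by omega) hmk
    have h7 := hcut.path m hmk.le
    have h8 := hmB m le_rfl
    rw [hoff _ _ (hP.adj m hmk) h6] at hinc
    have hx : Rch T ω x₀ (P (m + 1)) (3 * D (P m) + D (P (m + 1))) := by
      have h1 := (hTB.root (P m) (hPB m le_rfl)).le hBT
      rw [hdB _ (hPB m le_rfl)] at h1
      exact (h1.trans hedge).mono (by linarith)
    refine ⟨T, hAT, hBT, hTX, hcard, fun v hv => ?_, fun i hi => ?_⟩
    · rcases lt_or_ge (σ v) τ with h | h
      · have h1 := (hTB.root v (mem_filter.2 ⟨hv, h⟩)).le hBT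
        rwa [hdB v (mem_filter.2 ⟨hv, h⟩)] at h1
      · have h1 := spDist_le hwA (hA v (mem_filter.2 ⟨hv, h⟩))
        have h9 := hcut.eq v
        refine (hx.trans ((hTA.root v (mem_filter.2 ⟨hv, h⟩)).le hAT)).mono ?_
        linarith
    · have h1 := (hTB.path i hi).le hBT
      rwa [hdB _ (mem_filter.2 ⟨hsmem i hi, hsσ i hi⟩)] at h1

end Split

/-! ### The recursive construction -/

lemma Cluster.spDist_pos [Fintype V] {G : SimpleGraph V} {ω : Sym2 V → ℝ} {X : Finset V} {x₀ : V}
    {s : ℕ → V} {k : ℕ} (hC : Cluster G ω X x₀ w s k) (hω : ∀ e ∈ G.edgeSet, 0 < ω e)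
    (hv : v ∈ X) (hne : v ≠ x₀) : 0 < spDist (res G X) w x₀ v := by
  have hw : ∀ e ∈ (res G X).edgeSet, 0 ≤ w e := fun e he => (hC.pos hω e he).le
  obtain ⟨p, hp⟩ := rch_spDist hw (hC.conn v hv)
  refine lt_of_lt_of_le ?_ hp
  cases p with
  | nil => exact absurd rfl hne
  | @cons _ y _ h p =>
    have h1 := hC.pos hω s(x₀, y) h
    have h2 : 0 ≤ (p.edges.map w).sum := Rch.nonneg ⟨p, le_rfl⟩ hw
    simp only [SimpleGraph.Walk.edges_cons, List.map_cons, List.sum_cons]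
    linarith

/-- A cluster with at least two vertices and radius `R` splits at a level that is sparse at every
scale up to `R / 512`. The cut follows the distinguished path if that path reaches half of the
radius, and a shortest path to a farthest vertex otherwise. -/
lemma Cluster.exists_split [Fintype V] {G : SimpleGraph V} {ω : Sym2 V → ℝ} {X : Finset V} {x₀ : V}
    {s : ℕ → V} {k : ℕ} (hC : Cluster G ω X x₀ w s k) (hω : ∀ e ∈ G.edgeSet, 0 < ω e)
    (hX : 2 ≤ #X) : ∃ (σ : V → ℝ) (τ R : ℝ),
      (∀ v ∈ X, spDist (res G X) w x₀ v ≤ R) ∧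
      (∀ x y, (res G X).Adj x y → σ y ≤ σ x + 2 * w s(x, y)) ∧
      (∀ η : ℝ, 0 < η → η ≤ 1 → (#{z ∈ X | |σ z - τ| ≤ R / 512 * η} : ℝ) ≤ η ^ 2 * #X ∨
        (#{z ∈ X | |σ z - τ| ≤ R / 512 * η} : ℝ) ^ 2 ≤
          2 * η ^ 2 * (#{z ∈ X | τ ≤ σ z} * #{z ∈ X | σ z < τ})) ∧
      Splits G ω X x₀ w s k {z ∈ X | τ ≤ σ z} {z ∈ X | σ z < τ} := by
  have hw : ∀ e ∈ (res G X).edgeSet, 0 ≤ w e := fun e he => (hC.pos hω e he).le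
  obtain ⟨t, ht, hmax⟩ := X.exists_max_image (fun v => spDist (res G X) w x₀ v) ⟨x₀, hC.mem⟩
  obtain ⟨v, hv, hne⟩ := exists_mem_ne (by omega : 1 < #X) x₀
  have hR : 0 < spDist (res G X) w x₀ t := (hC.spDist_pos hω hv hne).trans_le (hmax v hv)
  set R := spDist (res G X) w x₀ t with hRdef
  rcases le_or_gt R (2 * spDist (res G X) w x₀ (s k)) with hcase | hcase
  · obtain ⟨E, σ, hcut⟩ := exists_cut hw hC.mem hC.conn hC.spine
    obtain ⟨τ, hτ, hlev⟩ := exists_balanced_level X σ (κ := R / 512)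
      (α := spDist (res G X) w x₀ (s k) / 4) (by linarith)
    have h1 := hτ.1
    have h2 := hτ.2
    exact ⟨σ, τ, R, hmax, hcut.lip, hlev, hC.splits_along hω hcut (by linarith) (by linarith)
      (by linarith)⟩
  · obtain ⟨P, k', hPt, hP⟩ := exists_spine hw (hC.conn t ht)
    obtain ⟨E, σ, hcut⟩ := exists_cut hw hC.mem hC.conn hP
    obtain ⟨τ, hτ, hlev⟩ := exists_balanced_level X σ (κ := R / 512) (α := R / 4) (by linarith)
    have h1 := hτ.1
    have h2 := hτ.2
    refine ⟨σ, τ, R, hmax, hcut.lip, hlev, hC.splits_across hω hP hcut (by linarith) ?_ ?_⟩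
    · rw [hPt]; linarith
    · intro i hi
      linarith [hC.spine.mono hw hi le_rfl]

/-- Every cluster has a good tree in which, at each scale `η`, at most `η² |X|²` pairs are heavy.
The constant `16384 = 32 * 512` makes bad witnesses crossing a cut of a cluster of radius `R` short
compared to the scale `η R / 512`. -/
theorem Cluster.exists_goodTree [Fintype V] {G : SimpleGraph V} {ω : Sym2 V → ℝ}
    (hω : ∀ e ∈ G.edgeSet, 0 < ω e) {X : Finset V} {x₀ : V} {w : Sym2 V → ℝ} {s : ℕ → V} {k : ℕ}
    (hC : Cluster G ω X x₀ w s k) :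
    ∃ T, GoodTree G ω X x₀ w s k T ∧ ∀ η : ℝ, 0 < η → η ≤ 1 → ∀ M : ℝ, η ^ 2 * #X ≤ M →
      (#(heavy G ω T (16384 / η) M X) : ℝ) ≤ η ^ 2 * #X ^ 2 := by
  induction hn : #X using Nat.strong_induction_on generalizing X x₀ w s k with
  | _ n ih =>
  subst hn
  have hw : ∀ e ∈ (res G X).edgeSet, 0 ≤ w e := fun e he => (hC.pos hω e he).le
  rcases Nat.lt_or_ge #X 2 with hX | hX
  · have hX1 : #X = 1 := by
      have := card_pos.2 ⟨x₀, hC.mem⟩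
      omega
    have hall : ∀ v ∈ X, v = x₀ := fun v hv => card_le_one.1 hX1.le v hv x₀ hC.mem
    refine ⟨⊥, ⟨bot_le, by simp [hX1], fun v hv => ?_, fun i hi => ?_⟩, fun η h0 h1 M hM => ?_⟩
    · rw [hall v hv]
      exact Rch.refl _ _ _ (mul_nonneg (by norm_num) (spDist_nonneg hw))
    · rw [hall (s i) (hC.spine.mem hC.mem i hi)]
      exact Rch.refl _ _ _ (mul_nonneg (by norm_num) (spDist_nonneg hw))
    · have hempty : heavy G ω ⊥ (16384 / η) M X = ∅ := by
        classical
        refine eq_empty_of_forall_notMem fun p hp => ?_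
        obtain ⟨hp, hb, -⟩ := mem_filter.1 hp
        obtain ⟨hu, hv⟩ := mem_product.1 hp
        obtain ⟨-, δ, hδ, hnot⟩ := mem_filter.1 hb
        refine hnot ?_
        rw [hall _ hu, hall _ hv]
        have : 0 ≤ δ := hδ.nonneg fun e he =>
          (hω e (SimpleGraph.edgeSet_mono (res_le _ _) he)).le
        exact Rch.refl _ _ _ (by positivity)
      rw [hempty]
      simp only [card_empty, Nat.cast_zero]
      positivity
  · obtain ⟨σ, τ, R, hR, hlip, hlev, xB, wB, sB, kB, xA, wA, sA, kA, hCB, hCA, hjoin⟩ :=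
      hC.exists_split hω hX
    have hcard := card_cut X σ τ
    have hApos := card_pos.2 ⟨xA, hCA.mem⟩
    have hBpos := card_pos.2 ⟨xB, hCB.mem⟩
    obtain ⟨TA, hTA, hA⟩ := ih _ (by omega) hCA rfl
    obtain ⟨TB, hTB, hB⟩ := ih _ (by omega) hCB rfl
    obtain ⟨T, hAT, hBT, hT⟩ := hjoin TA TB hTA hTB
    refine ⟨T, hT, fun η h0 h1 M hM => ?_⟩
    have hAle : (#{z ∈ X | τ ≤ σ z} : ℝ) ≤ #X := by exact_mod_cast (by omega)
    have hBle : (#{z ∈ X | σ z < τ} : ℝ) ≤ #X := by exact_mod_cast (by omega)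
    have hη2 : 0 ≤ η ^ 2 := sq_nonneg η
    refine card_heavy_le (κ := R / 512) (R := R)
      (fun e he => hω e (SimpleGraph.edgeSet_mono (res_le _ _) he)) (fun x y hxy => ?_) hAT hBT
      (fun u hu v hv => ?_) (by positivity) ?_ hM (hlev η h0 h1)
      (hA η h0 h1 M ((mul_le_mul_of_nonneg_left hAle hη2).trans hM))
      (hB η h0 h1 M ((mul_le_mul_of_nonneg_left hBle hη2).trans hM))
    · linarith [hlip x y hxy, hC.hi s(x, y) hxy]
    · exact ((hT.root u hu).symm.trans (hT.root v hv)).mono (by linarith [hR u hu, hR v hv])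
    · refine le_of_eq ?_
      field_simp
      ring

/-- The whole graph is a cluster with weights `ω` and a trivial distinguished path; its good tree is
connected and has at most `n - 1` edges, hence is a spanning tree. -/
lemma exists_tree [Fintype V] {G : SimpleGraph V} (hG : G.Connected) {ω : Sym2 V → ℝ}
    (hω : ∀ e ∈ G.edgeSet, 0 < ω e) :
    ∃ T ≤ G, T.IsTree ∧ ∀ η : ℝ, 0 < η → η ≤ 1 →
      (#(heavy G ω T (16384 / η) (η ^ 2 * Fintype.card V) univ) : ℝ) ≤
        η ^ 2 * (Fintype.card V : ℝ) ^ 2 := by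
  have hres : res G univ = G := by
    ext a b
    simp [res_adj]
  obtain ⟨x₀⟩ := hG.nonempty
  have hC : Cluster G ω univ x₀ ω (fun _ => x₀) 0 := by
    refine ⟨mem_univ _, fun v _ => ?_, fun e he => ?_, fun _ _ => le_rfl, fun _ _ _ _ => rfl,
      rfl, by simp, by simp⟩
    · rw [hres]
      exact hG.preconnected x₀ v
    · rw [hres] at he
      linarith [hω e he]
  obtain ⟨T, hT, hcount⟩ := hC.exists_goodTree hω
  have hTG : T ≤ G := hT.le.trans (res_le _ _)
  have hconn : T.Connected :=
    { preconnected := fun u v =>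
        (hT.root u (mem_univ _)).reachable.symm.trans (hT.root v (mem_univ _)).reachable
      nonempty := ⟨x₀⟩ }
  refine ⟨T, hTG, ?_, fun η h0 h1 => hcount η h0 h1 _ (by simp)⟩
  rw [SimpleGraph.isTree_iff_connected_and_card]
  refine ⟨hconn, le_antisymm ?_ hconn.card_vert_le_card_edgeSet_add_one⟩
  rw [Nat.card_eq_fintype_card (α := V)]
  exact hT.card

lemma not_rch_of_lt {T : SimpleGraph V} {ω : Sym2 V → ℝ} {G : SimpleGraph V} {K : ℝ} (hK : 0 < K)
    (hG : G.Connected) (hω : ∀ e ∈ T.edgeSet, 0 ≤ ω e)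
    (h : K * spDist G ω u v < spDist T ω u v) :
    ∃ δ, Rch G ω u v δ ∧ ¬ Rch T ω u v (K * δ) := by
  have hne : {x : ℝ | ∃ p : G.Walk u v, x = (p.edges.map ω).sum}.Nonempty := by
    obtain ⟨p⟩ := hG.preconnected u v
    exact ⟨_, p, rfl⟩
  have h1 : spDist G ω u v < spDist T ω u v / K := by rwa [lt_div_iff₀' hK]
  obtain ⟨δ, ⟨p, rfl⟩, hlt⟩ := exists_lt_of_csInf_lt hne h1
  refine ⟨_, ⟨p, le_rfl⟩, fun hr => ?_⟩
  rw [lt_div_iff₀' hK] at hlt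
  exact absurd (spDist_le hω hr) (not_le.2 hlt)

lemma mem_bad_univ [Fintype V] {G T : SimpleGraph V} {ω : Sym2 V → ℝ} {K : ℝ} (hK : 0 < K)
    (hG : G.Connected) (hω : ∀ e ∈ T.edgeSet, 0 ≤ ω e)
    (h : K * spDist G ω u v < spDist T ω u v) : v ∈ bad G ω T K univ u := by
  classical
  have hres : res G univ = G := by
    ext a b
    simp [res_adj]
  refine mem_filter.2 ⟨mem_univ _, ?_⟩
  rw [hres]
  exact not_rch_of_lt hK hG hω h

/-- Bad pairs are heavy, or one of the at most `M` bad partners of their first entry. -/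
lemma card_bad_le [Fintype V] (G : SimpleGraph V) (ω : Sym2 V → ℝ) (T : SimpleGraph V) {K M : ℝ}
    (hM : 0 ≤ M) (S : Set (V × V)) (hS : ∀ p ∈ S, p.2 ∈ bad G ω T K univ p.1) :
    (S.ncard : ℝ) ≤ #(heavy G ω T K M univ) + Fintype.card V * M := by
  classical
  set L : Finset (V × V) := {u : V | (#(bad G ω T K univ u) : ℝ) ≤ M}.toFinset.biUnion
    fun u => (bad G ω T K univ u).image fun v => (u, v) with hL
  have hsub : S ⊆ ((heavy G ω T K M univ ∪ L : Finset (V × V)) : Set (V × V)) := by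
    rintro ⟨u, v⟩ hp
    have hb := hS _ hp
    rw [mem_coe, mem_union]
    rcases le_or_gt (#(bad G ω T K univ u) : ℝ) M with h | h
    · right
      simp only [hL, mem_biUnion, mem_image]
      exact ⟨u, by simpa using h, v, hb, rfl⟩
    · left
      simp only [heavy, mem_filter, mem_product]
      exact ⟨⟨mem_univ _, mem_univ _⟩, hb, h⟩
  have h1 : S.ncard ≤ #(heavy G ω T K M univ) + #L := by
    refine (Set.ncard_le_ncard hsub (finite_toSet _)).trans ?_
    rw [Set.ncard_coe_finset]
    exact card_union_le _ _
  have h2 : (#L : ℝ) ≤ Fintype.card V * M := by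
    have h3 : (#L : ℝ) ≤ ∑ u ∈ {u : V | (#(bad G ω T K univ u) : ℝ) ≤ M}.toFinset,
        (#((bad G ω T K univ u).image fun v => (u, v)) : ℝ) := by
      exact_mod_cast card_biUnion_le
    refine h3.trans ((sum_le_sum (g := fun _ => M) fun u hu => ?_).trans ?_)
    · refine le_trans (Nat.cast_le.2 card_image_le) ?_
      simpa using hu
    · rw [sum_const, nsmul_eq_mul]
      exact mul_le_mul_of_nonneg_right (Nat.cast_le.2 (card_le_univ _)) hM
  have h4 : (S.ncard : ℝ) ≤ #(heavy G ω T K M univ) + #L := by exact_mod_cast h1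
  linarith

end ScalingTree

/-- There is a universal constant `Ĉ` such that every finite
connected weighted graph on `n ≥ 2` vertices (positive edge weights) contains a
spanning tree `T` with scaling distortion `Ĉ/√ε`: for every `ε ∈ (0,1]` the
number of unordered pairs of distinct vertices with
`d_T(u,v) > (Ĉ/√ε)·d_G(u,v)` is at most `ε·n(n−1)/2` (equivalently, counting
ordered pairs, at most `ε·n(n−1)`). -/
theorem spanning_tree_scaling_distortion :
    ∃ Chat : ℝ, ∀ (V : Type) [Fintype V] (G : SimpleGraph V),
      G.Connected → 2 ≤ Fintype.card V →
      ∀ ω : Sym2 V → ℝ, (∀ e ∈ G.edgeSet, 0 < ω e) →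
      ∃ T : SimpleGraph V, T ≤ G ∧ T.IsTree ∧
        ∀ ε ∈ Set.Ioc (0 : ℝ) 1,
          (Set.ncard {p : V × V | p.1 ≠ p.2 ∧
              (Chat / Real.sqrt ε) * spDist G ω p.1 p.2 < spDist T ω p.1 p.2} : ℝ)
            ≤ ε * (Fintype.card V : ℝ) * ((Fintype.card V : ℝ) - 1) := by
  refine ⟨32768, fun V _ G hG hn ω hω => ?_⟩
  obtain ⟨T, hTG, hT, hcount⟩ := ScalingTree.exists_tree hG hω
  refine ⟨T, hTG, hT, fun ε hε => ?_⟩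
  have hε0 : 0 < √ε := Real.sqrt_pos.2 hε.1
  have hε1 : √ε ≤ 1 := Real.sqrt_le_iff.2 ⟨zero_le_one, by simpa using hε.2⟩
  have hsq : √ε ^ 2 = ε := Real.sq_sqrt hε.1.le
  have hn' : (2 : ℝ) ≤ Fintype.card V := by exact_mod_cast hn
  -- The scale `√ε / 2` makes the total `2 η² n²` equal to `ε n² / 2 ≤ ε n (n - 1)`.
  have hheavy := hcount (√ε / 2) (by linarith) (by linarith)
  have hK : (16384 : ℝ) / (√ε / 2) = 32768 / √ε := by field_simp; norm_num
  rw [hK] at hheavy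
  have hbad := ScalingTree.card_bad_le G ω T (K := 32768 / √ε)
    (M := (√ε / 2) ^ 2 * Fintype.card V) (by positivity)
    {p : V × V | p.1 ≠ p.2 ∧ (32768 / √ε) * spDist G ω p.1 p.2 < spDist T ω p.1 p.2} (by
      intro p hp
      exact ScalingTree.mem_bad_univ (by positivity) hG
        (fun e he => (hω e (SimpleGraph.edgeSet_mono hTG he)).le) hp.2)
  rw [div_pow, hsq] at hheavy hbad
  refine hbad.trans ?_
  nlinarith [hε.1, mul_nonneg hε.1.le (mul_nonneg (by linarith : (0 : ℝ) ≤ Fintype.card V)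
    (by linarith : (0 : ℝ) ≤ (Fintype.card V : ℝ) - 2))]
end
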